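/- arXiv:1707.06531 — 2 statements merged into one kernel-verified Lean document; each statement's English description precedes it below -/
import Mathlib

section
/- Let q be an odd prime power and let (n(g))_{g ≥ 1} be a sequence of even positive integers satisfying n(g) ≥ 3·log_q(g) for all large g and n(g)/g^{2/3} → 0 as g → ∞. Then, as g → ∞, the quantity (n(g)·q^{−n(g)/2} / |F_g|) · Σ_{P monic irreducible, deg P = n(g)} Σ_{(f1,f2,f3) ∈ F_g} χ_P(f1·f2) tends to 0, where |F_g| denotes the cardinality of F_g. -/
open Polynomial Classical

noncomputable section

/-- Quadratic character of a field `K`: 1 on nonzero squares, -1 on nonsquares, 0 at 0. -/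
def quadCharFn (K : Type*) [Field K] (a : K) : ℤ :=
  if a = 0 then 0 else if IsSquare a then 1 else -1

/-- Quadratic residue symbol modulo `P`: 1 if `F` is a nonzero square mod `P`,
-1 if a nonsquare, 0 if `P ∣ F`. -/
def chiP {Fq : Type*} [Field Fq] (P F : Fq[X]) : ℤ :=
  if P ∣ F then 0 else if ∃ G, P ∣ (F - G ^ 2) then 1 else -1

/-- The genus function `L(d1,d2,d3)`. -/
def Lg (d1 d2 d3 : ℕ) : ℕ :=
  if Even (d1 + d3) ∧ Even (d2 + d3) then d1 + d2 + d3 else d1 + d2 + d3 + 1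

/-- The parameter set `F̂_g` of triples of square-free pairwise coprime polynomials,
`f3` monic, satisfying the genus condition and avoiding the degenerate degrees. -/
def FhatSet (Fq : Type*) [Field Fq] (g : ℕ) : Set (Fq[X] × Fq[X] × Fq[X]) :=
  {t | Squarefree t.1 ∧ Squarefree t.2.1 ∧ Squarefree t.2.2 ∧
       IsCoprime t.1 t.2.1 ∧ IsCoprime t.1 t.2.2 ∧ IsCoprime t.2.1 t.2.2 ∧
       t.2.2.Monic ∧
       Lg t.1.natDegree t.2.1.natDegree t.2.2.natDegree = g + 3 ∧
       ({t.1.natDegree, t.2.1.natDegree, t.2.2.natDegree} : Multiset ℕ) ≠ {g + 3, 0, 0} ∧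
       ({t.1.natDegree, t.2.1.natDegree, t.2.2.natDegree} : Multiset ℕ) ≠ {g + 2, 0, 0}}

/-- The parameter set `F_g`: triples in `F̂_g` with all three polynomials monic. -/
def FSet (Fq : Type*) [Field Fq] (g : ℕ) : Set (Fq[X] × Fq[X] × Fq[X]) :=
  {t | t ∈ FhatSet Fq g ∧ t.1.Monic ∧ t.2.1.Monic}

end

/-!
Split the family by the degrees `(d₁, d₂, d₃)` and fix a cut-off `K ≍ n + log g`.

If `d₁, d₂ < K`, sum over `P` first: for square-free `f = f₁ f₂` of positive degree the sum of
`χ_P(f)` over the primes of degree `n` is `O(deg f · q^(n/2) / n)`. This is the Weil bound for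
`y² = f(x)`, proved here by Stepanov's method, with the primes of degree `n` counted through the
elements of `𝔽_{q^n}`. The `O(K²)` degree pairs contribute `O(K³ q^g)` after normalization.

If `d₁ ≥ K` (or `d₂ ≥ K`), sum over `f₁` first: sieving for square-freeness and coprimality reduces
to complete sums of `χ_P` over the monic polynomials of a degree at least `n = deg P`, which vanish
by orthogonality, and the sieve tails save a power of `q` that beats all other factors.

Finally `|F_g| ≫ g² q^g`: polynomials that are `1` modulo all small primes are square-free and
coprime with positive proportion, and there are `≫ g²` admissible degree triples. Since
`K³ / g² → 0` exactly when `n = o(g^(2/3))`, the quotient tends to `0`.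
-/

namespace BiquadraticFamily

section HasseDerivatives

open Finset.HasAntidiagonal (antidiagonal mem_antidiagonal)

variable {R : Type*} [CommRing R]

lemma X_sub_C_pow_dvd_of_hasseDeriv_eval_eq_zero {p : R[X]} {x : R} {l : ℕ}
    (hp : ∀ k < l, (hasseDeriv k p).eval x = 0) : (X - C x) ^ l ∣ p := by
  rw [X_sub_C_pow_dvd_iff, X_pow_dvd_iff]
  intro k hk
  rw [← taylor_apply, taylor_coeff, hp k hk]

lemma mul_mem_degreeLT_add {c u : R[X]} {m n : ℕ} (hc : c.natDegree ≤ m)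
    (hu : u ∈ degreeLT R n) : c * u ∈ degreeLT R (m + n) := by
  rw [mem_degreeLT, degree_lt_iff_coeff_zero] at *
  intro k hk
  rw [coeff_mul]
  refine Finset.sum_eq_zero fun ij hij => ?_
  rw [mem_antidiagonal] at hij
  rcases le_or_gt n ij.2 with h | h
  · rw [hu _ h, mul_zero]
  · rw [coeff_eq_zero_of_natDegree_lt (by omega), zero_mul]

lemma hasseDeriv_mem_degreeLT {s : R[X]} {D : ℕ} (hs : s ∈ degreeLT R D) (k : ℕ) :
    hasseDeriv k s ∈ degreeLT R (D - k) := by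
  rw [mem_degreeLT, degree_lt_iff_coeff_zero] at *
  intro i hi
  rw [hasseDeriv_coeff, hs _ (by omega), mul_zero]

lemma exists_pow_mul_hasseDeriv_self (f : R[X]) (k : ℕ) :
    ∃ e : R[X], e.natDegree ≤ k * (f.natDegree - 1) ∧ f ^ k * hasseDeriv k f = f * e := by
  rcases k with _ | k
  · exact ⟨1, by simp, by simp⟩
  refine ⟨f ^ k * hasseDeriv (k + 1) f, ?_, by ring⟩
  rcases lt_or_ge f.natDegree (k + 1) with hlt | hge
  · simp [hasseDeriv_eq_zero_of_lt_natDegree _ _ hlt]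
  calc (f ^ k * hasseDeriv (k + 1) f).natDegree
      ≤ k * f.natDegree + (f.natDegree - (k + 1)) :=
        natDegree_mul_le.trans (add_le_add natDegree_pow_le (natDegree_hasseDeriv_le f _))
    _ = (k + 1) * (f.natDegree - 1) := by
        obtain ⟨d, hd⟩ := Nat.exists_eq_add_of_le hge
        rw [hd, Nat.add_sub_cancel_left, show k + 1 + d - 1 = k + d by omega]
        ring

lemma exists_pow_mul_hasseDeriv_pow (f : R[X]) (M k : ℕ) :
    ∃ c : R[X], c.natDegree ≤ k * (f.natDegree - 1) ∧
      f ^ k * hasseDeriv k (f ^ M) = f ^ M * c := by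
  induction M generalizing k with
  | zero =>
    rcases Nat.eq_zero_or_pos k with rfl | hk
    · exact ⟨1, by simp, by simp⟩
    · refine ⟨0, by simp, ?_⟩
      rw [pow_zero, ← C_1, hasseDeriv_C _ _ hk, mul_zero, mul_zero]
  | succ M ih =>
    choose c hc_deg hc using ih
    choose e he_deg he using exists_pow_mul_hasseDeriv_self f
    refine ⟨∑ ij ∈ antidiagonal k, c ij.1 * e ij.2, ?_, ?_⟩
    · refine natDegree_sum_le_of_forall_le _ _ fun ij hij => natDegree_mul_le.trans ?_
      rw [← mem_antidiagonal.1 hij, add_mul]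
      exact add_le_add (hc_deg _) (he_deg _)
    · rw [pow_succ f M, hasseDeriv_mul, Finset.mul_sum, Finset.mul_sum]
      refine Finset.sum_congr rfl fun ij hij => ?_
      rw [← mem_antidiagonal.1 hij, pow_add]
      linear_combination (f ^ ij.2 * hasseDeriv ij.2 f) * hc ij.1 + f ^ M * c ij.1 * he ij.2

-- Up to powers of `f`, Hasse derivatives of `f ^ M * s` depend linearly on `s`, and the degree
-- grows by less than `deg f` with each derivative, independently of `M`.
lemma exists_linearMap_pow_mul_hasseDeriv_pow_mul {f : R[X]} (hf : 1 ≤ f.natDegree) (M k : ℕ) :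
    ∃ S : R[X] →ₗ[R] R[X],
      (∀ D, ∀ s ∈ degreeLT R D, S s ∈ degreeLT R (D + k * (f.natDegree - 1))) ∧
      ∀ s, f ^ k * hasseDeriv k (f ^ M * s) = f ^ M * S s := by
  choose c hc_deg hc using exists_pow_mul_hasseDeriv_pow f M
  refine ⟨∑ ij ∈ antidiagonal k,
    LinearMap.mulLeft R (c ij.1 * f ^ ij.2) ∘ₗ hasseDeriv ij.2, fun D s hs => ?_, fun s => ?_⟩
  · rw [LinearMap.sum_apply]
    refine Submodule.sum_mem _ fun ij hij => ?_
    rw [LinearMap.comp_apply, LinearMap.mulLeft_apply]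
    have hderiv := hasseDeriv_mem_degreeLT hs ij.2
    rcases le_or_gt D ij.2 with hle | hlt
    · rw [Nat.sub_eq_zero_of_le hle, mem_degreeLT, Nat.cast_zero, Nat.WithBot.lt_zero_iff,
        degree_eq_bot] at hderiv
      rw [hderiv, mul_zero]
      exact Submodule.zero_mem _
    have hcoef : (c ij.1 * f ^ ij.2).natDegree ≤ ij.1 * (f.natDegree - 1) + ij.2 * f.natDegree :=
      natDegree_mul_le.trans (add_le_add (hc_deg _) natDegree_pow_le)
    refine degreeLT_mono ?_ (mul_mem_degreeLT_add hcoef hderiv)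
    obtain ⟨d, hd⟩ := Nat.exists_eq_add_of_le' hf
    rw [← mem_antidiagonal.1 hij, hd, Nat.add_sub_cancel, mul_add, add_mul]
    omega
  · rw [hasseDeriv_mul, LinearMap.sum_apply, Finset.mul_sum, Finset.mul_sum]
    refine Finset.sum_congr rfl fun ij hij => ?_
    rw [LinearMap.comp_apply, LinearMap.mulLeft_apply, ← mem_antidiagonal.1 hij, pow_add]
    linear_combination (f ^ ij.2 * hasseDeriv ij.2 s) * hc ij.1

end HasseDerivatives

section AuxiliaryPolynomial

variable {K : Type*} [Field K]

lemma finrank_degreeLT (D : ℕ) : Module.finrank K (degreeLT K D) = D := by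
  rw [(degreeLTEquiv K D).finrank_eq, Module.finrank_fin_fun]

lemma exists_ne_zero_forall_apply_eq_zero {ι V : Type*} [Fintype ι] [AddCommGroup V] [Module K V]
    (Φ : ι → V →ₗ[K] K[X]) {N : ℕ} (hΦ : ∀ i v, Φ i v ∈ degreeLT K N)
    (hV : Fintype.card ι * N < Module.finrank K V) : ∃ v ≠ 0, ∀ i, Φ i v = 0 := by
  have : Module.Finite K V := Module.finite_of_finrank_pos (by omega)
  let Ψ : V →ₗ[K] (ι → degreeLT K N) := LinearMap.pi fun i => (Φ i).codRestrict _ (hΦ i)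
  have hker : LinearMap.ker Ψ ≠ ⊥ := by
    apply LinearMap.ker_ne_bot_of_finrank_lt
    simpa [Module.finrank_pi_fintype, finrank_degreeLT] using hV
  obtain ⟨v, hv, hv0⟩ := (Submodule.ne_bot_iff _).1 hker
  exact ⟨v, hv0, fun i => congrArg Subtype.val (congrFun hv i)⟩

lemma exists_coeffs_sum_mul_X_pow_eq_zero {A B : ℕ → K[X] →ₗ[K] K[X]} {D E J l : ℕ} (a : K)
    (hA : ∀ k < l, ∀ s ∈ degreeLT K D, A k s ∈ degreeLT K E)
    (hB : ∀ k < l, ∀ s ∈ degreeLT K D, B k s ∈ degreeLT K E)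
    (hlt : l * (J + E) < 2 * J * D) :
    ∃ v : Fin J → degreeLT K D × degreeLT K D, v ≠ 0 ∧
      ∀ k < l, ∑ j : Fin J, X ^ (j : ℕ) * (A k (v j).1 + a • B k (v j).2) = 0 := by
  let Φ : Fin l → (Fin J → degreeLT K D × degreeLT K D) →ₗ[K] K[X] := fun k => ∑ j : Fin J,
    LinearMap.mulLeft K (X ^ (j : ℕ)) ∘ₗ
      ((A k ∘ₗ (degreeLT K D).subtype).coprod (a • B k ∘ₗ (degreeLT K D).subtype)) ∘ₗ
        LinearMap.proj j
  have hΦ (k v) : Φ k v = ∑ j : Fin J, X ^ (j : ℕ) * (A k (v j).1 + a • B k (v j).2) := by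
    simp [Φ, LinearMap.sum_apply]
  obtain ⟨v, hv0, hv⟩ := exists_ne_zero_forall_apply_eq_zero (N := J + E) Φ
    (fun k v => by
      rw [hΦ]
      exact Submodule.sum_mem _ fun j _ => mul_mem_degreeLT_add
        ((natDegree_X_pow_le _).trans j.2.le)
        (add_mem (hA k k.2 _ (v j).1.2) (Submodule.smul_mem _ _ (hB k k.2 _ (v j).2.2))))
    (by
      simp only [Fintype.card_fin, Module.finrank_pi_fintype, Module.finrank_prod,
        finrank_degreeLT, Finset.sum_const, Finset.card_univ, smul_eq_mul]
      linarith)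
  exact ⟨v, hv0, fun k hk => (hΦ ⟨k, hk⟩ v).symm.trans (hv ⟨k, hk⟩)⟩

lemma exists_coeffs_X_sub_C_pow_dvd {f : K[X]} (hf : 1 ≤ f.natDegree) (a : K) {D J l : ℕ} (M : ℕ)
    (hlt : l * (J + (D + l * (f.natDegree - 1))) < 2 * J * D) :
    ∃ v : Fin J → degreeLT K D × degreeLT K D, v ≠ 0 ∧
      ∀ x, f.eval x ≠ 0 → f.eval x ^ M = a →
        (X - C x) ^ l ∣ ∑ j : Fin J, x ^ (j : ℕ) • ((v j).1 + f ^ M * (v j).2 : K[X]) := by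
  choose A hA_mem hA using exists_linearMap_pow_mul_hasseDeriv_pow_mul hf 0
  choose B hB_mem hB using exists_linearMap_pow_mul_hasseDeriv_pow_mul hf M
  have hmono {k : ℕ} (hk : k < l) : degreeLT K (D + k * (f.natDegree - 1)) ≤
      degreeLT K (D + l * (f.natDegree - 1)) :=
    degreeLT_mono (Nat.add_le_add_left (Nat.mul_le_mul_right _ hk.le) _)
  obtain ⟨v, hv0, hv⟩ := exists_coeffs_sum_mul_X_pow_eq_zero a
    (fun k hk s hs => hmono hk (hA_mem k D s hs)) (fun k hk s hs => hmono hk (hB_mem k D s hs)) hlt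
  refine ⟨v, hv0, fun x hx hxa => X_sub_C_pow_dvd_of_hasseDeriv_eval_eq_zero fun k hk => ?_⟩
  refine (mul_eq_zero.1 ?_).resolve_left (pow_ne_zero k hx)
  have hderiv (j : Fin J) :
      f ^ k * hasseDeriv k ((v j).1 + f ^ M * (v j).2 : K[X]) =
        A k (v j).1 + f ^ M * B k (v j).2 := by
    simpa only [map_add, mul_add, hB, pow_zero, one_mul] using congrArg (· + _) (hA k (v j).1)
  have heval := congrArg (eval x) (hv k hk)
  simp only [eval_finsetSum, eval_mul, eval_pow, eval_X, eval_add, eval_smul, smul_eq_mul,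
    eval_zero] at heval
  simp only [map_sum, map_smul, eval_finsetSum, eval_smul, smul_eq_mul, Finset.mul_sum]
  rw [← heval]
  refine Finset.sum_congr rfl fun j _ => ?_
  have hj := congrArg (eval x) (hderiv j)
  simp only [eval_mul, eval_pow, eval_add, hxa] at hj
  linear_combination x ^ (j : ℕ) * hj

lemma mul_card_le_natDegree_of_X_sub_C_pow_dvd {p : K[X]} (hp : p ≠ 0) {l : ℕ} {T : Finset K}
    (hT : ∀ x ∈ T, (X - C x) ^ l ∣ p) : l * T.card ≤ p.natDegree := by
  have hdvd : ∏ x ∈ T, (X - C x) ^ l ∣ p :=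
    Finset.prod_dvd_of_coprime (fun x _ y _ hxy =>
      (isCoprime_X_sub_C_of_isUnit_sub (sub_ne_zero.2 hxy).isUnit).pow) hT
  have hdeg := natDegree_le_of_dvd hdvd hp
  rw [natDegree_prod _ _ fun x _ => pow_ne_zero _ (X_sub_C_ne_zero x)] at hdeg
  simpa [mul_comm] using hdeg

lemma eq_zero_and_eq_zero_of_sq_mul_eq_sq_mul_C {f a b : K[X]} {c : K} (hf_sf : Squarefree f)
    (hf : 1 ≤ f.natDegree) (hc : c ≠ 0) (h : a ^ 2 * f = b ^ 2 * C c) : a = 0 ∧ b = 0 := by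
  by_cases hb : b = 0
  · subst hb
    exact ⟨by simpa [hf_sf.ne_zero] using h, rfl⟩
  exfalso
  obtain ⟨a', b', ha', hb', hgcd⟩ := extract_gcd a b
  have hgcd_ne : gcd a b ≠ 0 := fun h0 => hb (gcd_eq_zero_iff a b |>.1 h0).2
  have hcoprime : IsCoprime a' b' := (gcd_isUnit_iff _ _).1 hgcd
  have hreduced : a' ^ 2 * f = b' ^ 2 * C c := by
    refine mul_left_cancel₀ (pow_ne_zero 2 hgcd_ne) ?_
    calc gcd a b ^ 2 * (a' ^ 2 * f) = (gcd a b * a') ^ 2 * f := by ring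
      _ = (gcd a b * b') ^ 2 * C c := by rw [← ha', ← hb', h]
      _ = gcd a b ^ 2 * (b' ^ 2 * C c) := by ring
  have hb_unit : IsUnit b' := by
    refine hf_sf b' ?_
    rw [← sq]
    exact hcoprime.symm.pow.dvd_of_dvd_mul_left ⟨_, hreduced⟩
  have hf_unit : IsUnit f := isUnit_of_mul_isUnit_right
    (hreduced ▸ (hb_unit.pow 2).mul (isUnit_C.2 hc.isUnit))
  have := natDegree_eq_zero_of_isUnit hf_unit
  omega

end AuxiliaryPolynomial

section Stepanov

variable {K : Type*} [Field K]

lemma eq_zero_of_X_pow_dvd_pow_mul {f b : K[X]} (hf : Squarefree f) {M : ℕ}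
    (hb : b ∈ degreeLT K (M + 1)) (h : X ^ (2 * M + 1) ∣ f ^ M * b) : b = 0 := by
  refine eq_zero_of_dvd_of_degree_lt (p := X ^ (M + 1)) ?_ ?_
  · have hX : Prime (X : K[X]) := prime_X
    have hfX : emultiplicity X f ≤ 1 :=
      ((squarefree_iff_emultiplicity_le_one f).1 hf X).resolve_right not_isUnit_X
    rw [pow_dvd_iff_le_emultiplicity, emultiplicity_mul hX, emultiplicity_pow hX] at h
    rw [pow_dvd_iff_le_emultiplicity]
    have hsum : ((2 * M + 1 : ℕ) : ℕ∞) ≤ M + emultiplicity X b :=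
      h.trans (add_le_add_left (by simpa using mul_le_mul_right hfX (M : ℕ∞)) _)
    refine (ENat.add_le_add_iff_left (ENat.natCast_ne_top M)).1 (le_trans (le_of_eq ?_) hsum)
    norm_cast
    omega
  · rw [degree_X_pow]
    exact mem_degreeLT.1 hb

/-- Stepanov's auxiliary polynomial `∑ j, X ^ (j N) * (r j + f ^ M * s j)`, whose coefficients
`v j = (r j, s j)` have degree less than `D`. Over a field of odd order `N` one takes `M = N / 2`,
so that `f ^ M` is constant on the squares, and on the nonsquares, among the values of `f`. -/
noncomputable def stepanovPoly (f : K[X]) (M N : ℕ) {D J : ℕ}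
    (v : Fin J → degreeLT K D × degreeLT K D) : K[X] :=
  ∑ j : Fin J, X ^ ((j : ℕ) * N) * ((v j).1 + f ^ M * (v j).2 : K[X])

lemma natDegree_stepanovPoly_le (f : K[X]) (M N : ℕ) {D J : ℕ}
    (v : Fin J → degreeLT K D × degreeLT K D) :
    (stepanovPoly f M N v).natDegree ≤ J * N + (M * f.natDegree + D) := by
  have hcoeff (u : degreeLT K D) : (u : K[X]).natDegree ≤ D :=
    natDegree_le_of_degree_le (mem_degreeLT.1 u.2).le
  refine natDegree_sum_le_of_forall_le _ _ fun j _ => natDegree_mul_le.trans (add_le_add ?_ ?_)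
  · rw [natDegree_X_pow]
    exact Nat.mul_le_mul_right _ j.2.le
  · refine natDegree_add_le_of_degree_le ((hcoeff _).trans (Nat.le_add_left _ _)) ?_
    exact natDegree_mul_le.trans (add_le_add natDegree_pow_le (hcoeff _))

variable [Fintype K]

lemma X_pow_card_dvd_pow_card_sub_C (f : K[X]) :
    X ^ Fintype.card K ∣ f ^ Fintype.card K - C (f.coeff 0) := by
  obtain ⟨g, hg⟩ := X_dvd_sub_C (p := f)
  refine ⟨expand K (Fintype.card K) g, ?_⟩
  rw [← FiniteField.expand_card f, ← expand_C (Fintype.card K), ← map_sub, hg, map_mul, expand_X]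

lemma X_pow_card_sub_C (x : K) : X ^ Fintype.card K - C x = (X - C x) ^ Fintype.card K := by
  rw [← FiniteField.expand_card (X - C x), map_sub, expand_X, expand_C]

variable {f : K[X]}

lemma eq_zero_and_eq_zero_of_X_pow_card_dvd {a b : K[X]} (hK : ringChar K ≠ 2)
    (hf_sf : Squarefree f) (hf : 1 ≤ f.natDegree) {D : ℕ}
    (hD : 2 * D + f.natDegree ≤ Fintype.card K)
    (ha : a ∈ degreeLT K D) (hb : b ∈ degreeLT K D)
    (h : X ^ Fintype.card K ∣ a + f ^ (Fintype.card K / 2) * b) : a = 0 ∧ b = 0 := by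
  set Q := Fintype.card K
  have hQ : 2 * (Q / 2) + 1 = Q := Nat.two_mul_div_two_add_one_of_odd
    (Nat.odd_iff.2 (FiniteField.odd_card_of_char_ne_two hK))
  have hdvd : X ^ Q ∣ a * f * a - b * C (f.coeff 0) * b := by
    have hsplit : a * f * a - b * C (f.coeff 0) * b =
        (a + f ^ (Q / 2) * b) * ((a - f ^ (Q / 2) * b) * f) +
          (f ^ Q - C (f.coeff 0)) * b ^ 2 := by
      rw [← congrArg (f ^ ·) hQ]
      ring
    rw [hsplit]
    exact dvd_add (h.mul_right _) ((X_pow_card_dvd_pow_card_sub_C f).mul_right _)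
  have hmem {g u : K[X]} (hg : g.natDegree ≤ f.natDegree) (hu : u ∈ degreeLT K D) :
      u * g * u ∈ degreeLT K Q :=
    degreeLT_mono (by omega) (mul_mem_degreeLT_add (natDegree_mul_le.trans
      (add_le_add (natDegree_le_of_degree_le (mem_degreeLT.1 hu).le) hg)) hu)
  have hzero : a * f * a - b * C (f.coeff 0) * b = 0 := by
    refine eq_zero_of_dvd_of_degree_lt hdvd ?_
    rw [degree_X_pow]
    exact mem_degreeLT.1 (sub_mem (hmem le_rfl ha) (hmem (by simp) hb))
  by_cases hf0 : f.coeff 0 = 0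
  · obtain rfl : a = 0 := by simpa [hf0, hf_sf.ne_zero] using hzero
    refine ⟨rfl, eq_zero_of_X_pow_dvd_pow_mul hf_sf (M := Q / 2) (degreeLT_mono (by omega) hb) ?_⟩
    rwa [hQ, ← zero_add (f ^ (Q / 2) * b)]
  · exact eq_zero_and_eq_zero_of_sq_mul_eq_sq_mul_C hf_sf hf hf0 (by linear_combination hzero)

lemma stepanovPoly_ne_zero (hK : ringChar K ≠ 2) (hf_sf : Squarefree f) (hf : 1 ≤ f.natDegree)
    {D J : ℕ} (hD : 2 * D + f.natDegree ≤ Fintype.card K)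
    {v : Fin J → degreeLT K D × degreeLT K D} (hv : v ≠ 0) :
    stepanovPoly f (Fintype.card K / 2) (Fintype.card K) v ≠ 0 := by
  set Q := Fintype.card K
  contrapose! hv
  ext1 i
  induction i using WellFoundedLT.induction with
  | ind i ih =>
  suffices hdvd : X ^ ((i + 1 : ℕ) * Q) ∣
      X ^ ((i : ℕ) * Q) * ((v i).1 + f ^ (Q / 2) * (v i).2 : K[X]) by
    rw [add_one_mul, pow_add, mul_dvd_mul_iff_left (pow_ne_zero _ X_ne_zero)] at hdvd
    have hvi := eq_zero_and_eq_zero_of_X_pow_card_dvd hK hf_sf hf hD (v i).1.2 (v i).2.2 hdvd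
    exact Prod.ext (Subtype.ext hvi.1) (Subtype.ext hvi.2)
  rw [stepanovPoly, ← Finset.add_sum_erase _ _ (Finset.mem_univ i), add_eq_zero_iff_eq_neg] at hv
  rw [hv, dvd_neg]
  refine Finset.dvd_sum fun j hj => ?_
  rcases lt_or_gt_of_ne (Finset.ne_of_mem_erase hj) with hlt | hgt
  · simp [ih j hlt]
  · exact (pow_dvd_pow _ (Nat.mul_le_mul_right Q hgt)).mul_right _

-- Modulo `(X - x) ^ Q = X ^ Q - x`, the powers `X ^ (j Q)` are the constants `x ^ j`.
lemma X_sub_C_pow_dvd_stepanovPoly (M : ℕ) {D J l : ℕ} (hl : l ≤ Fintype.card K)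
    {v : Fin J → degreeLT K D × degreeLT K D} {x : K}
    (hv : (X - C x) ^ l ∣ ∑ j : Fin J, x ^ (j : ℕ) • ((v j).1 + f ^ M * (v j).2 : K[X])) :
    (X - C x) ^ l ∣ stepanovPoly f M (Fintype.card K) v := by
  rw [← dvd_sub_left hv, stepanovPoly, ← Finset.sum_sub_distrib]
  refine Finset.dvd_sum fun j _ => ?_
  rw [smul_eq_C_mul, ← sub_mul, C_pow, mul_comm (j : ℕ), pow_mul]
  refine Dvd.dvd.mul_right ((pow_dvd_pow _ hl).trans ?_) _
  rw [← X_pow_card_sub_C]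
  exact sub_dvd_pow_sub_pow _ _ _

/-- The points where the nonzero value of `f` has `(|K| / 2)`-th power `a`: for `a = 1` its values
there are squares, for `a = -1` nonsquares. -/
noncomputable def halfPowerPoints (f : K[X]) (a : K) : Finset K :=
  {x | f.eval x ≠ 0 ∧ f.eval x ^ (Fintype.card K / 2) = a}

lemma mul_card_halfPowerPoints_le (hK : ringChar K ≠ 2) (hf_sf : Squarefree f)
    (hf : 1 ≤ f.natDegree) (a : K) {D J l : ℕ} (hD : 2 * D + f.natDegree ≤ Fintype.card K)
    (hl : l ≤ Fintype.card K) (hlt : l * (J + (D + l * (f.natDegree - 1))) < 2 * J * D) :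
    l * (halfPowerPoints f a).card ≤
      J * Fintype.card K + (Fintype.card K / 2 * f.natDegree + D) := by
  obtain ⟨v, hv0, hv⟩ := exists_coeffs_X_sub_C_pow_dvd hf a (Fintype.card K / 2) hlt
  refine (mul_card_le_natDegree_of_X_sub_C_pow_dvd
    (stepanovPoly_ne_zero hK hf_sf hf hD hv0) fun x hx => ?_).trans
    (natDegree_stepanovPoly_le _ _ _ v)
  obtain ⟨hx0, hxa⟩ := (Finset.mem_filter.1 hx).2
  exact X_sub_C_pow_dvd_stepanovPoly _ hl (hv x hx0 hxa)

-- With multiplicity `l ≈ √Q` the optimal choice is `D ≈ Q / 2` and `J ≈ l / 2 + 2 deg f`.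
lemma sqrt_mul_card_halfPowerPoints_le (hK : ringChar K ≠ 2) (hf_sf : Squarefree f)
    (hf : 1 ≤ f.natDegree) (a : K) (hbig : (4 * f.natDegree + 10) ^ 2 ≤ Fintype.card K) :
    2 * (Nat.sqrt (Fintype.card K) * (halfPowerPoints f a).card) ≤
      (Nat.sqrt (Fintype.card K) + 5 * f.natDegree + 3) * Fintype.card K := by
  set Q := Fintype.card K
  set m := f.natDegree
  set l := Nat.sqrt Q
  have hlQ : l * l ≤ Q := Nat.sqrt_le Q
  have hml : 4 * m + 10 ≤ l := Nat.le_sqrt'.2 hbig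
  have hl_le : l ≤ Q := Nat.sqrt_le_self Q
  obtain ⟨D, hD⟩ : ∃ D, D = (Q - m) / 2 := ⟨_, rfl⟩
  obtain ⟨J, hJ⟩ : ∃ J, J = (l + 4 * m + 2) / 2 := ⟨_, rfl⟩
  have hlt : l * (J + (D + l * (m - 1))) < 2 * J * D := by
    obtain ⟨u, hu⟩ := Nat.exists_eq_add_of_le' hf
    have hcoeff : (l + 4 * m + 1) * D ≤ 2 * J * D := Nat.mul_le_mul_right _ (by omega)
    have hlJ : l * J ≤ l * l := Nat.mul_le_mul_left _ (by omega)
    have hllm : l * l * m ≤ 4 * D * m := Nat.mul_le_mul_right _ (by omega)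
    rw [hu] at hcoeff hllm ⊢
    rw [Nat.add_sub_cancel]
    have : 0 < D := by omega
    nlinarith
  have hcount := mul_card_halfPowerPoints_le hK hf_sf hf a (D := D) (by omega) hl_le hlt
  have hJQ : 2 * J * Q ≤ (l + 4 * m + 2) * Q := Nat.mul_le_mul_right _ (by omega)
  have hmQ : 2 * (Q / 2) * m ≤ Q * m := Nat.mul_le_mul_right _ (by omega)
  have h2D : 2 * D ≤ Q := by omega
  nlinarith

lemma card_halfPowerPoints_le (hK : ringChar K ≠ 2) (hf_sf : Squarefree f)
    (hf : 1 ≤ f.natDegree) (a : K) (hbig : (4 * f.natDegree + 10) ^ 2 ≤ Fintype.card K) :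
    ((halfPowerPoints f a).card : ℝ) ≤
      Fintype.card K / 2 + 8 * f.natDegree * √(Fintype.card K) := by
  have hcount : (2 * (Nat.sqrt (Fintype.card K) * (halfPowerPoints f a).card) : ℝ) ≤
      (Nat.sqrt (Fintype.card K) + 5 * f.natDegree + 3) * Fintype.card K := by
    exact_mod_cast sqrt_mul_card_halfPowerPoints_le hK hf_sf hf a hbig
  have hl : (10 : ℝ) ≤ Nat.sqrt (Fintype.card K) := by
    exact_mod_cast (Nat.le_add_left _ _).trans (Nat.le_sqrt'.2 hbig)
  have hm : (1 : ℝ) ≤ f.natDegree := by exact_mod_cast hf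
  have hsqrt : √(Fintype.card K : ℝ) ≤ 2 * Nat.sqrt (Fintype.card K) := by
    linarith [Real.real_sqrt_le_nat_sqrt_succ (a := Fintype.card K)]
  have hmul : √(Fintype.card K : ℝ) * √(Fintype.card K) = Fintype.card K :=
    Real.mul_self_sqrt (Nat.cast_nonneg _)
  set w := √(Fintype.card K : ℝ)
  set l : ℝ := (Nat.sqrt (Fintype.card K) : ℝ)
  have hw : 0 ≤ w := Real.sqrt_nonneg _
  have hQ : (Fintype.card K : ℝ) ≤ 2 * l * w := by
    rw [← hmul]
    exact mul_le_mul_of_nonneg_right hsqrt hw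
  have herror : (5 * f.natDegree + 3) * (Fintype.card K : ℝ) ≤ 8 * f.natDegree * (2 * l * w) :=
    mul_le_mul (by linarith) hQ (Nat.cast_nonneg _) (by positivity)
  refine le_of_mul_le_mul_left ?_ (by linarith : (0 : ℝ) < 2 * l)
  linarith

end Stepanov

section Weil

variable {K : Type*} [Field K] [Fintype K] {f : K[X]}

lemma abs_quadraticChar_le_one (a : K) : |quadraticChar K a| ≤ 1 := by
  by_cases ha : a = 0
  · simp [ha]
  · rcases quadraticChar_dichotomy ha with h | h <;> simp [h]

lemma mem_halfPowerPoints_iff_quadraticChar_eq (hK : ringChar K ≠ 2) (f : K[X]) {ε : ℤ}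
    (hε : ε = 1 ∨ ε = -1) (x : K) :
    x ∈ halfPowerPoints f (ε : K) ↔ quadraticChar K (f.eval x) = ε := by
  have hne : (1 : K) ≠ -1 := (Ring.neg_one_ne_one_of_char_ne_two hK).symm
  by_cases hx : f.eval x = 0
  · rcases hε with rfl | rfl <;> simp [halfPowerPoints, hx]
  rw [quadraticChar_eq_pow_of_char_ne_two hK hx]
  rcases FiniteField.pow_dichotomy hK hx with h | h <;> rcases hε with rfl | rfl <;>
    simp [halfPowerPoints, hx, h, hne, hne.symm]

lemma sum_quadraticChar_eval (hK : ringChar K ≠ 2) (f : K[X]) :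
    ∑ x, quadraticChar K (f.eval x) =
      (halfPowerPoints f 1).card - (halfPowerPoints f (-1)).card := by
  have hpos (x : K) := mem_halfPowerPoints_iff_quadraticChar_eq hK f (Or.inl rfl) x
  have hneg (x : K) := mem_halfPowerPoints_iff_quadraticChar_eq hK f (Or.inr rfl) x
  push_cast at hpos hneg
  rw [← Finset.filter_univ_mem (halfPowerPoints f 1),
    ← Finset.filter_univ_mem (halfPowerPoints f (-1)), Finset.card_filter, Finset.card_filter]
  push_cast
  rw [← Finset.sum_sub_distrib]
  refine Finset.sum_congr rfl fun x _ => ?_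
  simp only [hpos, hneg]
  by_cases hx : f.eval x = 0
  · simp [hx]
  · rcases quadraticChar_dichotomy hx with h | h <;> simp [h]

lemma card_le_card_halfPowerPoints_add_natDegree (hK : ringChar K ≠ 2) (hf : f ≠ 0) :
    Fintype.card K ≤ (halfPowerPoints f 1).card + (halfPowerPoints f (-1)).card +
      f.natDegree := by
  have hcover : (Finset.univ : Finset K) ⊆
      halfPowerPoints f 1 ∪ halfPowerPoints f (-1) ∪ f.roots.toFinset := by
    intro x _
    by_cases hx : f.eval x = 0
    · simp [hf, hx]
    · rcases FiniteField.pow_dichotomy hK hx with h | h <;> simp [halfPowerPoints, hx, h]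
  calc Fintype.card K ≤ _ := Finset.card_le_card hcover
    _ ≤ (halfPowerPoints f 1).card + (halfPowerPoints f (-1)).card +
          f.roots.toFinset.card :=
        (Finset.card_union_le _ _).trans (Nat.add_le_add_right (Finset.card_union_le _ _) _)
    _ ≤ _ := Nat.add_le_add_left ((Multiset.toFinset_card_le _).trans (card_roots' f)) _

lemma abs_sum_quadraticChar_eval_le_of_large (hK : ringChar K ≠ 2) (hf_sf : Squarefree f)
    (hf : 1 ≤ f.natDegree) (hbig : (4 * f.natDegree + 10) ^ 2 ≤ Fintype.card K) :
    |((∑ x, quadraticChar K (f.eval x) : ℤ) : ℝ)| ≤ 17 * f.natDegree * √(Fintype.card K) := by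
  have hsquares := card_halfPowerPoints_le hK hf_sf hf 1 hbig
  have hnonsquares := card_halfPowerPoints_le hK hf_sf hf (-1) hbig
  have htotal : (Fintype.card K : ℝ) ≤ (halfPowerPoints f 1).card +
      (halfPowerPoints f (-1)).card + f.natDegree := by
    exact_mod_cast card_le_card_halfPowerPoints_add_natDegree hK hf_sf.ne_zero
  have hsqrt : 1 ≤ √(Fintype.card K : ℝ) :=
    Real.one_le_sqrt.2 (by exact_mod_cast Fintype.card_pos)
  have hdeg : (f.natDegree : ℝ) ≤ f.natDegree * √(Fintype.card K) :=
    le_mul_of_one_le_right (Nat.cast_nonneg _) hsqrt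
  rw [sum_quadraticChar_eval hK, abs_le]
  push_cast
  constructor <;> linarith

lemma abs_sum_quadraticChar_eval_le (hK : ringChar K ≠ 2) (hf_sf : Squarefree f)
    (hf : 1 ≤ f.natDegree) :
    |((∑ x, quadraticChar K (f.eval x) : ℤ) : ℝ)| ≤ 17 * f.natDegree * √(Fintype.card K) := by
  by_cases hbig : (4 * f.natDegree + 10) ^ 2 ≤ Fintype.card K
  · exact abs_sum_quadraticChar_eval_le_of_large hK hf_sf hf hbig
  have hcard : (Fintype.card K : ℝ) ≤ (14 * f.natDegree) ^ 2 := by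
    have : Fintype.card K ≤ (14 * f.natDegree) ^ 2 :=
      (not_le.1 hbig).le.trans (Nat.pow_le_pow_left (by omega) 2)
    exact_mod_cast this
  have hsqrt : √(Fintype.card K : ℝ) ≤ 14 * f.natDegree := Real.sqrt_le_iff.2 ⟨by positivity, hcard⟩
  have htrivial : |∑ x, quadraticChar K (f.eval x)| ≤ Fintype.card K :=
    (Finset.abs_sum_le_sum_abs _ _).trans
      ((Finset.sum_le_card_nsmul _ _ 1 fun x _ => abs_quadraticChar_le_one _).trans (by simp))
  calc |((∑ x, quadraticChar K (f.eval x) : ℤ) : ℝ)| ≤ Fintype.card K := by exact_mod_cast htrivial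
    _ = √(Fintype.card K) * √(Fintype.card K) := (Real.mul_self_sqrt (Nat.cast_nonneg _)).symm
    _ ≤ 17 * f.natDegree * √(Fintype.card K) :=
        mul_le_mul_of_nonneg_right (hsqrt.trans (by gcongr; norm_num)) (Real.sqrt_nonneg _)

end Weil

section MonicPolynomials

lemma finite_setOf_monic_natDegree_eq {F : Type*} [Field F] [Finite F] (d : ℕ) :
    {p : F[X] | p.Monic ∧ p.natDegree = d}.Finite := by
  have : Finite (degreeLT F d) := Finite.of_equiv _ (degreeLTEquiv F d).symm.toEquiv
  exact Set.finite_coe_iff.1 (Finite.of_equiv _ (monicEquivDegreeLT (R := F) d).symm)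

/-- The finite set of monic polynomials of degree `d`. -/
noncomputable def monicOfDegree (F : Type*) [Field F] [Fintype F] (d : ℕ) : Finset F[X] :=
  (finite_setOf_monic_natDegree_eq d).toFinset

variable {F : Type*} [Field F] [Fintype F]

lemma mem_monicOfDegree {d : ℕ} {p : F[X]} :
    p ∈ monicOfDegree F d ↔ p.Monic ∧ p.natDegree = d := by
  simp [monicOfDegree]

lemma card_monicOfDegree (d : ℕ) : (monicOfDegree F d).card = Fintype.card F ^ d := by
  rw [monicOfDegree, ← Set.ncard_eq_toFinset_card _ (finite_setOf_monic_natDegree_eq d),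
    ← Nat.card_coe_set_eq]
  refine (Nat.card_congr (monicEquivDegreeLT (R := F) d)).trans ?_
  rw [Nat.card_congr (degreeLTEquiv F d).toEquiv]
  simp

lemma add_mem_monicOfDegree {d : ℕ} {f h : F[X]} (hf : f ∈ monicOfDegree F d)
    (hh : h.degree < d) : f + h ∈ monicOfDegree F d := by
  rw [mem_monicOfDegree] at hf ⊢
  have hlt : h.degree < f.degree := by rwa [degree_eq_natDegree hf.1.ne_zero, hf.2]
  exact ⟨hf.1.add_of_left hlt, by rw [natDegree_add_eq_left_of_degree_lt hlt, hf.2]⟩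

lemma sum_monicOfDegree_add {M : Type*} [AddCommMonoid M] (φ : F[X] → M) {d : ℕ} {h : F[X]}
    (hh : h.degree < d) : ∑ f ∈ monicOfDegree F d, φ (f + h) = ∑ f ∈ monicOfDegree F d, φ f :=
  Finset.sum_bij' (fun f _ => f + h) (fun f _ => f - h)
    (fun _ hf => add_mem_monicOfDegree hf hh)
    (fun f hf => sub_eq_add_neg f h ▸ add_mem_monicOfDegree hf (by rwa [degree_neg]))
    (by simp) (by simp) (by simp)

/-- The finite set of monic irreducible polynomials of degree `n`. -/
noncomputable def primesOfDegree (F : Type*) [Field F] [Fintype F] (n : ℕ) : Finset F[X] :=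
  {P ∈ monicOfDegree F n | Irreducible P}

lemma mem_primesOfDegree {n : ℕ} {P : F[X]} :
    P ∈ primesOfDegree F n ↔ (P.Monic ∧ P.natDegree = n) ∧ Irreducible P := by
  rw [primesOfDegree, Finset.mem_filter, mem_monicOfDegree]

lemma card_primesOfDegree_le (n : ℕ) : (primesOfDegree F n).card ≤ Fintype.card F ^ n :=
  (Finset.card_filter_le _ _).trans (card_monicOfDegree n).le

end MonicPolynomials

section ResidueSymbol

lemma abs_chiP_le_one {F : Type*} [Field F] (P f : F[X]) : |chiP P f| ≤ 1 := by
  unfold chiP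
  split_ifs <;> simp

lemma chiP_eq_quadraticChar_aeval {F K : Type*} [Field F] [Field K] [Fintype K] [Algebra F K]
    {P : F[X]} (hP : P.Monic) (hP_irr : Irreducible P) {x : K} (hx : aeval x P = 0)
    (hx_surj : Function.Surjective (aeval (R := F) x)) (f : F[X]) :
    chiP P f = quadraticChar K (aeval x f) := by
  have hdvd (g : F[X]) : P ∣ g ↔ aeval x g = 0 := by
    rw [minpoly.eq_of_irreducible_of_monic hP_irr hx hP, minpoly.dvd_iff]
  have hsquare : (∃ g, P ∣ f - g ^ 2) ↔ IsSquare (aeval x f) := by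
    simp only [hdvd, map_sub, map_pow, sub_eq_zero, isSquare_iff_exists_sq, hx_surj.exists]
  simp only [chiP, quadraticChar_apply, quadraticCharFun, hsquare, hdvd f]

universe u

variable {F : Type u} [Field F] {P : F[X]}

lemma exists_residueField [Finite F] (hP_irr : Irreducible P) :
    ∃ (K : Type u) (_ : Field K) (_ : Fintype K) (_ : Algebra F K) (x : K),
      aeval x P = 0 ∧ Function.Surjective (aeval (R := F) x) ∧
      Module.finrank F K = P.natDegree := by
  have : Fact (Irreducible P) := ⟨hP_irr⟩
  let basis := AdjoinRoot.powerBasis hP_irr.ne_zero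
  have : Module.Finite F (AdjoinRoot P) := basis.finite
  have : Finite (AdjoinRoot P) := Module.finite_of_finite F
  refine ⟨AdjoinRoot P, inferInstance, Fintype.ofFinite _, inferInstance, AdjoinRoot.root P,
    by simp [AdjoinRoot.aeval_eq], fun y => ?_, ?_⟩
  · obtain ⟨g, hg⟩ := AdjoinRoot.mk_surjective y
    exact ⟨g, by rw [AdjoinRoot.aeval_eq, hg]⟩
  · rw [basis.finrank, AdjoinRoot.powerBasis_dim]

lemma chiP_mul [Finite F] (hP : P.Monic) (hP_irr : Irreducible P) (f g : F[X]) :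
    chiP P (f * g) = chiP P f * chiP P g := by
  obtain ⟨K, _, _, _, x, hx, hx_surj, -⟩ := exists_residueField hP_irr
  simp only [chiP_eq_quadraticChar_aeval hP hP_irr hx hx_surj, map_mul]

-- Translation by residues modulo `P` preserves the monic polynomials of degree `d`.
lemma sum_monicOfDegree_chiP_eq_zero [Fintype F] (hF : ringChar F ≠ 2) (hP : P.Monic)
    (hP_irr : Irreducible P) {d : ℕ} (hd : P.natDegree ≤ d) :
    ∑ f ∈ monicOfDegree F d, chiP P f = 0 := by
  obtain ⟨K, _, _, _, x, hx, hx_surj, -⟩ := exists_residueField hP_irr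
  have hK : ringChar K ≠ 2 := Algebra.ringChar_eq F K ▸ hF
  simp only [chiP_eq_quadraticChar_aeval hP hP_irr hx hx_surj]
  have htranslate (y : K) : ∑ f ∈ monicOfDegree F d, quadraticChar K (aeval x f + y) =
      ∑ f ∈ monicOfDegree F d, quadraticChar K (aeval x f) := by
    obtain ⟨g, rfl⟩ := hx_surj y
    have hmod : aeval x (g %ₘ P) = aeval x g := by
      simpa [hx] using congrArg (aeval x) (modByMonic_add_div g P)
    have hdeg : (g %ₘ P).degree < d := (degree_modByMonic_lt g hP).trans_le
      (degree_le_natDegree.trans (by exact_mod_cast hd))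
    simpa only [map_add, hmod] using
      sum_monicOfDegree_add (fun f => quadraticChar K (aeval x f)) hdeg
  have haverage : ∑ y : K, ∑ f ∈ monicOfDegree F d, quadraticChar K (aeval x f + y) = 0 := by
    rw [Finset.sum_comm]
    exact Finset.sum_eq_zero fun f _ =>
      (Equiv.sum_comp (Equiv.addLeft (aeval x f)) _).trans (quadraticChar_sum_zero hK)
  simp only [htranslate, Finset.sum_const, Finset.card_univ] at haverage
  exact (smul_eq_zero.1 haverage).resolve_left Fintype.card_ne_zero

end ResidueSymbol

section FiniteExtensions

variable {F K : Type*} [Field F] [Field K] [Algebra F K] [FiniteDimensional F K]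

lemma surjective_aeval_of_natDegree_minpoly_eq_finrank {x : K}
    (hx : (minpoly F x).natDegree = Module.finrank F K) :
    Function.Surjective (aeval (R := F) x) := by
  have htop := (Field.primitive_element_iff_minpoly_natDegree_eq F x).2 hx
  rw [← AlgHom.range_eq_top, ← Algebra.adjoin_singleton_eq_range_aeval,
    ← IntermediateField.adjoin_simple_toSubalgebra_of_isAlgebraic
      (Algebra.IsAlgebraic.isAlgebraic x), htop, IntermediateField.top_toSubalgebra]

lemma natDegree_minpoly_le_half_finrank {x : K}
    (hx : (minpoly F x).natDegree ≠ Module.finrank F K) :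
    (minpoly F x).natDegree ≤ Module.finrank F K / 2 := by
  obtain ⟨c, hc⟩ := minpoly.degree_dvd (IsIntegral.of_finite F x)
  have hpos : 0 < Module.finrank F K := Module.finrank_pos
  rw [Nat.le_div_iff_mul_le two_pos, hc]
  refine Nat.mul_le_mul_left _ ?_
  rcases c with _ | _ | c
  · omega
  · exact absurd (by rw [hc]; ring) hx
  · omega

end FiniteExtensions

section PrimeSums

variable {F K : Type*} [Field F] [Fintype F] [Field K] [Fintype K] [Algebra F K]

lemma card_filter_minpoly_eq {P : F[X]} (hP : P ∈ primesOfDegree F (Module.finrank F K)) :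
    (Finset.univ.filter fun x : K => minpoly F x = P).card = Module.finrank F K := by
  obtain ⟨⟨hP_monic, hP_deg⟩, hP_irr⟩ := mem_primesOfDegree.1 hP
  obtain ⟨L, _, _, _, y, hy, -, hL⟩ := exists_residueField hP_irr
  obtain ⟨φ⟩ := FiniteField.nonempty_algHom_of_finrank_dvd (F := F) (K := L) (L := K)
    (by rw [hL, hP_deg])
  have hroot : aeval (φ y) P = 0 := by rw [aeval_algHom_apply, hy, map_zero]
  have hsplits : (P.map (algebraMap F K)).Splits := by
    rw [minpoly.eq_of_irreducible_of_monic hP_irr hroot hP_monic]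
    exact Normal.splits inferInstance _
  have hsep : P.Separable := PerfectField.separable_of_irreducible hP_irr
  rw [← hP_deg, ← card_rootSet_eq_natDegree hsep hsplits, ← Set.toFinset_card]
  congr 1
  ext x
  rw [Finset.mem_filter, Set.mem_toFinset, mem_rootSet_of_ne hP_monic.ne_zero]
  refine ⟨fun h => h.2 ▸ minpoly.aeval F x, fun h => ⟨Finset.mem_univ _, ?_⟩⟩
  exact (minpoly.eq_of_irreducible_of_monic hP_irr h hP_monic).symm

lemma card_filter_natDegree_minpoly_eq_le {e : ℕ} (he : 0 < e) :
    (Finset.univ.filter fun x : K => (minpoly F x).natDegree = e).card ≤ Fintype.card F ^ e := by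
  have hcard : 1 < Fintype.card F := Fintype.one_lt_card
  have hne := FiniteField.X_pow_card_pow_sub_X_ne_zero K he.ne' hcard
  have hdeg := FiniteField.X_pow_card_pow_sub_X_natDegree_eq K he.ne' hcard
  calc _ ≤ (X ^ Fintype.card F ^ e - X : K[X]).roots.toFinset.card := by
        refine Finset.card_le_card fun x hx => ?_
        have hirr := minpoly.irreducible (IsIntegral.of_finite F x)
        have hdvd := (hirr.natDegree_dvd_iff_dvd_X_pow_card_pow_sub_X (n := e)).1
          (Finset.mem_filter.1 hx).2.dvd
        have hroot := (minpoly.dvd_iff).1 hdvd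
        rw [Nat.card_eq_fintype_card] at hroot
        rw [Multiset.mem_toFinset, mem_roots hne]
        simpa using hroot
    _ ≤ _ := (Multiset.toFinset_card_le _).trans ((card_roots' _).trans hdeg.le)

variable (F K) in
lemma card_filter_natDegree_minpoly_ne_finrank_le :
    (Finset.univ.filter fun x : K => (minpoly F x).natDegree ≠ Module.finrank F K).card ≤
      2 * Fintype.card F ^ (Module.finrank F K / 2) := by
  set h := Module.finrank F K / 2
  have hcover : (Finset.univ.filter fun x : K => (minpoly F x).natDegree ≠ Module.finrank F K) ⊆
      (Finset.Ioc 0 h).biUnion fun e =>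
        Finset.univ.filter fun x : K => (minpoly F x).natDegree = e := by
    intro x hx
    simp only [Finset.mem_biUnion, Finset.mem_filter_univ, Finset.mem_Ioc, exists_eq_right']
    exact ⟨minpoly.natDegree_pos (IsIntegral.of_finite F x),
      natDegree_minpoly_le_half_finrank (Finset.mem_filter.1 hx).2⟩
  calc _ ≤ _ := Finset.card_le_card hcover
    _ ≤ ∑ e ∈ Finset.Ioc 0 h,
          (Finset.univ.filter fun x : K => (minpoly F x).natDegree = e).card :=
        Finset.card_biUnion_le
    _ ≤ ∑ e ∈ Finset.Ioc 0 h, Fintype.card F ^ e :=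
        Finset.sum_le_sum fun e he => card_filter_natDegree_minpoly_eq_le (Finset.mem_Ioc.1 he).1
    _ ≤ ∑ e ∈ Finset.range (h + 1), Fintype.card F ^ e :=
        Finset.sum_le_sum_of_subset fun e he =>
          Finset.mem_range.2 (Nat.lt_succ_of_le (Finset.mem_Ioc.1 he).2)
    _ = ∑ e ∈ Finset.range h, Fintype.card F ^ e + Fintype.card F ^ h :=
        Finset.sum_range_succ _ _
    _ ≤ 2 * Fintype.card F ^ h := by
        have := Nat.geomSum_lt (n := h) (s := Finset.range h) (Fintype.one_lt_card (α := F))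
          fun k hk => Finset.mem_range.1 hk
        omega

variable (K) in
lemma sum_quadraticChar_aeval_eq_finrank_mul_sum_chiP (f : F[X]) :
    ∑ x : K with (minpoly F x).natDegree = Module.finrank F K, quadraticChar K (aeval x f) =
      Module.finrank F K * ∑ P ∈ primesOfDegree F (Module.finrank F K), chiP P f := by
  rw [← Finset.sum_fiberwise_of_maps_to (t := primesOfDegree F (Module.finrank F K))
    (g := fun x => minpoly F x), Finset.mul_sum]
  · refine Finset.sum_congr rfl fun P hP => ?_
    obtain ⟨⟨hP_monic, hP_deg⟩, hP_irr⟩ := mem_primesOfDegree.1 hP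
    have hfiber : ((Finset.univ.filter fun x : K =>
        (minpoly F x).natDegree = Module.finrank F K).filter fun x => minpoly F x = P) =
        Finset.univ.filter fun x : K => minpoly F x = P := by
      ext x
      simp only [Finset.mem_filter, Finset.mem_univ, true_and, and_iff_right_iff_imp]
      rintro rfl
      exact hP_deg
    rw [hfiber, ← card_filter_minpoly_eq hP, ← nsmul_eq_mul, ← Finset.sum_const]
    refine Finset.sum_congr rfl fun x hx => ?_
    obtain rfl : minpoly F x = P := (Finset.mem_filter.1 hx).2
    exact (chiP_eq_quadraticChar_aeval hP_monic hP_irr (minpoly.aeval F x)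
      (surjective_aeval_of_natDegree_minpoly_eq_finrank hP_deg) f).symm
  · intro x hx
    have hint := IsIntegral.of_finite F x
    exact mem_primesOfDegree.2
      ⟨⟨minpoly.monic hint, (Finset.mem_filter.1 hx).2⟩, minpoly.irreducible hint⟩

lemma abs_sum_quadraticChar_aeval_le {F K : Type*} [Field F] [Finite F] [Field K] [Fintype K]
    [Algebra F K] (hF : ringChar F ≠ 2) {f : F[X]} (hf_sf : Squarefree f) (hf : 1 ≤ f.natDegree) :
    |((∑ x : K, quadraticChar K (aeval x f) : ℤ) : ℝ)| ≤
      17 * f.natDegree * √(Fintype.card K) := by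
  have hsep : f.Separable := PerfectField.separable_iff_squarefree.2 hf_sf
  have hweil := abs_sum_quadraticChar_eval_le (f := f.map (algebraMap F K))
    (Algebra.ringChar_eq F K ▸ hF) hsep.map.squarefree (by rwa [natDegree_map])
  simpa only [natDegree_map, eval_map_algebraMap] using hweil

variable (K) in
lemma abs_sum_quadraticChar_aeval_of_natDegree_minpoly_ne_le (f : F[X]) :
    |((∑ x : K with (minpoly F x).natDegree ≠ Module.finrank F K,
        quadraticChar K (aeval x f) : ℤ) : ℝ)| ≤
      2 * √((Fintype.card F : ℝ) ^ Module.finrank F K) := by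
  set n := Module.finrank F K
  have hterms := (Finset.abs_sum_le_sum_abs _ _).trans (Finset.sum_le_card_nsmul
    (Finset.univ.filter fun x : K => (minpoly F x).natDegree ≠ n)
    (fun x => |quadraticChar K (aeval x f)|) 1 fun x _ => abs_quadraticChar_le_one _)
  rw [nsmul_eq_mul, mul_one] at hterms
  have hpow : (Fintype.card F : ℝ) ^ (n / 2) ≤ √((Fintype.card F : ℝ) ^ n) := by
    refine Real.le_sqrt_of_sq_le ?_
    rw [← pow_mul]
    exact pow_le_pow_right₀ (by exact_mod_cast Fintype.card_pos) (Nat.div_mul_le_self n 2)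
  calc _ ≤ ((Finset.univ.filter fun x : K => (minpoly F x).natDegree ≠ n).card : ℝ) := by
        exact_mod_cast hterms
    _ ≤ 2 * (Fintype.card F : ℝ) ^ (n / 2) := by
        exact_mod_cast card_filter_natDegree_minpoly_ne_finrank_le F K
    _ ≤ 2 * √((Fintype.card F : ℝ) ^ n) := by gcongr

lemma natCast_mul_abs_sum_chiP_le (hF : ringChar F ≠ 2) {f : F[X]} (hf_sf : Squarefree f)
    (hf : 1 ≤ f.natDegree) (n : ℕ) :
    n * |((∑ P ∈ primesOfDegree F n, chiP P f : ℤ) : ℝ)| ≤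
      19 * f.natDegree * √((Fintype.card F : ℝ) ^ n) := by
  rcases (primesOfDegree F n).eq_empty_or_nonempty with hempty | ⟨P, hP⟩
  · simp only [hempty, Finset.sum_empty, Int.cast_zero, abs_zero, mul_zero]
    positivity
  obtain ⟨⟨-, rfl⟩, hP_irr⟩ := mem_primesOfDegree.1 hP
  obtain ⟨K, _, _, _, -, -, -, hK⟩ := exists_residueField hP_irr
  rw [← hK]
  set n := Module.finrank F K
  have hcardK : (Fintype.card K : ℝ) = (Fintype.card F : ℝ) ^ n := by
    exact_mod_cast Module.card_eq_pow_finrank (K := F) (V := K)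
  set w := √((Fintype.card F : ℝ) ^ n) with hw
  have hweil := abs_sum_quadraticChar_aeval_le (K := K) hF hf_sf hf
  rw [hcardK, ← hw] at hweil
  have hsplit : n * ((∑ P ∈ primesOfDegree F n, chiP P f : ℤ) : ℝ) =
      ((∑ x : K, quadraticChar K (aeval x f) : ℤ) : ℝ) -
      ((∑ x : K with (minpoly F x).natDegree ≠ n, quadraticChar K (aeval x f) : ℤ) : ℝ) := by
    rw [← Finset.sum_filter_add_sum_filter_not Finset.univ
      (fun x : K => (minpoly F x).natDegree = n) fun x => quadraticChar K (aeval x f),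
      sum_quadraticChar_aeval_eq_finrank_mul_sum_chiP]
    push_cast
    ring
  have hdeg : (1 : ℝ) ≤ f.natDegree := by exact_mod_cast hf
  calc n * |((∑ P ∈ primesOfDegree F n, chiP P f : ℤ) : ℝ)|
      = |n * ((∑ P ∈ primesOfDegree F n, chiP P f : ℤ) : ℝ)| := by
        rw [abs_mul, Nat.abs_cast]
    _ ≤ 17 * f.natDegree * w + 2 * w := by
        rw [hsplit]
        exact (abs_sub _ _).trans (add_le_add hweil
          (abs_sum_quadraticChar_aeval_of_natDegree_minpoly_ne_le K f))
    _ ≤ 19 * f.natDegree * w := by nlinarith [Real.sqrt_nonneg ((Fintype.card F : ℝ) ^ n)]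

end PrimeSums

section CoprimeProducts

variable {F : Type*} [Field F]

lemma isCoprime_of_monic_irreducible {P Q : F[X]} (hP : P.Monic ∧ Irreducible P)
    (hQ : Q.Monic ∧ Irreducible Q) (hne : P ≠ Q) : IsCoprime P Q :=
  hP.2.coprime_iff_not_dvd.2 fun h =>
    hne (eq_of_monic_of_associated hP.1 hQ.1 (hP.2.associated_of_dvd hQ.2 h))

lemma dvd_prod_monic_irreducible_iff_mem {T : Finset F[X]}
    (hT : ∀ P ∈ T, P.Monic ∧ Irreducible P) {Q : F[X]} (hQ : Q.Monic ∧ Irreducible Q) :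
    Q ∣ ∏ P ∈ T, P ↔ Q ∈ T := by
  refine ⟨fun h => ?_, Finset.dvd_prod_of_mem _⟩
  obtain ⟨P, hP, hQP⟩ := (hQ.2.prime.dvd_finsetProd_iff _).1 h
  have hassoc := hQ.2.associated_of_dvd (hT P hP).2 hQP
  rwa [eq_of_monic_of_associated hQ.1 (hT P hP).1 hassoc]

lemma eq_of_prod_monic_irreducible_eq {T T' : Finset F[X]}
    (hT : ∀ P ∈ T, P.Monic ∧ Irreducible P) (hT' : ∀ P ∈ T', P.Monic ∧ Irreducible P)
    (h : ∏ P ∈ T, P = ∏ P ∈ T', P) : T = T' := by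
  ext Q
  constructor <;> intro hQ
  · rwa [← dvd_prod_monic_irreducible_iff_mem hT' (hT Q hQ), ← h,
      dvd_prod_monic_irreducible_iff_mem hT (hT Q hQ)]
  · rwa [← dvd_prod_monic_irreducible_iff_mem hT (hT' Q hQ), h,
      dvd_prod_monic_irreducible_iff_mem hT' (hT' Q hQ)]

end CoprimeProducts

section Divisors

variable {F : Type*} [Field F] [Fintype F]

/-- The finite set of monic irreducible polynomials of degree at most `d`. -/
noncomputable def primesOfDegreeLE (F : Type*) [Field F] [Fintype F] (d : ℕ) : Finset F[X] :=
  (Finset.range (d + 1)).biUnion (primesOfDegree F)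

lemma mem_primesOfDegreeLE {d : ℕ} {P : F[X]} :
    P ∈ primesOfDegreeLE F d ↔ (P.Monic ∧ Irreducible P) ∧ P.natDegree ≤ d := by
  simp [primesOfDegreeLE, mem_primesOfDegree, and_assoc, and_comm, and_left_comm]

/-- The finite set of monic divisors of `R`, for `R ≠ 0`. -/
noncomputable def monicDivisors (R : F[X]) : Finset F[X] :=
  (Finset.range (R.natDegree + 1)).biUnion fun a => {D ∈ monicOfDegree F a | D ∣ R}

lemma mem_monicDivisors {R D : F[X]} (hR : R ≠ 0) :
    D ∈ monicDivisors R ↔ D.Monic ∧ D ∣ R := by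
  simp only [monicDivisors, Finset.mem_biUnion, Finset.mem_range, Finset.mem_filter,
    mem_monicOfDegree]
  constructor
  · rintro ⟨_, _, ⟨hD, _⟩, hDR⟩
    exact ⟨hD, hDR⟩
  · rintro ⟨hD, hDR⟩
    exact ⟨_, Nat.lt_succ_of_le (natDegree_le_of_dvd hDR hR), ⟨hD, rfl⟩, hDR⟩

lemma filter_dvd_monicOfDegree {E : F[X]} (hE : E.Monic) {d : ℕ} (hd : E.natDegree ≤ d) :
    {f ∈ monicOfDegree F d | E ∣ f} =
      (monicOfDegree F (d - E.natDegree)).image fun c => E * c := by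
  ext f
  simp only [Finset.mem_filter, Finset.mem_image, mem_monicOfDegree]
  constructor
  · rintro ⟨⟨hf, hfd⟩, c, rfl⟩
    have hc : c.Monic := hE.of_mul_monic_left hf
    rw [hE.natDegree_mul hc] at hfd
    exact ⟨c, ⟨hc, by omega⟩, rfl⟩
  · rintro ⟨c, ⟨hc, hcd⟩, rfl⟩
    exact ⟨⟨hE.mul hc, by rw [hE.natDegree_mul hc]; omega⟩, dvd_mul_right _ _⟩

lemma filter_dvd_monicOfDegree_eq_empty {E : F[X]} {d : ℕ} (hd : d < E.natDegree) :
    {f ∈ monicOfDegree F d | E ∣ f} = ∅ := by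
  refine Finset.filter_false_of_mem fun f hf hEf => ?_
  rw [mem_monicOfDegree] at hf
  have := natDegree_le_of_dvd hEf hf.1.ne_zero
  omega

lemma card_filter_dvd_monicOfDegree {E : F[X]} (hE : E.Monic) {d : ℕ} (hd : E.natDegree ≤ d) :
    {f ∈ monicOfDegree F d | E ∣ f}.card = Fintype.card F ^ (d - E.natDegree) := by
  rw [filter_dvd_monicOfDegree hE hd,
    Finset.card_image_of_injective _ (mul_right_injective₀ hE.ne_zero), card_monicOfDegree]

lemma abs_sum_filter_dvd_chiP_le (hF : ringChar F ≠ 2) {P : F[X]} (hP : P.Monic)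
    (hP_irr : Irreducible P) {E : F[X]} (hE : E.Monic) (d : ℕ) :
    |∑ f ∈ monicOfDegree F d with E ∣ f, chiP P f| ≤
      (if E.natDegree ≤ d ∧ d < E.natDegree + P.natDegree
        then Fintype.card F ^ (d - E.natDegree) else 0 : ℕ) := by
  split_ifs with h
  · refine (Finset.abs_sum_le_sum_abs _ _).trans
      ((Finset.sum_le_card_nsmul _ _ 1 fun f _ => abs_chiP_le_one P f).trans ?_)
    simp [card_filter_dvd_monicOfDegree hE h.1]
  rcases lt_or_ge d E.natDegree with hd | hd
  · simp [filter_dvd_monicOfDegree_eq_empty hd]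
  · rw [filter_dvd_monicOfDegree hE hd,
      Finset.sum_image (mul_right_injective₀ hE.ne_zero).injOn]
    simp_rw [chiP_mul hP hP_irr]
    rw [← Finset.mul_sum, sum_monicOfDegree_chiP_eq_zero hF hP hP_irr (by omega)]
    simp

end Divisors

section Sieve

variable {F : Type*} [Field F]

/-- The modulus by which `f` must not be divisible at the prime `Q` in order to be both
square-free and coprime to `R`. -/
noncomputable def sieveModulus (R Q : F[X]) : F[X] := if Q ∣ R then Q else Q ^ 2

lemma monic_sieveModulus {Q : F[X]} (hQ : Q.Monic) (R : F[X]) : (sieveModulus R Q).Monic := by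
  unfold sieveModulus
  split_ifs
  exacts [hQ, hQ.pow 2]

lemma isCoprime_sieveModulus {P Q : F[X]} (h : IsCoprime P Q) (R : F[X]) :
    IsCoprime (sieveModulus R P) (sieveModulus R Q) := by
  unfold sieveModulus
  split_ifs
  exacts [h, h.pow_right, h.pow_left, h.pow]

lemma prod_sieveModulus_dvd_iff {T : Finset F[X]} (hT : ∀ P ∈ T, P.Monic ∧ Irreducible P)
    {R f : F[X]} : ∏ Q ∈ T, sieveModulus R Q ∣ f ↔ ∀ Q ∈ T, sieveModulus R Q ∣ f :=
  ⟨fun h _ hQ => (Finset.dvd_prod_of_mem _ hQ).trans h,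
    Finset.prod_dvd_of_coprime fun P hP Q hQ hne =>
      isCoprime_sieveModulus (isCoprime_of_monic_irreducible (hT P hP) (hT Q hQ) hne) R⟩

lemma prod_sieveModulus (R : F[X]) (T : Finset F[X]) :
    ∏ Q ∈ T, sieveModulus R Q = (∏ Q ∈ T with Q ∣ R, Q) * (∏ Q ∈ T with ¬ Q ∣ R, Q) ^ 2 := by
  rw [← Finset.prod_filter_mul_prod_filter_not T (· ∣ R), ← Finset.prod_pow]
  congr 1 <;> refine Finset.prod_congr rfl fun Q hQ => ?_
  · rw [sieveModulus, if_pos (Finset.mem_filter.1 hQ).2]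
  · rw [sieveModulus, if_neg (Finset.mem_filter.1 hQ).2]

variable [Fintype F]

lemma squarefree_and_isCoprime_iff {R f : F[X]} {d : ℕ} (hf : f ∈ monicOfDegree F d) :
    Squarefree f ∧ IsCoprime f R ↔ ∀ Q ∈ primesOfDegreeLE F d, ¬ sieveModulus R Q ∣ f := by
  obtain ⟨hf_monic, rfl⟩ := mem_monicOfDegree.1 hf
  constructor
  · rintro ⟨hsf, hcop⟩ Q hQ hdvd
    have hQ_unit := (mem_primesOfDegreeLE.1 hQ).1.2.not_isUnit
    unfold sieveModulus at hdvd
    split_ifs at hdvd with hQR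
    · exact hQ_unit (hcop.isUnit_of_dvd' hdvd hQR)
    · exact hQ_unit (hsf Q (by rwa [← sq]))
  intro h
  have hprime (Q : F[X]) (hQ : Irreducible Q) (hQf : Q ∣ f) : ¬ (Q ∣ R ∨ Q ^ 2 ∣ f) := by
    have hassoc : Associated (normalize Q) Q := (associated_normalize Q).symm
    have hdvd : normalize Q ∣ f := hassoc.dvd.trans hQf
    have hnot := h (normalize Q) (mem_primesOfDegreeLE.2 ⟨⟨monic_normalize hQ.ne_zero,
      hassoc.symm.irreducible hQ⟩, natDegree_le_of_dvd hdvd hf_monic.ne_zero⟩)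
    unfold sieveModulus at hnot
    split_ifs at hnot with hQR
    · exact (hnot hdvd).elim
    · rintro (hQR' | hsq)
      exacts [hQR (hassoc.dvd.trans hQR'), hnot (hassoc.pow_pow.dvd.trans hsq)]
  constructor
  · rw [squarefree_iff_irreducible_sq_not_dvd_of_ne_zero hf_monic.ne_zero]
    exact fun Q hQ hsq =>
      hprime Q hQ ((dvd_mul_right Q Q).trans hsq) (Or.inr (by rwa [sq]))
  · exact isCoprime_of_irreducible_dvd (fun h0 => hf_monic.ne_zero h0.1)
      fun Q hQ hQf hQR => hprime Q hQ hQf (Or.inl hQR)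

lemma indicator_squarefree_and_isCoprime {R f : F[X]} {d : ℕ} (hf : f ∈ monicOfDegree F d) :
    (if Squarefree f ∧ IsCoprime f R then 1 else 0 : ℤ) =
      ∑ T ∈ (primesOfDegreeLE F d).powerset,
        (-1) ^ T.card * if ∏ Q ∈ T, sieveModulus R Q ∣ f then 1 else 0 := by
  have hprod : (if Squarefree f ∧ IsCoprime f R then 1 else 0 : ℤ) =
      ∏ Q ∈ primesOfDegreeLE F d, (-(if sieveModulus R Q ∣ f then 1 else 0) + 1) := by
    rw [if_congr (squarefree_and_isCoprime_iff hf) rfl rfl]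
    transitivity ∏ Q ∈ primesOfDegreeLE F d, (if ¬ sieveModulus R Q ∣ f then 1 else 0 : ℤ)
    · rw [Finset.prod_ite_zero, Finset.prod_const_one]
    · exact Finset.prod_congr rfl fun Q _ => by split_ifs <;> simp_all
  rw [hprod, Finset.prod_add]
  refine Finset.sum_congr rfl fun T hT => ?_
  have hT_prime : ∀ P ∈ T, P.Monic ∧ Irreducible P := fun P hP =>
    (mem_primesOfDegreeLE.1 (Finset.mem_powerset.1 hT hP)).1
  rw [Finset.prod_const_one, mul_one, Finset.prod_neg, Finset.prod_ite_zero,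
    if_congr (prod_sieveModulus_dvd_iff hT_prime) rfl rfl, Finset.prod_const_one]

lemma sum_squarefree_isCoprime_eq (R : F[X]) (d : ℕ) (φ : F[X] → ℤ) :
    ∑ f ∈ monicOfDegree F d with Squarefree f ∧ IsCoprime f R, φ f =
      ∑ T ∈ (primesOfDegreeLE F d).powerset, (-1) ^ T.card *
        ∑ f ∈ monicOfDegree F d with ∏ Q ∈ T, sieveModulus R Q ∣ f, φ f := by
  calc ∑ f ∈ monicOfDegree F d with Squarefree f ∧ IsCoprime f R, φ f
      = ∑ f ∈ monicOfDegree F d, (if Squarefree f ∧ IsCoprime f R then 1 else 0 : ℤ) * φ f := by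
        rw [Finset.sum_filter]
        exact Finset.sum_congr rfl fun f _ => by rw [ite_mul, one_mul, zero_mul]
    _ = ∑ f ∈ monicOfDegree F d, ∑ T ∈ (primesOfDegreeLE F d).powerset, (-1) ^ T.card *
          if ∏ Q ∈ T, sieveModulus R Q ∣ f then φ f else 0 := by
        refine Finset.sum_congr rfl fun f hf => ?_
        rw [indicator_squarefree_and_isCoprime hf, Finset.sum_mul]
        exact Finset.sum_congr rfl fun T _ => by rw [mul_assoc, ite_mul, one_mul, zero_mul]
    _ = _ := by
        rw [Finset.sum_comm]
        exact Finset.sum_congr rfl fun T _ => by rw [← Finset.mul_sum, Finset.sum_filter]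

-- `T` is recovered from the factors `D ∣ R` and `A` of its modulus `D * A ^ 2`, and the degree
-- of `A` is determined by that of `D`.
lemma card_filter_natDegree_prod_sieveModulus_le {R : F[X]} (hR : R ≠ 0) (d e : ℕ) :
    {T ∈ (primesOfDegreeLE F d).powerset |
        (∏ Q ∈ T, sieveModulus R Q).natDegree = e}.card ≤
      (monicDivisors R).card * Fintype.card F ^ (e / 2) := by
  have hprime {T : Finset F[X]} (hT : T ∈ {T ∈ (primesOfDegreeLE F d).powerset |
      (∏ Q ∈ T, sieveModulus R Q).natDegree = e}) : ∀ P ∈ T, P.Monic ∧ Irreducible P :=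
    fun P hP => (mem_primesOfDegreeLE.1 (Finset.mem_powerset.1 (Finset.mem_filter.1 hT).1 hP)).1
  have hmonic {T : Finset F[X]} (hT : ∀ P ∈ T, P.Monic ∧ Irreducible P) (p : F[X] → Prop)
      [DecidablePred p] : (∏ Q ∈ T with p Q, Q).Monic :=
    monic_prod_of_monic _ _ fun Q hQ => (hT Q (Finset.mem_filter.1 hQ).1).1
  calc _ ≤ ((monicDivisors R).sigma fun D =>
        monicOfDegree F ((e - D.natDegree) / 2)).card := by
        refine Finset.card_le_card_of_injOn
          (fun T => ⟨∏ Q ∈ T with Q ∣ R, Q, ∏ Q ∈ T with ¬ Q ∣ R, Q⟩) (fun T hT => ?_)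
          (fun T hT T' hT' h => ?_)
        · have hT_prime := hprime hT
          have hdeg := (Finset.mem_filter.1 hT).2
          rw [prod_sieveModulus, (hmonic hT_prime _).natDegree_mul ((hmonic hT_prime _).pow 2),
            (hmonic hT_prime _).natDegree_pow] at hdeg
          refine Finset.mem_coe.2 (Finset.mem_sigma.2 ⟨(mem_monicDivisors hR).2
            ⟨hmonic hT_prime _, Finset.prod_dvd_of_coprime ?_ fun Q hQ =>
              (Finset.mem_filter.1 hQ).2⟩, mem_monicOfDegree.2 ⟨hmonic hT_prime _, ?_⟩⟩)
          · exact fun P hP Q hQ hne => isCoprime_of_monic_irreducible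
              (hT_prime P (Finset.mem_filter.1 hP).1) (hT_prime Q (Finset.mem_filter.1 hQ).1) hne
          · dsimp only
            omega
        · rw [Sigma.mk.injEq, heq_eq_eq] at h
          refine eq_of_prod_monic_irreducible_eq (hprime hT) (hprime hT') ?_
          rw [← Finset.prod_filter_mul_prod_filter_not T (· ∣ R), h.1, h.2,
            Finset.prod_filter_mul_prod_filter_not]
    _ ≤ _ := by
        rw [Finset.card_sigma, ← smul_eq_mul]
        refine Finset.sum_le_card_nsmul _ _ _ fun D _ => ?_
        rw [card_monicOfDegree]
        exact Nat.pow_le_pow_right Fintype.card_pos (by omega)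

theorem abs_sum_squarefree_isCoprime_chiP_le (hF : ringChar F ≠ 2) {P : F[X]} (hP : P.Monic)
    (hP_irr : Irreducible P) {R : F[X]} (hR : R ≠ 0) (d : ℕ) :
    |∑ f ∈ monicOfDegree F d with Squarefree f ∧ IsCoprime f R, chiP P f| ≤
      ((monicDivisors R).card * (d + 1) *
        Fintype.card F ^ (d - (d - P.natDegree) / 2) : ℕ) := by
  set modulusDegree : Finset F[X] → ℕ := fun T => (∏ Q ∈ T, sieveModulus R Q).natDegree
  set weight : ℕ → ℕ := fun e =>
    if e ≤ d ∧ d < e + P.natDegree then Fintype.card F ^ (d - e) else 0 with hweight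
  have hterm (T) (hT : T ∈ (primesOfDegreeLE F d).powerset) : |(-1) ^ T.card *
      ∑ f ∈ monicOfDegree F d with ∏ Q ∈ T, sieveModulus R Q ∣ f, chiP P f| ≤
        (weight (modulusDegree T) : ℤ) := by
    rw [abs_mul, abs_pow, abs_neg, abs_one, one_pow, one_mul]
    exact abs_sum_filter_dvd_chiP_le hF hP hP_irr (monic_prod_of_monic _ _ fun Q hQ =>
      monic_sieveModulus (mem_primesOfDegreeLE.1 (Finset.mem_powerset.1 hT hQ)).1.1 R) d
  rw [sum_squarefree_isCoprime_eq]
  refine ((Finset.abs_sum_le_sum_abs _ _).trans (Finset.sum_le_sum hterm)).trans ?_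
  rw [← Nat.cast_sum, Nat.cast_le]
  calc ∑ T ∈ (primesOfDegreeLE F d).powerset, weight (modulusDegree T)
      ≤ ∑ e ∈ Finset.range (d + 1),
          {T ∈ (primesOfDegreeLE F d).powerset | modulusDegree T = e}.card * weight e := by
        rw [Finset.sum_comp]
        refine Finset.sum_le_sum_of_ne_zero fun e _ he => ?_
        by_contra hed
        rw [Finset.mem_range] at hed
        exact he (by simp only [hweight]; rw [if_neg (by omega), smul_zero])
    _ ≤ ∑ _e ∈ Finset.range (d + 1),
          (monicDivisors R).card * Fintype.card F ^ (d - (d - P.natDegree) / 2) := by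
        refine Finset.sum_le_sum fun e _ => ?_
        simp only [hweight]
        split_ifs with he
        · refine (Nat.mul_le_mul_right _
            (card_filter_natDegree_prod_sieveModulus_le hR d e)).trans ?_
          rw [mul_assoc, ← pow_add]
          exact Nat.mul_le_mul_left _ (Nat.pow_le_pow_right Fintype.card_pos (by omega))
        · exact Nat.zero_le _
    _ = _ := by
        rw [Finset.sum_const, Finset.card_range, smul_eq_mul]
        ring

end Sieve

section DivisorBounds

variable {F : Type*} [Field F] [Fintype F]

lemma sum_card_monicDivisors_le (d : ℕ) :
    ∑ f ∈ monicOfDegree F d, (monicDivisors f).card ≤ (d + 1) * Fintype.card F ^ d := by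
  have hcard (f) (hf : f ∈ monicOfDegree F d) : (monicDivisors f).card ≤
      ∑ a ∈ Finset.range (d + 1), ∑ D ∈ monicOfDegree F a, if D ∣ f then 1 else 0 := by
    rw [monicDivisors, (mem_monicOfDegree.1 hf).2]
    simpa only [Finset.card_filter] using Finset.card_biUnion_le (s := Finset.range (d + 1))
      (t := fun a => {D ∈ monicOfDegree F a | D ∣ f})
  calc ∑ f ∈ monicOfDegree F d, (monicDivisors f).card
      ≤ ∑ a ∈ Finset.range (d + 1), ∑ D ∈ monicOfDegree F a, ∑ f ∈ monicOfDegree F d,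
          if D ∣ f then 1 else 0 := by
        refine (Finset.sum_le_sum hcard).trans_eq ?_
        rw [Finset.sum_comm]
        exact Finset.sum_congr rfl fun a _ => Finset.sum_comm
    _ = ∑ a ∈ Finset.range (d + 1), ∑ _D ∈ monicOfDegree F a, Fintype.card F ^ (d - a) := by
        refine Finset.sum_congr rfl fun a ha => Finset.sum_congr rfl fun D hD => ?_
        obtain ⟨hD_monic, rfl⟩ := mem_monicOfDegree.1 hD
        rw [← Finset.card_filter, card_filter_dvd_monicOfDegree hD_monic
          (Nat.lt_succ_iff.1 (Finset.mem_range.1 ha))]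
    _ = ∑ _a ∈ Finset.range (d + 1), Fintype.card F ^ d := by
        refine Finset.sum_congr rfl fun a ha => ?_
        rw [Finset.sum_const, card_monicOfDegree, smul_eq_mul, ← pow_add,
          Nat.add_sub_cancel' (Nat.lt_succ_iff.1 (Finset.mem_range.1 ha))]
    _ = (d + 1) * Fintype.card F ^ d := by
        rw [Finset.sum_const, Finset.card_range, smul_eq_mul]

lemma card_monicDivisors_mul_le {f g : F[X]} (hf : f ≠ 0) (hg : g ≠ 0) :
    (monicDivisors (f * g)).card ≤ (monicDivisors f).card * (monicDivisors g).card := by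
  rw [← Finset.card_product]
  refine (Finset.card_le_card (t := (monicDivisors f ×ˢ monicDivisors g).image
    fun x => x.1 * x.2) fun D hD => ?_).trans Finset.card_image_le
  obtain ⟨hD, hDfg⟩ := (mem_monicDivisors (mul_ne_zero hf hg)).1 hD
  obtain ⟨a, b, ha, hb, rfl⟩ := exists_dvd_and_dvd_of_dvd_mul hDfg
  refine Finset.mem_image.2 ⟨(normalize a, normalize b), Finset.mem_product.2
    ⟨(mem_monicDivisors hf).2 ⟨monic_normalize (ne_zero_of_dvd_ne_zero hf ha),
      normalize_dvd_iff.2 ha⟩, (mem_monicDivisors hg).2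
      ⟨monic_normalize (ne_zero_of_dvd_ne_zero hg hb), normalize_dvd_iff.2 hb⟩⟩, ?_⟩
  rw [← normalize_mul, hD.normalize_eq_self]

end DivisorBounds

section CoprimeTriples

variable {F : Type*} [Field F] [Fintype F]

/-- The triples of monic, square-free, pairwise coprime polynomials of degrees `d₁`, `d₂`, `d₃`. -/
noncomputable def coprimeTriples (F : Type*) [Field F] [Fintype F] (d₁ d₂ d₃ : ℕ) :
    Finset (F[X] × F[X] × F[X]) :=
  {t ∈ monicOfDegree F d₁ ×ˢ monicOfDegree F d₂ ×ˢ monicOfDegree F d₃ |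
    Squarefree t.1 ∧ Squarefree t.2.1 ∧ Squarefree t.2.2 ∧
      IsCoprime t.1 t.2.1 ∧ IsCoprime t.1 t.2.2 ∧ IsCoprime t.2.1 t.2.2}

lemma mem_coprimeTriples {d₁ d₂ d₃ : ℕ} {t : F[X] × F[X] × F[X]} :
    t ∈ coprimeTriples F d₁ d₂ d₃ ↔
      ((t.1.Monic ∧ t.1.natDegree = d₁) ∧ (t.2.1.Monic ∧ t.2.1.natDegree = d₂) ∧
        t.2.2.Monic ∧ t.2.2.natDegree = d₃) ∧
      Squarefree t.1 ∧ Squarefree t.2.1 ∧ Squarefree t.2.2 ∧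
        IsCoprime t.1 t.2.1 ∧ IsCoprime t.1 t.2.2 ∧ IsCoprime t.2.1 t.2.2 := by
  simp only [coprimeTriples, Finset.mem_filter, Finset.mem_product, mem_monicOfDegree]

lemma card_coprimeTriples_le (d₁ d₂ d₃ : ℕ) :
    (coprimeTriples F d₁ d₂ d₃).card ≤ Fintype.card F ^ (d₁ + d₂ + d₃) := by
  refine (Finset.card_filter_le _ _).trans_eq ?_
  simp only [Finset.card_product, card_monicOfDegree, pow_add, mul_assoc]

lemma sum_coprimeTriples_chiP_comm (P : F[X]) (d₁ d₂ d₃ : ℕ) :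
    ∑ t ∈ coprimeTriples F d₁ d₂ d₃, chiP P (t.1 * t.2.1) =
      ∑ t ∈ coprimeTriples F d₂ d₁ d₃, chiP P (t.1 * t.2.1) := by
  have hswap {a b c : ℕ} (t) (ht : t ∈ coprimeTriples F a b c) :
      (t.2.1, t.1, t.2.2) ∈ coprimeTriples F b a c := by
    rw [mem_coprimeTriples] at ht ⊢
    obtain ⟨⟨h₁, h₂, h₃⟩, hsf₁, hsf₂, hsf₃, h₁₂, h₁₃, h₂₃⟩ := ht
    exact ⟨⟨h₂, h₁, h₃⟩, hsf₂, hsf₁, hsf₃, h₁₂.symm, h₂₃, h₁₃⟩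
  exact Finset.sum_nbij' (fun t => (t.2.1, t.1, t.2.2)) (fun t => (t.2.1, t.1, t.2.2))
    hswap hswap (fun _ _ => rfl) (fun _ _ => rfl) fun t _ => by rw [mul_comm]

lemma sum_coprimeTriples_chiP_eq {P : F[X]} (hP : P.Monic) (hP_irr : Irreducible P)
    (d₁ d₂ d₃ : ℕ) :
    ∑ t ∈ coprimeTriples F d₁ d₂ d₃, chiP P (t.1 * t.2.1) =
      ∑ s ∈ monicOfDegree F d₂ ×ˢ monicOfDegree F d₃ with
          Squarefree s.1 ∧ Squarefree s.2 ∧ IsCoprime s.1 s.2,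
        chiP P s.1 * ∑ f ∈ monicOfDegree F d₁ with
          Squarefree f ∧ IsCoprime f (s.1 * s.2), chiP P f := by
  rw [coprimeTriples, Finset.sum_filter, Finset.sum_product_right, Finset.sum_filter]
  refine Finset.sum_congr rfl fun s _ => ?_
  split_ifs with hs
  · rw [Finset.sum_filter, Finset.mul_sum]
    refine Finset.sum_congr rfl fun f _ => ?_
    rw [mul_ite, mul_zero, chiP_mul hP hP_irr, mul_comm (chiP P s.1)]
    refine if_congr ?_ rfl rfl
    rw [IsCoprime.mul_right_iff]
    tauto
  · exact Finset.sum_eq_zero fun f _ => if_neg (by tauto)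

theorem abs_sum_coprimeTriples_chiP_le (hF : ringChar F ≠ 2) {P : F[X]} (hP : P.Monic)
    (hP_irr : Irreducible P) (d₁ d₂ d₃ : ℕ) :
    |∑ t ∈ coprimeTriples F d₁ d₂ d₃, chiP P (t.1 * t.2.1)| ≤
      ((d₁ + 1) * (d₂ + 1) * (d₃ + 1) *
        Fintype.card F ^ (d₂ + d₃ + (d₁ - (d₁ - P.natDegree) / 2)) : ℕ) := by
  set bound := (d₁ + 1) * Fintype.card F ^ (d₁ - (d₁ - P.natDegree) / 2) with hbound
  have hinner (s : F[X] × F[X]) (hs : s ∈ monicOfDegree F d₂ ×ˢ monicOfDegree F d₃) :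
      |chiP P s.1 * ∑ f ∈ monicOfDegree F d₁ with Squarefree f ∧ IsCoprime f (s.1 * s.2),
        chiP P f| ≤ ((monicDivisors s.1).card * (monicDivisors s.2).card * bound : ℕ) := by
    rw [Finset.mem_product, mem_monicOfDegree, mem_monicOfDegree] at hs
    have hs₁ := hs.1.1.ne_zero
    have hs₂ := hs.2.1.ne_zero
    rw [abs_mul]
    refine (mul_le_of_le_one_left (abs_nonneg _) (abs_chiP_le_one P s.1)).trans
      ((abs_sum_squarefree_isCoprime_chiP_le hF hP hP_irr (mul_ne_zero hs₁ hs₂) d₁).trans ?_)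
    rw [Nat.cast_le, mul_assoc]
    exact Nat.mul_le_mul_right _ (card_monicDivisors_mul_le hs₁ hs₂)
  calc |∑ t ∈ coprimeTriples F d₁ d₂ d₃, chiP P (t.1 * t.2.1)|
      ≤ ∑ s ∈ monicOfDegree F d₂ ×ˢ monicOfDegree F d₃,
          (((monicDivisors s.1).card * (monicDivisors s.2).card * bound : ℕ) : ℤ) := by
        rw [sum_coprimeTriples_chiP_eq hP hP_irr]
        refine (Finset.abs_sum_le_sum_abs _ _).trans
          ((Finset.sum_le_sum fun s hs => hinner s (Finset.mem_filter.1 hs).1).trans ?_)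
        exact Finset.sum_le_sum_of_subset_of_nonneg (Finset.filter_subset _ _)
          fun _ _ _ => Int.natCast_nonneg _
    _ = ((∑ f ∈ monicOfDegree F d₂, (monicDivisors f).card) *
          (∑ f ∈ monicOfDegree F d₃, (monicDivisors f).card) * bound : ℕ) := by
        rw [← Nat.cast_sum, ← Finset.sum_mul, Finset.sum_mul_sum, Finset.sum_product]
    _ ≤ (((d₂ + 1) * Fintype.card F ^ d₂) * ((d₃ + 1) * Fintype.card F ^ d₃) * bound : ℕ) := by
        exact_mod_cast Nat.mul_le_mul_right _
          (Nat.mul_le_mul (sum_card_monicDivisors_le d₂) (sum_card_monicDivisors_le d₃))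
    _ = _ := by
        rw [hbound, pow_add, pow_add]
        congr 1
        ring

end CoprimeTriples

section UnionBounds

lemma sum_range_inv_pow_add_three_le {q : ℝ} (hq : 3 ≤ q) (N : ℕ) :
    ∑ j ∈ Finset.range N, (q ^ (j + 3))⁻¹ ≤ 1 / 18 := by
  have hgeom : ∑ j ∈ Finset.range N, ((3 : ℝ) ^ (j + 3))⁻¹ =
      1 / 18 - 1 / 18 * ((3 : ℝ) ^ N)⁻¹ := by
    induction N with
    | zero => simp
    | succ k ih =>
      rw [Finset.sum_range_succ, ih]
      field_simp
      ring
  have hpos : 0 < ((3 : ℝ) ^ N)⁻¹ := by positivity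
  calc ∑ j ∈ Finset.range N, (q ^ (j + 3))⁻¹ ≤ ∑ j ∈ Finset.range N, ((3 : ℝ) ^ (j + 3))⁻¹ := by
        gcongr
    _ ≤ 1 / 18 := by linarith

lemma pow_le_pow_mul_inv_add_pow {q : ℝ} (hq : 1 ≤ q) {a b d m : ℕ} (h : a + d = m ∨ a ≤ b) :
    q ^ a ≤ q ^ m * (q ^ d)⁻¹ + q ^ b := by
  rcases h with rfl | hab
  · rw [pow_add, mul_inv_cancel_right₀ (by positivity)]
    exact le_add_of_nonneg_right (by positivity)
  · exact (pow_le_pow_right₀ hq hab).trans (le_add_of_nonneg_left (by positivity))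

lemma one_sub_mul_card_le_card_filter {α : Type*} (s₁ s₂ s₃ : Finset α)
    (p : α → Prop) (r : α → α → Prop) {ε : ℝ}
    (hp₁ : ({x ∈ s₁ | ¬ p x}.card : ℝ) ≤ ε * s₁.card)
    (hp₂ : ({x ∈ s₂ | ¬ p x}.card : ℝ) ≤ ε * s₂.card)
    (hp₃ : ({x ∈ s₃ | ¬ p x}.card : ℝ) ≤ ε * s₃.card)
    (hr₁₂ : ({x ∈ s₁ ×ˢ s₂ | ¬ r x.1 x.2}.card : ℝ) ≤ ε * (s₁ ×ˢ s₂).card)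
    (hr₁₃ : ({x ∈ s₁ ×ˢ s₃ | ¬ r x.1 x.2}.card : ℝ) ≤ ε * (s₁ ×ˢ s₃).card)
    (hr₂₃ : ({x ∈ s₂ ×ˢ s₃ | ¬ r x.1 x.2}.card : ℝ) ≤ ε * (s₂ ×ˢ s₃).card) :
    (1 - 6 * ε) * (s₁.card * s₂.card * s₃.card) ≤ {t ∈ s₁ ×ˢ s₂ ×ˢ s₃ |
      p t.1 ∧ p t.2.1 ∧ p t.2.2 ∧ r t.1 t.2.1 ∧ r t.1 t.2.2 ∧ r t.2.1 t.2.2}.card := by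
  let bad : α → ℝ := fun x => if ¬ p x then 1 else 0
  let badPair : α → α → ℝ := fun x y => if ¬ r x y then 1 else 0
  have hindicator : ∀ t ∈ s₁ ×ˢ s₂ ×ˢ s₃, (1 : ℝ) ≤
      (if p t.1 ∧ p t.2.1 ∧ p t.2.2 ∧ r t.1 t.2.1 ∧ r t.1 t.2.2 ∧ r t.2.1 t.2.2 then 1 else 0) +
      (bad t.1 + bad t.2.1 + bad t.2.2 +
        badPair t.1 t.2.1 + badPair t.1 t.2.2 + badPair t.2.1 t.2.2) := by
    intro t _
    simp only [bad, badPair]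
    split_ifs <;> first | (norm_num; done) | tauto
  have hbad (s : Finset α) : ({x ∈ s | ¬ p x}.card : ℝ) = ∑ x ∈ s, bad x :=
    Finset.natCast_card_filter _ _
  have hbadPair (s s' : Finset α) :
      ({x ∈ s ×ˢ s' | ¬ r x.1 x.2}.card : ℝ) = ∑ x ∈ s, ∑ y ∈ s', badPair x y :=
    (Finset.natCast_card_filter _ _).trans (Finset.sum_product' _ _ badPair)
  have hsum := Finset.sum_le_sum hindicator
  rw [Finset.sum_add_distrib, ← Finset.natCast_card_filter] at hsum
  simp only [Finset.sum_add_distrib, Finset.sum_product, Finset.sum_const, Finset.card_product,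
    nsmul_eq_mul, ← Finset.mul_sum, mul_one, Nat.cast_mul] at hsum
  simp only [hbad, hbadPair, Finset.card_product, Nat.cast_mul] at hp₁ hp₂ hp₃ hr₁₂ hr₁₃ hr₂₃
  linarith [mul_le_mul_of_nonneg_right hp₁ (by positivity : (0 : ℝ) ≤ s₂.card * s₃.card),
    mul_le_mul_of_nonneg_right hp₂ (by positivity : (0 : ℝ) ≤ s₁.card * s₃.card),
    mul_le_mul_of_nonneg_right hp₃ (by positivity : (0 : ℝ) ≤ s₁.card * s₂.card),
    mul_le_mul_of_nonneg_right hr₁₂ (by positivity : (0 : ℝ) ≤ s₃.card),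
    mul_le_mul_of_nonneg_right hr₁₃ (by positivity : (0 : ℝ) ≤ s₂.card),
    mul_le_mul_of_nonneg_right hr₂₃ (by positivity : (0 : ℝ) ≤ s₁.card)]

end UnionBounds

section PrimeFactors

variable {F : Type*} [Field F]

lemma exists_monic_irreducible_sq_dvd {f : F[X]} (hf : f ≠ 0) (hsf : ¬ Squarefree f) :
    ∃ Q : F[X], Q.Monic ∧ Irreducible Q ∧ Q ^ 2 ∣ f := by
  rw [squarefree_iff_irreducible_sq_not_dvd_of_ne_zero hf] at hsf
  push Not at hsf
  obtain ⟨Q, hQ, hdvd⟩ := hsf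
  have hassoc := associated_normalize Q
  exact ⟨normalize Q, monic_normalize hQ.ne_zero, hassoc.irreducible hQ,
    hassoc.symm.pow_pow.dvd.trans (by rwa [sq])⟩

lemma exists_monic_irreducible_dvd_of_not_isCoprime {f f' : F[X]} (hf : f ≠ 0)
    (hcop : ¬ IsCoprime f f') : ∃ Q : F[X], Q.Monic ∧ Irreducible Q ∧ Q ∣ f ∧ Q ∣ f' := by
  contrapose! hcop
  refine isCoprime_of_irreducible_dvd (fun h => hf h.1) fun Q hQ hQf hQf' => ?_
  exact hcop (normalize Q) (monic_normalize hQ.ne_zero) ((associated_normalize Q).irreducible hQ)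
    (normalize_dvd_iff.2 hQf) (normalize_dvd_iff.2 hQf')

end PrimeFactors

section ResidueClasses

variable {F : Type*} [Field F] [Fintype F]

lemma card_le_of_pairwise_dvd_sub {W : F[X]} (hW : W.Monic) {e : ℕ} {s : Finset F[X]}
    (hs : s ⊆ monicOfDegree F e) (hcongr : ∀ h ∈ s, ∀ h' ∈ s, W ∣ h - h') :
    s.card ≤ Fintype.card F ^ (e - W.natDegree) := by
  have hdeg (h) (hh : h ∈ s) := mem_monicOfDegree.1 (hs hh)
  have hinj : Set.InjOn (· /ₘ W) (s : Set F[X]) := fun h hh h' hh' hquot => by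
    have hrem : h %ₘ W = h' %ₘ W := by
      rw [← sub_eq_zero, ← sub_modByMonic]
      exact (modByMonic_eq_zero_iff_dvd hW).2 (hcongr h hh h' hh')
    dsimp only at hquot
    rw [← modByMonic_add_div h W, ← modByMonic_add_div h' W, hquot, hrem]
  rcases le_or_gt W.natDegree e with hWe | hWe
  · rw [← card_monicOfDegree]
    refine Finset.card_le_card_of_injOn _ (fun h hh => mem_monicOfDegree.2 ⟨?_, ?_⟩) hinj
    · have hdegree : W.degree ≤ h.degree := by
        rw [degree_eq_natDegree hW.ne_zero, degree_eq_natDegree (hdeg h hh).1.ne_zero,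
          (hdeg h hh).2]
        exact_mod_cast hWe
      exact (leadingCoeff_divByMonic_of_monic hW hdegree).trans (hdeg h hh).1
    · rw [natDegree_divByMonic _ hW, (hdeg h hh).2]
  · rw [Nat.sub_eq_zero_of_le hWe.le, pow_zero, Finset.card_le_one]
    refine fun h hh h' hh' => hinj hh hh' ?_
    have hzero (h) (hh : h ∈ s) : h /ₘ W = 0 :=
      (divByMonic_eq_zero_iff hW).2 (degree_lt_degree ((hdeg h hh).2.trans_lt hWe))
    exact (hzero h hh).trans (hzero h' hh').symm

end ResidueClasses

section LowerBound

variable {F : Type*} [Field F] [Fintype F]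

lemma isCoprime_of_dvd_mul_add_one {R : Type*} [CommRing R] {Q M h : R} (hQ : Q ∣ M * h + 1) :
    IsCoprime Q M := by
  obtain ⟨c, hc⟩ := hQ
  exact ⟨c, -h, by rw [mul_comm c, ← hc]; ring⟩

lemma card_filter_dvd_mul_add_one_le {W : F[X]} (hW : W.Monic) (M : F[X]) (e : ℕ) :
    {h ∈ monicOfDegree F e | W ∣ M * h + 1}.card ≤ Fintype.card F ^ (e - W.natDegree) := by
  refine card_le_of_pairwise_dvd_sub hW (Finset.filter_subset _ _) fun h hh h' hh' => ?_
  have hdvd := (Finset.mem_filter.1 hh).2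
  refine (isCoprime_of_dvd_mul_add_one hdvd).dvd_of_dvd_mul_left ?_
  convert dvd_sub hdvd (Finset.mem_filter.1 hh').2 using 1
  ring

lemma mul_add_one_mem_monicOfDegree {M h : F[X]} (hM : M.Monic) {e : ℕ}
    (hh : h ∈ monicOfDegree F e) (he : 1 ≤ e) :
    M * h + 1 ∈ monicOfDegree F (e + M.natDegree) := by
  rw [mem_monicOfDegree] at hh
  refine add_mem_monicOfDegree (mem_monicOfDegree.2 ⟨hM.mul hh.1, ?_⟩) ?_
  · rw [hM.natDegree_mul hh.1, hh.2, add_comm]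
  · rw [degree_one]
    exact_mod_cast (by omega : 0 < e + M.natDegree)

/-- The product of all monic irreducible polynomials of degree at most two. Polynomials congruent
to `1` modulo it have no small prime factors. -/
noncomputable def smallPrimesProd (F : Type*) [Field F] [Fintype F] : F[X] :=
  ∏ Q ∈ primesOfDegreeLE F 2, Q

lemma monic_smallPrimesProd : (smallPrimesProd F).Monic :=
  monic_prod_of_monic _ _ fun _ hQ => (mem_primesOfDegreeLE.1 hQ).1.1

lemma three_le_natDegree_of_dvd {Q h : F[X]} (hQ : Q.Monic) (hQ_irr : Irreducible Q)
    (hdvd : Q ∣ smallPrimesProd F * h + 1) : 3 ≤ Q.natDegree := by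
  by_contra hlt
  have hQM : Q ∣ smallPrimesProd F :=
    Finset.dvd_prod_of_mem _ (mem_primesOfDegreeLE.2 ⟨⟨hQ, hQ_irr⟩, by omega⟩)
  exact hQ_irr.not_isUnit ((isCoprime_of_dvd_mul_add_one hdvd).isUnit_of_dvd' dvd_rfl hQM)

lemma card_le_of_forall_exists_prime (hq : 3 ≤ Fintype.card F) {ι : Type*} {s : Finset ι}
    {B : F[X] → Finset ι} {N m : ℕ} {c : ℝ} (hc : 0 ≤ c)
    (hs : ∀ x ∈ s, ∃ Q ∈ primesOfDegreeLE F N, 3 ≤ Q.natDegree ∧ x ∈ B Q)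
    (hB : ∀ Q ∈ primesOfDegreeLE F N, 3 ≤ Q.natDegree →
      ((B Q).card : ℝ) * (Fintype.card F : ℝ) ^ Q.natDegree ≤
        (Fintype.card F : ℝ) ^ m * ((Fintype.card F : ℝ) ^ Q.natDegree)⁻¹ + c) :
    (s.card : ℝ) ≤ (Fintype.card F : ℝ) ^ m / 18 + (N + 1) * c := by
  set q : ℝ := (Fintype.card F : ℝ) with hq_def
  have hq3 : 3 ≤ q := by rw [hq_def]; exact_mod_cast hq
  have hsub : s ⊆ (Finset.range (N - 2)).biUnion fun j =>
      (primesOfDegree F (j + 3)).biUnion B := fun x hx => by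
    obtain ⟨Q, hQ, hQ3, hxQ⟩ := hs x hx
    rw [mem_primesOfDegreeLE] at hQ
    refine Finset.mem_biUnion.2 ⟨Q.natDegree - 3, Finset.mem_range.2 (by omega),
      Finset.mem_biUnion.2 ⟨Q, mem_primesOfDegree.2 ⟨⟨hQ.1.1, by omega⟩, hQ.1.2⟩, hxQ⟩⟩
  have hlayer (j) (hj : j ∈ Finset.range (N - 2)) :
      (((primesOfDegree F (j + 3)).biUnion B).card : ℝ) ≤ q ^ m * (q ^ (j + 3))⁻¹ + c := by
    rw [Finset.mem_range] at hj
    calc (((primesOfDegree F (j + 3)).biUnion B).card : ℝ)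
        ≤ ∑ Q ∈ primesOfDegree F (j + 3), ((B Q).card : ℝ) := by
          exact_mod_cast Finset.card_biUnion_le
      _ ≤ ∑ _Q ∈ primesOfDegree F (j + 3), (q ^ m * (q ^ (j + 3))⁻¹ + c) / q ^ (j + 3) := by
          refine Finset.sum_le_sum fun Q hQ => ?_
          obtain ⟨⟨hQ, hdeg⟩, hQ_irr⟩ := mem_primesOfDegree.1 hQ
          rw [le_div_iff₀ (by positivity), ← hdeg]
          exact hB Q (mem_primesOfDegreeLE.2 ⟨⟨hQ, hQ_irr⟩, by omega⟩) (by omega)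
      _ ≤ q ^ (j + 3) * ((q ^ m * (q ^ (j + 3))⁻¹ + c) / q ^ (j + 3)) := by
          rw [Finset.sum_const, nsmul_eq_mul]
          gcongr
          rw [hq_def]
          exact_mod_cast card_primesOfDegree_le (F := F) (j + 3)
      _ = _ := mul_div_cancel₀ _ (by positivity)
  calc (s.card : ℝ) ≤ ∑ j ∈ Finset.range (N - 2), (q ^ m * (q ^ (j + 3))⁻¹ + c) :=
        (Nat.cast_le.2 ((Finset.card_le_card hsub).trans Finset.card_biUnion_le)).trans
          (by push_cast; exact Finset.sum_le_sum hlayer)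
    _ = q ^ m * ∑ j ∈ Finset.range (N - 2), (q ^ (j + 3))⁻¹ + (N - 2 : ℕ) * c := by
        rw [Finset.sum_add_distrib, ← Finset.mul_sum, Finset.sum_const, Finset.card_range,
          nsmul_eq_mul]
    _ ≤ q ^ m * (1 / 18) + (N + 1) * c := by
        gcongr
        · exact sum_range_inv_pow_add_three_le hq3 _
        · exact_mod_cast (by omega : N - 2 ≤ N + 1)
    _ = _ := by ring

lemma card_filter_not_squarefree_le (hq : 3 ≤ Fintype.card F) {e : ℕ} (he : 1 ≤ e) :
    ({h ∈ monicOfDegree F e | ¬ Squarefree (smallPrimesProd F * h + 1)}.card : ℝ) ≤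
      (Fintype.card F : ℝ) ^ e / 18 + (((e + (smallPrimesProd F).natDegree) / 2 : ℕ) + 1) *
        (Fintype.card F : ℝ) ^ ((e + (smallPrimesProd F).natDegree) / 2) := by
  have hq1 : (1 : ℝ) ≤ Fintype.card F := by exact_mod_cast (by omega : 1 ≤ Fintype.card F)
  refine card_le_of_forall_exists_prime hq
    (B := fun Q => {h ∈ monicOfDegree F e | Q ^ 2 ∣ smallPrimesProd F * h + 1})
    (by positivity) (fun h hh => ?_) fun Q hQ _ => ?_
  · obtain ⟨hh, hsf⟩ := Finset.mem_filter.1 hh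
    obtain ⟨hmonic, hdeg⟩ :=
      mem_monicOfDegree.1 (mul_add_one_mem_monicOfDegree monic_smallPrimesProd hh he)
    obtain ⟨Q, hQ, hQ_irr, hdvd⟩ := exists_monic_irreducible_sq_dvd hmonic.ne_zero hsf
    have hQ_deg := natDegree_le_of_dvd hdvd hmonic.ne_zero
    rw [hQ.natDegree_pow, hdeg] at hQ_deg
    exact ⟨Q, mem_primesOfDegreeLE.2 ⟨⟨hQ, hQ_irr⟩, by omega⟩,
      three_le_natDegree_of_dvd hQ hQ_irr ((dvd_pow_self Q two_ne_zero).trans hdvd),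
      Finset.mem_filter.2 ⟨hh, hdvd⟩⟩
  · obtain ⟨⟨hQ, -⟩, hQ_deg⟩ := mem_primesOfDegreeLE.1 hQ
    have hcard := card_filter_dvd_mul_add_one_le (hQ.pow 2) (smallPrimesProd F) e
    rw [hQ.natDegree_pow] at hcard
    calc _ ≤ (Fintype.card F : ℝ) ^ (e - 2 * Q.natDegree) * (Fintype.card F : ℝ) ^ Q.natDegree := by
          gcongr
          exact_mod_cast hcard
      _ ≤ _ := by
          rw [← pow_add]
          exact pow_le_pow_mul_inv_add_pow hq1 (by omega)

lemma card_filter_not_isCoprime_le (hq : 3 ≤ Fintype.card F) {e e' : ℕ} (he : 1 ≤ e)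
    (he' : 1 ≤ e') :
    ({x ∈ monicOfDegree F e ×ˢ monicOfDegree F e' |
        ¬ IsCoprime (smallPrimesProd F * x.1 + 1) (smallPrimesProd F * x.2 + 1)}.card : ℝ) ≤
      (Fintype.card F : ℝ) ^ (e + e') / 18 +
        ((min e e' + (smallPrimesProd F).natDegree : ℕ) + 1) *
          (Fintype.card F : ℝ) ^ (max e e' + (smallPrimesProd F).natDegree) := by
  have hq1 : (1 : ℝ) ≤ Fintype.card F := by exact_mod_cast (by omega : 1 ≤ Fintype.card F)
  refine card_le_of_forall_exists_prime hq
    (B := fun Q => {h ∈ monicOfDegree F e | Q ∣ smallPrimesProd F * h + 1} ×ˢ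
      {h ∈ monicOfDegree F e' | Q ∣ smallPrimesProd F * h + 1})
    (by positivity) (fun x hx => ?_) fun Q hQ _ => ?_
  · obtain ⟨hx, hcop⟩ := Finset.mem_filter.1 hx
    obtain ⟨hx₁, hx₂⟩ := Finset.mem_product.1 hx
    obtain ⟨hmonic, hdeg⟩ :=
      mem_monicOfDegree.1 (mul_add_one_mem_monicOfDegree monic_smallPrimesProd hx₁ he)
    obtain ⟨hmonic', hdeg'⟩ :=
      mem_monicOfDegree.1 (mul_add_one_mem_monicOfDegree monic_smallPrimesProd hx₂ he')
    obtain ⟨Q, hQ, hQ_irr, hdvd, hdvd'⟩ :=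
      exists_monic_irreducible_dvd_of_not_isCoprime hmonic.ne_zero hcop
    have hQ_deg := natDegree_le_of_dvd hdvd hmonic.ne_zero
    have hQ_deg' := natDegree_le_of_dvd hdvd' hmonic'.ne_zero
    exact ⟨Q, mem_primesOfDegreeLE.2 ⟨⟨hQ, hQ_irr⟩, by omega⟩,
      three_le_natDegree_of_dvd hQ hQ_irr hdvd, Finset.mem_product.2
        ⟨Finset.mem_filter.2 ⟨hx₁, hdvd⟩, Finset.mem_filter.2 ⟨hx₂, hdvd'⟩⟩⟩
  · obtain ⟨⟨hQ, -⟩, hQ_deg⟩ := mem_primesOfDegreeLE.1 hQ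
    have hcard := Nat.mul_le_mul (card_filter_dvd_mul_add_one_le hQ (smallPrimesProd F) e)
      (card_filter_dvd_mul_add_one_le hQ (smallPrimesProd F) e')
    rw [← Finset.card_product] at hcard
    calc _ ≤ (Fintype.card F : ℝ) ^ (e - Q.natDegree) * (Fintype.card F : ℝ) ^ (e' - Q.natDegree) *
          (Fintype.card F : ℝ) ^ Q.natDegree := by
          gcongr
          exact_mod_cast hcard
      _ ≤ _ := by
          rw [← pow_add, ← pow_add]
          exact pow_le_pow_mul_inv_add_pow hq1 (by omega)

lemma exists_forall_mul_pow_le_pow {q : ℕ} (hq : 3 ≤ q) (κ : ℕ) :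
    ∃ E : ℕ, 1 ≤ E ∧ ∀ e ≥ E, κ ≤ e ∧ 36 * (e + κ + 1) * q ^ ((e + κ) / 2) ≤ q ^ e := by
  refine ⟨κ + 4 * (400 + 72 * κ) + 4, by omega, fun e he => ⟨by omega, ?_⟩⟩
  set u := (e - κ) / 4
  have hlinear : 36 * (e + κ + 1) ≤ u * u := by
    have hle : e ≤ κ + 4 * u + 3 := by omega
    nlinarith [(by omega : 400 + 72 * κ ≤ u)]
  have hsquare : u * u ≤ q ^ (e - (e + κ) / 2) := by
    calc u * u ≤ 2 ^ u * 2 ^ u := Nat.mul_le_mul Nat.lt_two_pow_self.le Nat.lt_two_pow_self.le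
      _ = 2 ^ (2 * u) := by rw [two_mul, pow_add]
      _ ≤ q ^ (2 * u) := Nat.pow_le_pow_left (by omega) _
      _ ≤ _ := Nat.pow_le_pow_right (by omega) (by omega)
  calc 36 * (e + κ + 1) * q ^ ((e + κ) / 2) ≤ q ^ (e - (e + κ) / 2) * q ^ ((e + κ) / 2) :=
        Nat.mul_le_mul_right _ (hlinear.trans hsquare)
    _ = q ^ e := by rw [← pow_add]; congr 1; omega

variable (F) in
lemma exists_forall_card_filter_le (hq : 3 ≤ Fintype.card F) : ∃ E : ℕ, 1 ≤ E ∧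
    (∀ e ≥ E, ({h ∈ monicOfDegree F e | ¬ Squarefree (smallPrimesProd F * h + 1)}.card : ℝ) ≤
      1 / 12 * (monicOfDegree F e).card) ∧
    ∀ e ≥ E, ∀ e' ≥ E, ({x ∈ monicOfDegree F e ×ˢ monicOfDegree F e' |
        ¬ IsCoprime (smallPrimesProd F * x.1 + 1) (smallPrimesProd F * x.2 + 1)}.card : ℝ) ≤
      1 / 12 * (monicOfDegree F e ×ˢ monicOfDegree F e').card := by
  obtain ⟨E, hE1, hE⟩ := exists_forall_mul_pow_le_pow hq (smallPrimesProd F).natDegree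
  set κ := (smallPrimesProd F).natDegree
  have hq1 : (1 : ℝ) ≤ Fintype.card F := by exact_mod_cast (by omega : 1 ≤ Fintype.card F)
  refine ⟨E, hE1, fun e he => ?_, fun e he e' he' => ?_⟩
  · have hbound := card_filter_not_squarefree_le hq (hE1.trans he)
    have hsmall : 36 * (e + κ + 1) * (Fintype.card F : ℝ) ^ ((e + κ) / 2) ≤
        (Fintype.card F : ℝ) ^ e := by exact_mod_cast (hE e he).2
    have hhalf : (((e + κ) / 2 : ℕ) + 1 : ℝ) * (Fintype.card F : ℝ) ^ ((e + κ) / 2) ≤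
        (e + κ + 1) * (Fintype.card F : ℝ) ^ ((e + κ) / 2) := by
      gcongr
      exact_mod_cast Nat.div_le_self _ _
    rw [card_monicOfDegree, Nat.cast_pow]
    linarith
  · have hbound := card_filter_not_isCoprime_le hq (hE1.trans he) (hE1.trans he')
    obtain ⟨hκ, hmin⟩ := hE _ (le_min he he')
    have hsmall : 36 * ((min e e' + κ : ℕ) + 1) * (Fintype.card F : ℝ) ^ (max e e' + κ) ≤
        (Fintype.card F : ℝ) ^ (e + e') := by
      calc 36 * ((min e e' + κ : ℕ) + 1) * (Fintype.card F : ℝ) ^ (max e e' + κ)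
          = 36 * ((min e e' + κ : ℕ) + 1) * (Fintype.card F : ℝ) ^ κ *
              (Fintype.card F : ℝ) ^ max e e' := by rw [pow_add]; ring
        _ ≤ 36 * ((min e e' + κ : ℕ) + 1) * (Fintype.card F : ℝ) ^ ((min e e' + κ) / 2) *
              (Fintype.card F : ℝ) ^ max e e' := by gcongr; omega
        _ ≤ (Fintype.card F : ℝ) ^ min e e' * (Fintype.card F : ℝ) ^ max e e' := by
            gcongr
            exact_mod_cast hmin
        _ = _ := by rw [← pow_add, min_add_max]
    rw [Finset.card_product, card_monicOfDegree, card_monicOfDegree, ← pow_add, Nat.cast_pow]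
    linarith

variable (F) in
lemma exists_pow_le_two_mul_card_coprimeTriples_add (hq : 3 ≤ Fintype.card F) :
    ∃ E : ℕ, ∀ e₁ ≥ E, ∀ e₂ ≥ E, ∀ e₃ ≥ E, Fintype.card F ^ (e₁ + e₂ + e₃) ≤
      2 * (coprimeTriples F (e₁ + (smallPrimesProd F).natDegree)
        (e₂ + (smallPrimesProd F).natDegree) (e₃ + (smallPrimesProd F).natDegree)).card := by
  obtain ⟨E, hE1, hsf, hcop⟩ := exists_forall_card_filter_le F hq
  refine ⟨E, fun e₁ he₁ e₂ he₂ e₃ he₃ => ?_⟩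
  let f : F[X] → F[X] := fun h => smallPrimesProd F * h + 1
  have hf_inj : Function.Injective f := fun _ _ h =>
    mul_left_cancel₀ monic_smallPrimesProd.ne_zero (add_right_cancel h)
  have hgood := one_sub_mul_card_le_card_filter _ _ _ (fun h => Squarefree (f h))
    (fun h h' => IsCoprime (f h) (f h')) (hsf _ he₁) (hsf _ he₂) (hsf _ he₃)
    (hcop _ he₁ _ he₂) (hcop _ he₁ _ he₃) (hcop _ he₂ _ he₃)
  set good := {t ∈ monicOfDegree F e₁ ×ˢ monicOfDegree F e₂ ×ˢ monicOfDegree F e₃ |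
    Squarefree (f t.1) ∧ Squarefree (f t.2.1) ∧ Squarefree (f t.2.2) ∧
      IsCoprime (f t.1) (f t.2.1) ∧ IsCoprime (f t.1) (f t.2.2) ∧ IsCoprime (f t.2.1) (f t.2.2)}
  have hcard : Fintype.card F ^ (e₁ + e₂ + e₃) ≤ 2 * good.card := by
    simp only [card_monicOfDegree] at hgood
    rw [← Nat.cast_le (α := ℝ), pow_add, pow_add]
    push_cast at hgood ⊢
    linarith
  refine hcard.trans (Nat.mul_le_mul_left 2 (Finset.card_le_card_of_injOn
    (Prod.map f (Prod.map f f)) (fun t ht => ?_)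
    (hf_inj.prodMap (hf_inj.prodMap hf_inj)).injOn))
  obtain ⟨ht, hprops⟩ := Finset.mem_filter.1 ht
  simp only [Finset.mem_product] at ht
  have hmem {h : F[X]} {e : ℕ} (hh : h ∈ monicOfDegree F e) (he : E ≤ e) :=
    mem_monicOfDegree.1 (mul_add_one_mem_monicOfDegree monic_smallPrimesProd hh (hE1.trans he))
  exact mem_coprimeTriples.2 ⟨⟨hmem ht.1 he₁, hmem ht.2.1 he₂, hmem ht.2.2 he₃⟩, hprops⟩

variable (F) in
theorem exists_pow_le_mul_card_coprimeTriples (hq : 3 ≤ Fintype.card F) :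
    ∃ E C : ℕ, ∀ d₁ ≥ E, ∀ d₂ ≥ E, ∀ d₃ ≥ E,
      Fintype.card F ^ (d₁ + d₂ + d₃) ≤ C * (coprimeTriples F d₁ d₂ d₃).card := by
  obtain ⟨E, hE⟩ := exists_pow_le_two_mul_card_coprimeTriples_add F hq
  set κ := (smallPrimesProd F).natDegree
  refine ⟨E + κ, Fintype.card F ^ (3 * κ) * 2, fun d₁ h₁ d₂ h₂ d₃ h₃ => ?_⟩
  have hbound := hE (d₁ - κ) (by omega) (d₂ - κ) (by omega) (d₃ - κ) (by omega)
  rw [Nat.sub_add_cancel (by omega), Nat.sub_add_cancel (by omega),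
    Nat.sub_add_cancel (by omega)] at hbound
  calc Fintype.card F ^ (d₁ + d₂ + d₃)
      = Fintype.card F ^ (3 * κ) * Fintype.card F ^ (d₁ - κ + (d₂ - κ) + (d₃ - κ)) := by
        rw [← pow_add]; congr 1; omega
    _ ≤ Fintype.card F ^ (3 * κ) * (2 * (coprimeTriples F d₁ d₂ d₃).card) :=
        Nat.mul_le_mul_left _ hbound
    _ = _ := (mul_assoc _ _ _).symm

end LowerBound

section AdmissibleDegrees

/-- The degree triples that occur in the family `FSet F g`. The degrees are restricted to
`Finset.range (g + 4)` only to get a `Finset`: the genus condition forces that bound. -/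
noncomputable def admissibleDegrees (g : ℕ) : Finset (ℕ × ℕ × ℕ) :=
  {d ∈ Finset.range (g + 4) ×ˢ Finset.range (g + 4) ×ˢ Finset.range (g + 4) |
    Lg d.1 d.2.1 d.2.2 = g + 3 ∧
      ({d.1, d.2.1, d.2.2} : Multiset ℕ) ≠ {g + 3, 0, 0} ∧
      ({d.1, d.2.1, d.2.2} : Multiset ℕ) ≠ {g + 2, 0, 0}}

lemma Lg_eq_or_eq_add_one (d₁ d₂ d₃ : ℕ) :
    Lg d₁ d₂ d₃ = d₁ + d₂ + d₃ ∨ Lg d₁ d₂ d₃ = d₁ + d₂ + d₃ + 1 := by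
  unfold Lg
  split_ifs
  exacts [Or.inl rfl, Or.inr rfl]

lemma mem_admissibleDegrees {g : ℕ} {d : ℕ × ℕ × ℕ} :
    d ∈ admissibleDegrees g ↔ Lg d.1 d.2.1 d.2.2 = g + 3 ∧
      ({d.1, d.2.1, d.2.2} : Multiset ℕ) ≠ {g + 3, 0, 0} ∧
      ({d.1, d.2.1, d.2.2} : Multiset ℕ) ≠ {g + 2, 0, 0} := by
  simp only [admissibleDegrees, Finset.mem_filter, Finset.mem_product, Finset.mem_range,
    and_iff_right_iff_imp]
  rintro ⟨hLg, -⟩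
  rcases Lg_eq_or_eq_add_one d.1 d.2.1 d.2.2 with h | h <;> omega

lemma sum_eq_of_mem_admissibleDegrees {g : ℕ} {d : ℕ × ℕ × ℕ} (hd : d ∈ admissibleDegrees g) :
    d.1 + d.2.1 + d.2.2 = g + 3 ∨ d.1 + d.2.1 + d.2.2 = g + 2 := by
  have hLg := (mem_admissibleDegrees.1 hd).1
  rcases Lg_eq_or_eq_add_one d.1 d.2.1 d.2.2 with h | h <;> omega

lemma one_le_of_mem_admissibleDegrees {g : ℕ} {d : ℕ × ℕ × ℕ} (hd : d ∈ admissibleDegrees g) :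
    1 ≤ d.1 + d.2.1 := by
  by_contra hlt
  have hsum := sum_eq_of_mem_admissibleDegrees hd
  obtain ⟨-, hne₃, hne₂⟩ := mem_admissibleDegrees.1 hd
  obtain ⟨h₁, h₂⟩ : d.1 = 0 ∧ d.2.1 = 0 := by omega
  have hperm : ({0, 0, d.2.2} : Multiset ℕ) = {d.2.2, 0, 0} :=
    Multiset.coe_eq_coe.2 (List.perm_append_comm (l₁ := [0, 0]) (l₂ := [d.2.2]))
  rw [h₁, h₂, hperm] at hne₃ hne₂
  rcases hsum with h | h
  · exact hne₃ (by rw [(by omega : d.2.2 = g + 3)])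
  · exact hne₂ (by rw [(by omega : d.2.2 = g + 2)])

lemma card_admissibleDegrees_le (g : ℕ) : (admissibleDegrees g).card ≤ (g + 4) ^ 3 := by
  refine (Finset.card_filter_le _ _).trans_eq ?_
  simp only [Finset.card_product, Finset.card_range]
  ring

lemma card_filter_lt_admissibleDegrees_le (g K : ℕ) :
    {d ∈ admissibleDegrees g | d.1 < K ∧ d.2.1 < K}.card ≤ 2 * K ^ 2 := by
  calc {d ∈ admissibleDegrees g | d.1 < K ∧ d.2.1 < K}.card
      ≤ (Finset.range K ×ˢ Finset.range K ×ˢ Finset.range 2).card := by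
        refine Finset.card_le_card_of_injOn
          (fun d => (d.1, d.2.1, g + 3 - (d.1 + d.2.1 + d.2.2))) (fun d hd => ?_) ?_
        · obtain ⟨hd, hlt⟩ := Finset.mem_filter.1 hd
          have hsum := sum_eq_of_mem_admissibleDegrees hd
          simp only [Finset.coe_product, Set.mem_prod, Finset.mem_coe, Finset.mem_range]
          omega
        · intro d hd d' hd' heq
          have hsum := sum_eq_of_mem_admissibleDegrees (Finset.mem_filter.1 hd).1
          have hsum' := sum_eq_of_mem_admissibleDegrees (Finset.mem_filter.1 hd').1
          simp only [Prod.mk.injEq] at heq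
          exact Prod.ext heq.1 (Prod.ext heq.2.1 (by omega))
    _ = 2 * K ^ 2 := by
        simp only [Finset.card_product, Finset.card_range]
        ring

-- An odd `d₁` and an even `d₂` make `Lg d₁ d₂ d₃ = d₁ + d₂ + d₃ + 1` whatever `d₃` is.
lemma mem_admissibleDegrees_of_odd_of_even {g d₁ d₂ d₃ : ℕ} (h₁ : Odd d₁) (h₂ : Even d₂)
    (h₂_pos : 0 < d₂) (h₃_pos : 0 < d₃) (hsum : d₁ + d₂ + d₃ = g + 2) :
    (d₁, d₂, d₃) ∈ admissibleDegrees g := by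
  have hne (N : ℕ) : ({d₁, d₂, d₃} : Multiset ℕ) ≠ {N, 0, 0} := fun h => by
    have hzero : 0 ∈ ({d₁, d₂, d₃} : Multiset ℕ) := h ▸ by simp
    simp only [Multiset.insert_eq_cons, Multiset.mem_cons, Multiset.mem_singleton] at hzero
    have := h₁.pos
    omega
  refine mem_admissibleDegrees.2 ⟨?_, hne _, hne _⟩
  dsimp only [Lg]
  rw [if_neg (by grind), hsum]

end AdmissibleDegrees

section TripleFamily

variable {F : Type*} [Field F] [Fintype F]

/-- The family `FSet F g` as a `Finset`, assembled from the `coprimeTriples` of admissible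
degrees. -/
noncomputable def tripleFamily (F : Type*) [Field F] [Fintype F] (g : ℕ) :
    Finset (F[X] × F[X] × F[X]) :=
  (admissibleDegrees g).biUnion fun d => coprimeTriples F d.1 d.2.1 d.2.2

lemma coe_tripleFamily (g : ℕ) : (tripleFamily F g : Set (F[X] × F[X] × F[X])) = FSet F g := by
  ext t
  simp only [FSet, FhatSet, tripleFamily, Finset.mem_coe, Finset.mem_biUnion, mem_coprimeTriples,
    mem_admissibleDegrees, Set.mem_ofPred_eq]
  constructor
  · rintro ⟨d, hd, ⟨⟨h₁, hd₁⟩, ⟨h₂, hd₂⟩, h₃, hd₃⟩, hsf₁, hsf₂, hsf₃, h₁₂, h₁₃, h₂₃⟩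
    rw [← hd₁, ← hd₂, ← hd₃] at hd
    exact ⟨⟨hsf₁, hsf₂, hsf₃, h₁₂, h₁₃, h₂₃, h₃, hd⟩, h₁, h₂⟩
  · rintro ⟨⟨hsf₁, hsf₂, hsf₃, h₁₂, h₁₃, h₂₃, h₃, hd⟩, h₁, h₂⟩
    exact ⟨(t.1.natDegree, t.2.1.natDegree, t.2.2.natDegree), hd,
      ⟨⟨h₁, rfl⟩, ⟨h₂, rfl⟩, h₃, rfl⟩, hsf₁, hsf₂, hsf₃, h₁₂, h₁₃, h₂₃⟩

lemma pairwiseDisjoint_coprimeTriples (s : Set (ℕ × ℕ × ℕ)) :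
    s.PairwiseDisjoint fun d => coprimeTriples F d.1 d.2.1 d.2.2 := by
  intro d _ d' _ hne
  refine Finset.disjoint_left.2 fun t ht ht' => hne ?_
  obtain ⟨⟨⟨-, h₁⟩, ⟨-, h₂⟩, -, h₃⟩, -⟩ := mem_coprimeTriples.1 ht
  obtain ⟨⟨⟨-, h₁'⟩, ⟨-, h₂'⟩, -, h₃'⟩, -⟩ := mem_coprimeTriples.1 ht'
  exact Prod.ext (h₁.symm.trans h₁') (Prod.ext (h₂.symm.trans h₂') (h₃.symm.trans h₃'))

variable (F) in
theorem exists_sq_mul_pow_le_mul_card_tripleFamily (hq : 3 ≤ Fintype.card F) :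
    ∃ C G : ℕ, ∀ g ≥ G, g ^ 2 * Fintype.card F ^ g ≤ C * (tripleFamily F g).card := by
  obtain ⟨E, C, hE⟩ := exists_pow_le_mul_card_coprimeTriples F hq
  refine ⟨1024 * C, 16 * (E + 1), fun g hg => ?_⟩
  set m := g / 16
  let degrees : ℕ × ℕ → ℕ × ℕ × ℕ := fun x =>
    (2 * (m + x.1) + 1, 2 * (m + x.2), g + 1 - 2 * (m + x.1) - 2 * (m + x.2))
  have hdegrees_inj : Function.Injective degrees := fun x x' h => by
    simp only [degrees, Prod.mk.injEq] at h
    exact Prod.ext (by omega) (by omega)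
  have hdegrees : (Finset.range m ×ˢ Finset.range m).image degrees ⊆ admissibleDegrees g := by
    refine Finset.image_subset_iff.2 fun x hx => ?_
    simp only [Finset.mem_product, Finset.mem_range] at hx
    exact mem_admissibleDegrees_of_odd_of_even (odd_two_mul_add_one _) (even_two_mul _)
      (by omega) (by omega) (by omega)
  have hfamily : m ^ 2 * Fintype.card F ^ (g + 2) ≤ C * (tripleFamily F g).card := by
    calc m ^ 2 * Fintype.card F ^ (g + 2)
        = ∑ _x ∈ Finset.range m ×ˢ Finset.range m, Fintype.card F ^ (g + 2) := by
          rw [Finset.sum_const, Finset.card_product, Finset.card_range, smul_eq_mul, sq]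
      _ ≤ ∑ x ∈ Finset.range m ×ˢ Finset.range m, C *
            (coprimeTriples F (degrees x).1 (degrees x).2.1 (degrees x).2.2).card := by
          refine Finset.sum_le_sum fun x hx => ?_
          simp only [Finset.mem_product, Finset.mem_range] at hx
          refine le_of_eq_of_le ?_ (hE _ ?_ _ ?_ _ ?_)
          on_goal 1 => congr 1
          all_goals
            dsimp only [degrees]
            omega
      _ ≤ C * (tripleFamily F g).card := by
          rw [← Finset.mul_sum, tripleFamily,
            Finset.card_biUnion fun _ hd _ hd' => pairwiseDisjoint_coprimeTriples _ hd hd',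
            ← Finset.sum_image hdegrees_inj.injOn
              (f := fun d => (coprimeTriples F d.1 d.2.1 d.2.2).card)]
          exact Nat.mul_le_mul_left _ (Finset.sum_le_sum_of_subset hdegrees)
  calc g ^ 2 * Fintype.card F ^ g ≤ (32 * m) ^ 2 * Fintype.card F ^ (g + 2) :=
        Nat.mul_le_mul (Nat.pow_le_pow_left (by omega) 2)
          (Nat.pow_le_pow_right (by omega) (by omega))
    _ = 1024 * (m ^ 2 * Fintype.card F ^ (g + 2)) := by ring
    _ ≤ 1024 * (C * (tripleFamily F g).card) := Nat.mul_le_mul_left _ hfamily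
    _ = _ := (mul_assoc _ _ _).symm

end TripleFamily

section CharacterSums

variable {F : Type*} [Field F] [Fintype F]

/-- The contribution of the degree triple `d` to the double character sum: the sum of `χ_P(f₁ f₂)`
over the primes `P` of degree `n` and the `coprimeTriples` of degrees `d`. -/
noncomputable def degreeCharSum (F : Type*) [Field F] [Fintype F] (n : ℕ) (d : ℕ × ℕ × ℕ) : ℤ :=
  ∑ P ∈ primesOfDegree F n, ∑ t ∈ coprimeTriples F d.1 d.2.1 d.2.2, chiP P (t.1 * t.2.1)

lemma sum_tripleFamily_chiP_eq (n g : ℕ) :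
    ∑ P ∈ primesOfDegree F n, ∑ t ∈ tripleFamily F g, chiP P (t.1 * t.2.1) =
      ∑ d ∈ admissibleDegrees g, degreeCharSum F n d := by
  unfold degreeCharSum
  rw [Finset.sum_comm (s := admissibleDegrees g)]
  exact Finset.sum_congr rfl fun P _ => Finset.sum_biUnion (pairwiseDisjoint_coprimeTriples _)

lemma degreeCharSum_comm (n d₁ d₂ d₃ : ℕ) :
    degreeCharSum F n (d₁, d₂, d₃) = degreeCharSum F n (d₂, d₁, d₃) :=
  Finset.sum_congr rfl fun P _ => sum_coprimeTriples_chiP_comm P d₁ d₂ d₃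

lemma natCast_mul_abs_degreeCharSum_le (hF : ringChar F ≠ 2) (n : ℕ) {d : ℕ × ℕ × ℕ}
    (hd : 1 ≤ d.1 + d.2.1) :
    n * |(degreeCharSum F n d : ℝ)| ≤ 19 * (d.1 + d.2.1 : ℕ) * √((Fintype.card F : ℝ) ^ n) *
      (Fintype.card F : ℝ) ^ (d.1 + d.2.1 + d.2.2) := by
  have hterm (t) (ht : t ∈ coprimeTriples F d.1 d.2.1 d.2.2) :
      n * |((∑ P ∈ primesOfDegree F n, chiP P (t.1 * t.2.1) : ℤ) : ℝ)| ≤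
        19 * (d.1 + d.2.1 : ℕ) * √((Fintype.card F : ℝ) ^ n) := by
    obtain ⟨⟨⟨h₁, hdeg₁⟩, ⟨h₂, hdeg₂⟩, -⟩, hsf₁, hsf₂, -, hcop, -⟩ := mem_coprimeTriples.1 ht
    have hdeg : (t.1 * t.2.1).natDegree = d.1 + d.2.1 := by
      rw [h₁.natDegree_mul h₂, hdeg₁, hdeg₂]
    rw [← hdeg] at hd ⊢
    exact natCast_mul_abs_sum_chiP_le hF (squarefree_mul_iff.2 ⟨hcop.isRelPrime, hsf₁, hsf₂⟩) hd n
  rw [degreeCharSum, Finset.sum_comm, Int.cast_sum]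
  calc n * |∑ t ∈ coprimeTriples F d.1 d.2.1 d.2.2,
          ((∑ P ∈ primesOfDegree F n, chiP P (t.1 * t.2.1) : ℤ) : ℝ)|
      ≤ ∑ t ∈ coprimeTriples F d.1 d.2.1 d.2.2,
          n * |((∑ P ∈ primesOfDegree F n, chiP P (t.1 * t.2.1) : ℤ) : ℝ)| := by
        rw [← Finset.mul_sum]
        gcongr
        exact Finset.abs_sum_le_sum_abs _ _
    _ ≤ (coprimeTriples F d.1 d.2.1 d.2.2).card *
          (19 * (d.1 + d.2.1 : ℕ) * √((Fintype.card F : ℝ) ^ n)) := by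
        rw [← nsmul_eq_mul]
        exact Finset.sum_le_card_nsmul _ _ _ hterm
    _ ≤ _ := by
        rw [mul_comm]
        gcongr
        exact_mod_cast card_coprimeTriples_le (F := F) d.1 d.2.1 d.2.2

lemma abs_degreeCharSum_mul_pow_le (hF : ringChar F ≠ 2) {n m g d₁ d₂ d₃ : ℕ}
    (hsum : d₁ + d₂ + d₃ ≤ g + 3) (hd₁ : n + 2 * m ≤ d₁) :
    |degreeCharSum F n (d₁, d₂, d₃)| * (Fintype.card F : ℤ) ^ m ≤
      (Fintype.card F : ℤ) ^ n * ((g + 4) ^ 3 * (Fintype.card F : ℤ) ^ (g + 3)) := by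
  have hq : 1 ≤ Fintype.card F := Fintype.card_pos
  have hterm (P) (hP : P ∈ primesOfDegree F n) :
      |∑ t ∈ coprimeTriples F d₁ d₂ d₃, chiP P (t.1 * t.2.1)| * (Fintype.card F : ℤ) ^ m ≤
        (g + 4) ^ 3 * (Fintype.card F : ℤ) ^ (g + 3) := by
    obtain ⟨⟨hP_monic, rfl⟩, hP_irr⟩ := mem_primesOfDegree.1 hP
    refine (mul_le_mul_of_nonneg_right (abs_sum_coprimeTriples_chiP_le hF hP_monic hP_irr
      d₁ d₂ d₃) (by positivity)).trans ?_
    norm_cast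
    rw [mul_assoc, ← pow_add, (by ring : (g + 4) ^ 3 = (g + 4) * (g + 4) * (g + 4))]
    exact Nat.mul_le_mul (Nat.mul_le_mul (Nat.mul_le_mul (by omega) (by omega)) (by omega))
      (Nat.pow_le_pow_right hq (by omega))
  calc |degreeCharSum F n (d₁, d₂, d₃)| * (Fintype.card F : ℤ) ^ m
      ≤ ∑ P ∈ primesOfDegree F n,
          |∑ t ∈ coprimeTriples F d₁ d₂ d₃, chiP P (t.1 * t.2.1)| * (Fintype.card F : ℤ) ^ m := by
        rw [← Finset.sum_mul]
        gcongr
        exact Finset.abs_sum_le_sum_abs _ _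
    _ ≤ (primesOfDegree F n).card * ((g + 4) ^ 3 * (Fintype.card F : ℤ) ^ (g + 3)) := by
        rw [← nsmul_eq_mul]
        exact Finset.sum_le_card_nsmul _ _ _ hterm
    _ ≤ _ := by
        gcongr
        exact_mod_cast card_primesOfDegree_le (F := F) n

lemma abs_degreeCharSum_mul_pow_le_of_not_lt (hF : ringChar F ≠ 2) {n m g : ℕ} {d : ℕ × ℕ × ℕ}
    (hd : d ∈ admissibleDegrees g) (hlarge : ¬ (d.1 < n + 2 * m ∧ d.2.1 < n + 2 * m)) :
    |(degreeCharSum F n d : ℝ)| * (Fintype.card F : ℝ) ^ m ≤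
      (Fintype.card F : ℝ) ^ n * ((g + 4) ^ 3 * (Fintype.card F : ℝ) ^ (g + 3)) := by
  have hsum := sum_eq_of_mem_admissibleDegrees hd
  obtain ⟨d₁, d₂, d₃⟩ := d
  dsimp only at hlarge hsum
  rcases le_or_gt (n + 2 * m) d₁ with h₁ | h₁
  · exact_mod_cast abs_degreeCharSum_mul_pow_le hF (by omega) h₁
  · rw [degreeCharSum_comm]
    exact_mod_cast abs_degreeCharSum_mul_pow_le hF (by omega) (by omega)

lemma natCast_mul_abs_sum_small_le (hF : ringChar F ≠ 2) (n g K : ℕ) :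
    n * ∑ d ∈ admissibleDegrees g with d.1 < K ∧ d.2.1 < K, |(degreeCharSum F n d : ℝ)| ≤
      76 * K ^ 3 * √((Fintype.card F : ℝ) ^ n) * (Fintype.card F : ℝ) ^ (g + 3) := by
  have hq : (1 : ℝ) ≤ Fintype.card F := by exact_mod_cast Fintype.card_pos
  have hterm (d) (hd : d ∈ {d ∈ admissibleDegrees g | d.1 < K ∧ d.2.1 < K}) :
      n * |(degreeCharSum F n d : ℝ)| ≤
        19 * (2 * K) * √((Fintype.card F : ℝ) ^ n) * (Fintype.card F : ℝ) ^ (g + 3) := by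
    obtain ⟨hd, hlt⟩ := Finset.mem_filter.1 hd
    have hsum := sum_eq_of_mem_admissibleDegrees hd
    have hdeg : ((d.1 + d.2.1 : ℕ) : ℝ) ≤ 2 * K := by
      exact_mod_cast (by omega : d.1 + d.2.1 ≤ 2 * K)
    have hpow : (Fintype.card F : ℝ) ^ (d.1 + d.2.1 + d.2.2) ≤ Fintype.card F ^ (g + 3) :=
      pow_le_pow_right₀ hq (by omega)
    refine (natCast_mul_abs_degreeCharSum_le hF n (one_le_of_mem_admissibleDegrees hd)).trans ?_
    exact mul_le_mul (by gcongr) hpow (by positivity) (by positivity)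
  calc n * ∑ d ∈ admissibleDegrees g with d.1 < K ∧ d.2.1 < K, |(degreeCharSum F n d : ℝ)|
      ≤ {d ∈ admissibleDegrees g | d.1 < K ∧ d.2.1 < K}.card *
          (19 * (2 * K) * √((Fintype.card F : ℝ) ^ n) * (Fintype.card F : ℝ) ^ (g + 3)) := by
        rw [Finset.mul_sum, ← nsmul_eq_mul]
        exact Finset.sum_le_card_nsmul _ _ _ hterm
    _ ≤ (2 * K ^ 2 : ℕ) *
          (19 * (2 * K) * √((Fintype.card F : ℝ) ^ n) * (Fintype.card F : ℝ) ^ (g + 3)) := by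
        gcongr
        exact card_filter_lt_admissibleDegrees_le g K
    _ = _ := by push_cast; ring

lemma sum_large_mul_pow_le (hF : ringChar F ≠ 2) (n m g : ℕ) :
    (∑ d ∈ admissibleDegrees g with ¬ (d.1 < n + 2 * m ∧ d.2.1 < n + 2 * m),
        |(degreeCharSum F n d : ℝ)|) * (Fintype.card F : ℝ) ^ m ≤
      (g + 4) ^ 6 * (Fintype.card F : ℝ) ^ n * (Fintype.card F : ℝ) ^ (g + 3) := by
  calc (∑ d ∈ admissibleDegrees g with ¬ (d.1 < n + 2 * m ∧ d.2.1 < n + 2 * m),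
          |(degreeCharSum F n d : ℝ)|) * (Fintype.card F : ℝ) ^ m
      ≤ {d ∈ admissibleDegrees g | ¬ (d.1 < n + 2 * m ∧ d.2.1 < n + 2 * m)}.card *
          ((Fintype.card F : ℝ) ^ n * ((g + 4) ^ 3 * (Fintype.card F : ℝ) ^ (g + 3))) := by
        rw [Finset.sum_mul, ← nsmul_eq_mul]
        refine Finset.sum_le_card_nsmul _ _ _ fun d hd => ?_
        obtain ⟨hd, hlarge⟩ := Finset.mem_filter.1 hd
        exact abs_degreeCharSum_mul_pow_le_of_not_lt hF hd hlarge
    _ ≤ ((g + 4) ^ 3 : ℕ) *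
          ((Fintype.card F : ℝ) ^ n * ((g + 4) ^ 3 * (Fintype.card F : ℝ) ^ (g + 3))) := by
        gcongr
        exact (Finset.card_filter_le _ _).trans (card_admissibleDegrees_le g)
    _ = _ := by push_cast; ring

end CharacterSums

section Assembly

variable {F : Type*} [Field F] [Fintype F]

-- The cut-off `5 * n + 10 * l` is `n + 2 * m` with `m = 2 * n + 5 * l`: then `q ^ m` absorbs the
-- trivial factors `n * q ^ n ≤ q ^ (2 * n)` and `g ^ 5 ≤ q ^ (5 * l)`.
lemma natCast_mul_sum_large_le (hF : ringChar F ≠ 2) {n l g : ℕ} (hg : 1 ≤ g)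
    (hl : g ≤ Fintype.card F ^ l) :
    n * ∑ d ∈ admissibleDegrees g with ¬ (d.1 < 5 * n + 10 * l ∧ d.2.1 < 5 * n + 10 * l),
        |(degreeCharSum F n d : ℝ)| ≤ 15625 * g * (Fintype.card F : ℝ) ^ (g + 3) := by
  have hlarge := sum_large_mul_pow_le hF n (2 * n + 5 * l) g
  rw [(by ring : n + 2 * (2 * n + 5 * l) = 5 * n + 10 * l)] at hlarge
  set S := ∑ d ∈ admissibleDegrees g with ¬ (d.1 < 5 * n + 10 * l ∧ d.2.1 < 5 * n + 10 * l),
    |(degreeCharSum F n d : ℝ)|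
  set q := Fintype.card F
  have hq : 1 < q := Fintype.one_lt_card
  have hn : (n : ℝ) ≤ (q : ℝ) ^ n := by exact_mod_cast (Nat.lt_pow_self hq).le
  have hg' : (1 : ℝ) ≤ g := by exact_mod_cast hg
  have hl' : (g : ℝ) ≤ (q : ℝ) ^ l := by exact_mod_cast hl
  have : 0 ≤ S := Finset.sum_nonneg fun _ _ => abs_nonneg _
  refine le_of_mul_le_mul_right ?_ (by positivity : (0 : ℝ) < (q : ℝ) ^ n * g ^ 5)
  calc n * S * ((q : ℝ) ^ n * g ^ 5)
      ≤ (q : ℝ) ^ n * S * ((q : ℝ) ^ n * ((q : ℝ) ^ l) ^ 5) := by gcongr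
    _ = S * (q : ℝ) ^ (2 * n + 5 * l) := by ring
    _ ≤ (g + 4) ^ 6 * (q : ℝ) ^ n * (q : ℝ) ^ (g + 3) := hlarge
    _ ≤ (5 * g) ^ 6 * (q : ℝ) ^ n * (q : ℝ) ^ (g + 3) := by
        gcongr
        linarith
    _ = _ := by ring

lemma natCast_mul_abs_sum_tripleFamily_chiP_le (hF : ringChar F ≠ 2) {n l g : ℕ} (hg : 1 ≤ g)
    (hl : g ≤ Fintype.card F ^ l) :
    n * |((∑ P ∈ primesOfDegree F n, ∑ t ∈ tripleFamily F g, chiP P (t.1 * t.2.1) : ℤ) : ℝ)| ≤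
      (76 * (5 * n + 10 * l : ℕ) ^ 3 * √((Fintype.card F : ℝ) ^ n) + 15625 * g) *
        (Fintype.card F : ℝ) ^ (g + 3) := by
  rw [sum_tripleFamily_chiP_eq, Int.cast_sum, add_mul]
  calc n * |∑ d ∈ admissibleDegrees g, (degreeCharSum F n d : ℝ)|
      ≤ n * ∑ d ∈ admissibleDegrees g, |(degreeCharSum F n d : ℝ)| := by
        gcongr
        exact Finset.abs_sum_le_sum_abs _ _
    _ = _ := by rw [← Finset.sum_filter_add_sum_filter_not _
          fun d => d.1 < 5 * n + 10 * l ∧ d.2.1 < 5 * n + 10 * l, mul_add]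
    _ ≤ _ := add_le_add (natCast_mul_abs_sum_small_le hF n g _)
          (natCast_mul_sum_large_le hF hg hl)

lemma abs_normalized_sum_tripleFamily_le (hF : ringChar F ≠ 2) {n l g C : ℕ} (hg : 1 ≤ g)
    (hl : g ≤ Fintype.card F ^ l)
    (hC : g ^ 2 * Fintype.card F ^ g ≤ C * (tripleFamily F g).card) :
    |n * (√((Fintype.card F : ℝ) ^ n))⁻¹ / (tripleFamily F g).card *
        ((∑ P ∈ primesOfDegree F n, ∑ t ∈ tripleFamily F g, chiP P (t.1 * t.2.1) : ℤ) : ℝ)| ≤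
      C * (Fintype.card F : ℝ) ^ 3 *
        (76 * ((5 * n + 10 * l : ℕ) ^ 3 / (g : ℝ) ^ 2) + 15625 * (g : ℝ)⁻¹) := by
  have hsum := natCast_mul_abs_sum_tripleFamily_chiP_le (n := n) hF hg hl
  set S : ℝ := ((∑ P ∈ primesOfDegree F n, ∑ t ∈ tripleFamily F g, chiP P (t.1 * t.2.1) : ℤ) : ℝ)
  set K := 5 * n + 10 * l
  set q := Fintype.card F
  set N := (tripleFamily F g).card
  have hq : (1 : ℝ) ≤ q := by exact_mod_cast Fintype.card_pos (α := F)
  have hg' : (0 : ℝ) < g := by exact_mod_cast hg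
  have hC' : (g : ℝ) ^ 2 * (q : ℝ) ^ g ≤ C * N := by exact_mod_cast hC
  have hN : (0 : ℝ) < N :=
    pos_of_mul_pos_right (lt_of_lt_of_le (by positivity) hC') (by positivity)
  have hsqrt : 1 ≤ √((q : ℝ) ^ n) := Real.one_le_sqrt.2 (one_le_pow₀ hq)
  rw [abs_mul, abs_of_nonneg (by positivity), div_mul_eq_mul_div, div_le_iff₀ hN]
  calc n * (√((q : ℝ) ^ n))⁻¹ * |S| = n * |S| / √((q : ℝ) ^ n) := by ring
    _ ≤ (76 * (K : ℝ) ^ 3 + 15625 * g) * (q : ℝ) ^ (g + 3) := by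
        rw [div_le_iff₀ (by positivity)]
        rw [mul_right_comm]
        refine hsum.trans (mul_le_mul_of_nonneg_right ?_ (by positivity))
        rw [add_mul]
        exact add_le_add_right (le_mul_of_one_le_right (by positivity) hsqrt) _
    _ = (q : ℝ) ^ 3 * (76 * ((K : ℝ) ^ 3 / (g : ℝ) ^ 2) + 15625 * (g : ℝ)⁻¹) *
          ((g : ℝ) ^ 2 * (q : ℝ) ^ g) := by
        field_simp
        ring
    _ ≤ (q : ℝ) ^ 3 * (76 * ((K : ℝ) ^ 3 / (g : ℝ) ^ 2) + 15625 * (g : ℝ)⁻¹) * (C * N) := by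
        gcongr
    _ = _ := by ring

lemma finsum_chiP_eq (n g : ℕ) :
    ∑ᶠ P ∈ {P : F[X] | P.Monic ∧ Irreducible P ∧ P.natDegree = n},
        ∑ᶠ t ∈ FSet F g, chiP P (t.1 * t.2.1) =
      ∑ P ∈ primesOfDegree F n, ∑ t ∈ tripleFamily F g, chiP P (t.1 * t.2.1) := by
  have hprimes : {P : F[X] | P.Monic ∧ Irreducible P ∧ P.natDegree = n} = primesOfDegree F n := by
    ext P
    rw [Finset.mem_coe, mem_primesOfDegree, and_right_comm, and_assoc, Set.mem_ofPred_eq]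
  simp only [hprimes, ← coe_tripleFamily, finsum_mem_coe_finset]

end Assembly

section Limit

open Filter Topology

lemma tendsto_natLog_div_rpow_atTop (b : ℕ) {s : ℝ} (hs : 0 < s) :
    Tendsto (fun g : ℕ => (Nat.log b g : ℝ) / (g : ℝ) ^ s) atTop (𝓝 0) := by
  have hlogb : Tendsto (fun g : ℕ => Real.logb b g / (g : ℝ) ^ s) atTop (𝓝 0) := by
    have hlog := (isLittleO_log_rpow_atTop hs).tendsto_div_nhds_zero.comp
      tendsto_natCast_atTop_atTop
    simpa only [Real.logb, div_right_comm, zero_div, Function.comp_apply] using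
      hlog.div_const (Real.log b)
  refine squeeze_zero (fun g => by positivity) (fun g => ?_) hlogb
  gcongr
  exact Real.natLog_le_logb g b

lemma tendsto_cutoff_pow_three_div_sq {n : ℕ → ℕ}
    (hn : Tendsto (fun g : ℕ => (n g : ℝ) / (g : ℝ) ^ ((2 : ℝ) / 3)) atTop (𝓝 0)) :
    Tendsto (fun g : ℕ => ((5 * n g + 10 * (Nat.log 2 g + 1) : ℕ) : ℝ) ^ 3 / (g : ℝ) ^ 2)
      atTop (𝓝 0) := by
  have hlog := tendsto_natLog_div_rpow_atTop 2 (by norm_num : (0 : ℝ) < 2 / 3)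
  have hone : Tendsto (fun g : ℕ => 1 / (g : ℝ) ^ ((2 : ℝ) / 3)) atTop (𝓝 0) :=
    ((tendsto_rpow_atTop (by norm_num)).comp tendsto_natCast_atTop_atTop).const_div_atTop 1
  have hcutoff := ((hn.const_mul 5).add ((hlog.add hone).const_mul 10)).pow 3
  rw [(by norm_num : ((5 : ℝ) * 0 + 10 * (0 + 0)) ^ 3 = 0)] at hcutoff
  refine hcutoff.congr fun g => ?_
  have hpow : ((g : ℝ) ^ ((2 : ℝ) / 3)) ^ 3 = (g : ℝ) ^ 2 := by
    rw [← Real.rpow_natCast, ← Real.rpow_mul g.cast_nonneg]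
    norm_num
  rw [← hpow, ← div_pow]
  push_cast
  ring

end Limit

end BiquadraticFamily

open BiquadraticFamily Filter in
theorem stmt13_general {F : Type*} [Field F] [Fintype F] (hF : ringChar F ≠ 2) (n : ℕ → ℕ)
    (hn : Tendsto (fun g : ℕ => (n g : ℝ) / (g : ℝ) ^ ((2 : ℝ) / 3)) atTop (nhds 0)) :
    Tendsto (fun g : ℕ =>
        (n g : ℝ) * (√((Fintype.card F : ℝ) ^ n g))⁻¹ / ((FSet F g).ncard : ℝ) *
          ((∑ᶠ P ∈ {P : F[X] | P.Monic ∧ Irreducible P ∧ P.natDegree = n g},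
              ∑ᶠ t ∈ FSet F g, chiP P (t.1 * t.2.1) : ℤ) : ℝ))
      atTop (nhds 0) := by
  have hq_odd := FiniteField.odd_card_of_char_ne_two hF
  have hq_gt : 1 < Fintype.card F := Fintype.one_lt_card
  obtain ⟨C, G, hcard⟩ := exists_sq_mul_pow_le_mul_card_tripleFamily F (by omega)
  have hbound : Tendsto (fun g : ℕ => C * (Fintype.card F : ℝ) ^ 3 *
      (76 * ((5 * n g + 10 * (Nat.log 2 g + 1) : ℕ) ^ 3 / (g : ℝ) ^ 2) + 15625 * (g : ℝ)⁻¹))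
      atTop (nhds 0) := by
    simpa using (((tendsto_cutoff_pow_three_div_sq hn).const_mul 76).add
      (tendsto_inv_atTop_nhds_zero_nat.const_mul 15625)).const_mul (C * (Fintype.card F : ℝ) ^ 3)
  refine squeeze_zero_norm' ?_ hbound
  filter_upwards [eventually_ge_atTop 1, eventually_ge_atTop G] with g hg hgG
  have hg_le : g ≤ Fintype.card F ^ (Nat.log 2 g + 1) :=
    (Nat.lt_pow_succ_log_self one_lt_two g).le.trans (Nat.pow_le_pow_left hq_gt _)
  have hle := abs_normalized_sum_tripleFamily_le (n := n g) hF hg hg_le (hcard g hgG)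
  rwa [← finsum_chiP_eq, ← Set.ncard_coe_finset, coe_tripleFamily] at hle

/-- for a sequence of even `n(g)` with `3·log_q g ≤ n(g)` for large `g` and
`n(g) = o(g^{2/3})`, the normalized character double sum
`(n(g)·q^{-n(g)/2}/|F_g|)·Σ_{deg P = n(g)} Σ_{(f1,f2,f3) ∈ F_g} χ_P(f1·f2)` tends to `0`
as `g → ∞`. -/
theorem stmt13 (q : ℕ) (hq_odd : Odd q) (hq_pp : IsPrimePow q)
    (Fq : Type) [Field Fq] [Fintype Fq] (hFq : Fintype.card Fq = q)
    (n : ℕ → ℕ) (hn_even : ∀ g, Even (n g)) (hn_pos : ∀ g, 0 < n g)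
    (hn_low : ∃ g0 : ℕ, ∀ g : ℕ, g0 ≤ g → 3 * Real.log g / Real.log q ≤ (n g : ℝ))
    (hn_up : Filter.Tendsto (fun g : ℕ => (n g : ℝ) / (g : ℝ) ^ ((2 : ℝ) / 3))
      Filter.atTop (nhds 0)) :
    Filter.Tendsto (fun g : ℕ =>
        (n g : ℝ) * ((q : ℝ) ^ (n g / 2))⁻¹ / ((FSet Fq g).ncard : ℝ) *
          ((∑ᶠ P ∈ {P : Fq[X] | P.Monic ∧ Irreducible P ∧ P.natDegree = n g},
              ∑ᶠ t ∈ FSet Fq g, chiP P (t.1 * t.2.1) : ℤ) : ℝ))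
      Filter.atTop (nhds 0) := by
  subst hFq
  have hF : ringChar Fq ≠ 2 := fun h =>
    Nat.not_even_iff_odd.2 hq_odd (Nat.even_iff.2 (FiniteField.even_card_iff_char_two.1 h))
  have hsqrt (g : ℕ) : √((Fintype.card Fq : ℝ) ^ n g) = (Fintype.card Fq : ℝ) ^ (n g / 2) := by
    rw [Real.sqrt_eq_iff_eq_sq (by positivity) (by positivity), ← pow_mul,
      Nat.div_mul_cancel (hn_even g).two_dvd]
  simpa only [hsqrt] using stmt13_general hF n hn_up
end

section
/- Let q be an odd prime power. There is a constant C, depending only on q, such that for every monic square-free polynomial D ∈ F_q[X] with deg D ≥ 1 and every integer n ≥ 1: the absolute value of the sum of χ_D(P) over all monic irreducible polynomials P ∈ F_q[X] of degree n is at most C·deg(D)·q^{n/2}/n. -/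
open Polynomial Classical

noncomputable section

/-- Jacobi symbol `χ_D` for a monic square-free `D`: the product of `χ_P` over the
distinct monic irreducible factors `P` of `D`. -/
def chiD {Fq : Type*} [Field Fq] (D F : Fq[X]) : ℤ :=
  ∏ᶠ P ∈ {P : Fq[X] | P.Monic ∧ Irreducible P ∧ P ∣ D}, chiP P F

end

/-!
Let `m = deg D`. For a prime `P` of degree `n` with root `x` in `K = F_{q^n}`, the symbol `χ_P(D)`
is the quadratic character of `D(x)`. Both `χ_D(P)` and `χ_P(D)` are quadratic characters of a
resultant of `D` and `P`, so they agree up to a sign depending only on the degrees, and each `P`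
has `n` roots in `K`. Hence `n` times the prime sum is, up to sign, the sum of the quadratic
character of `D(x)` over the `x` of degree `n`; the remaining elements of `K` lie in proper
subfields and number at most `2 q^{n/2}`.

The complete sum over `K` is bounded by `20 m q^{n/2}` with Stepanov's method. Put `Q = q^n` and
let `f` be `D` over `K`. A polynomial `f^l (r + f^{(Q-1)/2} s)`, where `r` and `s` have low-degree
digits in base `X^Q`, is made to vanish to order `l` at every `x` where `f(x)` is zero or has a
prescribed quadratic character: since `x^Q = x`, each of its Hasse derivatives of order below `l`
becomes a polynomial of low degree on these points, so the vanishing is a small system of linear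
conditions on the digits. Comparing `l` times the number of such points with the degree bounds
their number from above, for each of the two signs.
-/

section HasseDeriv

variable {R : Type*}

theorem pow_sub_dvd_hasseDeriv_mul_pow [CommSemiring R] (f h : R[X]) (a k : ℕ) :
    f ^ (a - k) ∣ hasseDeriv k (h * f ^ a) := by
  induction a generalizing k with
  | zero => simp
  | succ a ih =>
    rw [pow_succ, ← mul_assoc, hasseDeriv_mul]
    refine Finset.dvd_sum ?_
    rintro ⟨i, j⟩ hij
    rw [Finset.HasAntidiagonal.mem_antidiagonal] at hij
    dsimp only at hij ⊢
    rcases Nat.eq_zero_or_pos j with rfl | hj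
    · rw [hasseDeriv_zero']
      calc f ^ (a + 1 - k) ∣ f ^ (a - i + 1) := pow_dvd_pow f (by omega)
        _ = f ^ (a - i) * f := pow_succ ..
        _ ∣ _ := mul_dvd_mul_right (ih i) f
    · exact ((pow_dvd_pow f (by omega)).trans (ih i)).mul_right _

theorem natDegree_le_of_pow_mul_eq_hasseDeriv [CommSemiring R] [NoZeroDivisors R] {f h t : R[X]}
    (hf : f ≠ 0) {a k : ℕ} (hk : k ≤ a) (ht : f ^ (a - k) * t = hasseDeriv k (h * f ^ a)) :
    t.natDegree ≤ h.natDegree + k * f.natDegree := by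
  rcases eq_or_ne t 0 with rfl | ht0
  · simp
  have h_left : (f ^ (a - k) * t).natDegree = (a - k) * f.natDegree + t.natDegree := by
    rw [natDegree_mul (pow_ne_zero _ hf) ht0, natDegree_pow]
  have h_right : (hasseDeriv k (h * f ^ a)).natDegree ≤ h.natDegree + a * f.natDegree :=
    (natDegree_hasseDeriv_le _ k).trans <| (Nat.sub_le ..).trans <|
      natDegree_mul_le.trans_eq <| by rw [natDegree_pow]
  have h_split : a * f.natDegree = (a - k) * f.natDegree + k * f.natDegree := by
    rw [← add_mul, Nat.sub_add_cancel hk]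
  rw [← ht] at h_right
  omega

section CharP

variable [CommSemiring R] {p : ℕ} [CharP R p]

theorem hasseDeriv_X_pow_prime_pow (hp : p.Prime) {n i : ℕ} (hi : i ≠ 0) (hin : i < p ^ n) :
    hasseDeriv i ((X : R[X]) ^ p ^ n) = 0 := by
  have h_choose : ((p ^ n).choose i : R) = 0 :=
    (CharP.cast_eq_zero_iff R p _).2 (hp.dvd_choose_pow hi hin.ne)
  rw [← monomial_one_right_eq_X_pow, hasseDeriv_monomial, h_choose, zero_mul, monomial_zero_right]

theorem hasseDeriv_mul_X_pow_prime_pow_pow (hp : p.Prime) {n k : ℕ} (hk : k < p ^ n) (h : R[X])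
    (j : ℕ) : hasseDeriv k (h * (X ^ p ^ n) ^ j) = hasseDeriv k h * (X ^ p ^ n) ^ j := by
  induction j with
  | zero => simp
  | succ j ih =>
    rw [pow_succ, ← mul_assoc, hasseDeriv_mul, Finset.sum_eq_single (k, 0)]
    · rw [hasseDeriv_zero', ih, mul_assoc]
    · rintro ⟨i, l⟩ hil hne
      rw [Finset.HasAntidiagonal.mem_antidiagonal] at hil
      dsimp only at hil ⊢
      have hl : l ≠ 0 := by
        rintro rfl
        exact hne (by rw [← hil, add_zero])
      rw [hasseDeriv_X_pow_prime_pow hp hl (by omega), mul_zero]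
    · simp

end CharP

theorem X_sub_C_pow_dvd_iff_eval_hasseDeriv [CommRing R] {r : R[X]} {x : R} {l : ℕ} :
    (X - C x) ^ l ∣ r ↔ ∀ k < l, (hasseDeriv k r).eval x = 0 := by
  simp only [X_sub_C_pow_dvd_iff, ← taylor_apply, X_pow_dvd_iff, taylor_coeff]

theorem mul_card_le_natDegree_of_X_sub_C_pow_dvd [CommRing R] [IsDomain R] {r : R[X]} (hr : r ≠ 0)
    {S : Finset R} {l : ℕ} (h : ∀ x ∈ S, (X - C x) ^ l ∣ r) : l * S.card ≤ r.natDegree := by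
  have h_le : l • S.val ≤ r.roots := by
    refine Multiset.le_iff_count.2 fun x => ?_
    rw [Multiset.count_nsmul, count_roots]
    by_cases hx : x ∈ S
    · rw [Multiset.count_eq_one_of_mem S.nodup hx, mul_one]
      exact (le_rootMultiplicity_iff hr).2 (h x hx)
    · rw [Multiset.count_eq_zero_of_notMem hx, mul_zero]
      exact Nat.zero_le _
  calc l * S.card = (l • S.val).card := by rw [Multiset.card_nsmul, Finset.card_val]
    _ ≤ r.roots.card := Multiset.card_le_card h_le
    _ ≤ r.natDegree := card_roots' r

end HasseDeriv

section LinearAlgebra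

theorem exists_linearMap_mul_eq_of_forall_dvd {R A M : Type*} [CommSemiring R] [CommSemiring A]
    [IsCancelMulZero A] [Algebra R A] [AddCommMonoid M] [Module R M] {g : A} (hg : g ≠ 0)
    (L : M →ₗ[R] A) (h : ∀ x, g ∣ L x) : ∃ T : M →ₗ[R] A, ∀ x, g * T x = L x := by
  choose T hT using h
  refine ⟨⟨⟨T, fun x y => ?_⟩, fun c x => ?_⟩, fun x => (hT x).symm⟩ <;>
    apply mul_left_cancel₀ hg
  · rw [← hT, map_add, hT x, hT y, mul_add]
  · rw [← hT, map_smul, hT x, RingHom.id_apply, mul_smul_comm]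

theorem exists_ne_zero_forall_eq_zero_of_degree_lt {K V ι : Type*} [Field K] [AddCommGroup V]
    [Module K V] [FiniteDimensional K V] [Fintype ι] {B : ℕ} (L : ι → V →ₗ[K] K[X])
    (hdeg : ∀ k v, (L k v).degree < B) (hdim : Fintype.card ι * B < Module.finrank K V) :
    ∃ v ≠ 0, ∀ k, L k v = 0 := by
  let Φ : V →ₗ[K] ι → degreeLT K B :=
    LinearMap.pi fun k => (L k).codRestrict _ fun v => mem_degreeLT.2 (hdeg k v)
  have h_finrank : Module.finrank K (ι → degreeLT K B) = Fintype.card ι * B := by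
    simp [Module.finrank_pi_fintype, Module.finrank_eq_card_basis (degreeLT.basis K B)]
  obtain ⟨v, hv, hv0⟩ := (Submodule.ne_bot_iff _).1 <|
    LinearMap.ker_ne_bot_of_finrank_lt (f := Φ) (h_finrank ▸ hdim)
  exact ⟨v, hv0, fun k => congrArg Subtype.val (congrFun (LinearMap.mem_ker.1 hv) k)⟩

end LinearAlgebra

section Squarefree

theorem eq_zero_of_sq_mul_squarefree_eq {M : Type*} [CommMonoidWithZero M]
    [UniqueFactorizationMonoid M] {f u r s : M} (hf : Squarefree f) (hf_unit : ¬IsUnit f)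
    (hu : IsUnit u) (h : r ^ 2 * f = u * s ^ 2) : s = 0 := by
  by_contra hs
  have : Nontrivial M := ⟨s, 0, hs⟩
  have h_ne : r ^ 2 * f ≠ 0 := h ▸ mul_ne_zero hu.ne_zero (pow_ne_zero 2 hs)
  obtain ⟨p, hp_irr, hpf⟩ := WfDvdMonoid.exists_irreducible_factor hf_unit hf.ne_zero
  have hp : Prime p := hp_irr.prime
  have h_fin {a : M} (ha : a ≠ 0) : FiniteMultiplicity p a := .of_prime_left hp ha
  have hr : r ≠ 0 := by
    rintro rfl
    simp at h_ne
  have hf_mult : multiplicity p f = 1 := by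
    refine multiplicity_eq_of_dvd_of_not_dvd (by rwa [pow_one]) fun h_sq => hp.not_isUnit ?_
    exact hf p (by rwa [← sq])
  have hu_mult : multiplicity p u = 0 :=
    multiplicity_eq_zero.2 fun hpu => hp.not_isUnit (isUnit_of_dvd_unit hpu hu)
  have h_parity := congrArg (multiplicity p) h
  rw [multiplicity_mul hp (h_fin h_ne), multiplicity_mul hp (h_fin (h ▸ h_ne)),
    (h_fin hr).multiplicity_pow hp, (h_fin hs).multiplicity_pow hp, hf_mult, hu_mult] at h_parity
  omega

theorem squarefree_mulEquiv_apply {M N : Type*} [Monoid M] [Monoid N] (e : M ≃* N) {x : M}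
    (hx : Squarefree x) : Squarefree (e x) := by
  intro y hy
  have h_dvd : e.symm y * e.symm y ∣ x := by
    simpa only [map_mul, MulEquiv.symm_apply_apply] using map_dvd e.symm hy
  simpa only [MulEquiv.apply_symm_apply] using (hx _ h_dvd).map e

end Squarefree

section Digits

variable {R : Type*} {J : ℕ}

/-- The polynomial `∑ j, d j * X ^ (q * j)` with digits `d` in base `X ^ q`, as a linear function of
the digits. The digits are arbitrary polynomials: no degree bound is imposed here. -/
noncomputable def ofXPowDigits [CommSemiring R] (q : ℕ) : (Fin J → R[X]) →ₗ[R[X]] R[X] :=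
  Fintype.linearCombination R[X] fun j : Fin J => (X ^ q) ^ (j : ℕ)

theorem ofXPowDigits_apply [CommSemiring R] (q : ℕ) (d : Fin J → R[X]) :
    ofXPowDigits q d = ∑ j, d j * (X ^ q) ^ (j : ℕ) := by
  simp only [ofXPowDigits, Fintype.linearCombination_apply, smul_eq_mul]

theorem ofXPowDigits_succ [CommSemiring R] (q : ℕ) (d : Fin (J + 1) → R[X]) :
    ofXPowDigits q d = d 0 + X ^ q * ofXPowDigits q (Fin.tail d) := by
  simp only [ofXPowDigits_apply, Fin.sum_univ_succ, Fin.val_zero, pow_zero, mul_one, Fin.val_succ,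
    pow_succ', mul_left_comm, Finset.mul_sum, Fin.tail]

theorem natDegree_ofXPowDigits_le [CommSemiring R] (q : ℕ) {d : Fin J → R[X]} {A : ℕ}
    (hd : ∀ j, (d j).natDegree ≤ A) : (ofXPowDigits q d).natDegree ≤ A + q * (J - 1) := by
  rw [ofXPowDigits_apply]
  refine natDegree_sum_le_of_forall_le _ _ fun j _ => natDegree_mul_le.trans ?_
  rw [← pow_mul]
  exact add_le_add (hd j) ((natDegree_X_pow_le _).trans (Nat.mul_le_mul_left q (by omega)))

theorem hasseDeriv_ofXPowDigits [CommSemiring R] {p : ℕ} [CharP R p] (hp : p.Prime) {n k : ℕ}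
    (hk : k < p ^ n) (d : Fin J → R[X]) :
    hasseDeriv k (ofXPowDigits (p ^ n) d) = ofXPowDigits (p ^ n) fun j => hasseDeriv k (d j) := by
  simp only [ofXPowDigits_apply, map_sum, hasseDeriv_mul_X_pow_prime_pow_pow hp hk]

theorem eval_ofXPowDigits_of_pow_eq_self [CommSemiring R] {q : ℕ} {x : R} (hx : x ^ q = x)
    (d : Fin J → R[X]) : (ofXPowDigits q d).eval x = (ofXPowDigits 1 d).eval x := by
  simp only [ofXPowDigits_apply, eval_finsetSum, eval_mul, eval_pow, eval_X, hx, pow_one]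

end Digits

section Nonvanishing

variable {K : Type*} [Field K] [Fintype K] {f : K[X]}

theorem X_pow_card_dvd_pow_card_sub_C_eval_zero (f : K[X]) :
    X ^ Fintype.card K ∣ f ^ Fintype.card K - C (f.eval 0) := by
  have h_dvd : X ∣ f - C (f.eval 0) := by
    rw [X_dvd_iff, coeff_sub, coeff_C_zero, coeff_zero_eq_eval_zero, sub_self]
  simpa only [map_sub, expand_X, expand_C, FiniteField.expand_card] using
    map_dvd (expand K (Fintype.card K)) h_dvd

-- Modulo `X ^ q` the power `f ^ q` is the constant `f(0)`, and by the degree bounds the congruence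
-- is an equality `r² f = f(0) s²`, impossible for square-free `f` unless both sides vanish.
theorem eq_zero_of_X_pow_card_dvd_sq_mul_sub {r s : K[X]} (hf : Squarefree f)
    (hf_pos : 0 < f.natDegree) (hf0 : f.eval 0 ≠ 0)
    (hr : 2 * r.natDegree + f.natDegree < Fintype.card K) (hs : 2 * s.natDegree < Fintype.card K)
    (h : X ^ Fintype.card K ∣ r ^ 2 * f - s ^ 2 * f ^ Fintype.card K) : r = 0 ∧ s = 0 := by
  have h_dvd : X ^ Fintype.card K ∣ r ^ 2 * f - C (f.eval 0) * s ^ 2 := by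
    convert h.add ((X_pow_card_dvd_pow_card_sub_C_eval_zero f).mul_left (s ^ 2)) using 1
    ring
  have h_deg : (r ^ 2 * f - C (f.eval 0) * s ^ 2).natDegree < Fintype.card K := by
    refine (natDegree_sub_le _ _).trans_lt (max_lt ?_ ?_)
    · exact (natDegree_mul_le.trans (Nat.add_le_add_right natDegree_pow_le _)).trans_lt hr
    · exact ((natDegree_C_mul_le _ _).trans natDegree_pow_le).trans_lt hs
  have h_eq : r ^ 2 * f = C (f.eval 0) * s ^ 2 := by
    refine sub_eq_zero.1 (eq_zero_of_dvd_of_natDegree_lt h_dvd ?_)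
    rwa [natDegree_X_pow]
  have hs0 : s = 0 := eq_zero_of_sq_mul_squarefree_eq hf
    (mt natDegree_eq_zero_of_isUnit hf_pos.ne') (isUnit_C.2 hf0.isUnit) h_eq
  exact ⟨by simpa [hs0, hf.ne_zero] using h_eq, hs0⟩

theorem digits_eq_zero_of_sq_mul_eq (hf : Squarefree f) (hf_pos : 0 < f.natDegree)
    (hf0 : f.eval 0 ≠ 0) {J : ℕ} {r s : Fin J → K[X]}
    (hr : ∀ j, 2 * (r j).natDegree + f.natDegree < Fintype.card K)
    (hs : ∀ j, 2 * (s j).natDegree < Fintype.card K)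
    (h : ofXPowDigits (Fintype.card K) r ^ 2 * f =
      ofXPowDigits (Fintype.card K) s ^ 2 * f ^ Fintype.card K) :
    r = 0 ∧ s = 0 := by
  induction J with
  | zero => exact ⟨Subsingleton.elim _ _, Subsingleton.elim _ _⟩
  | succ J ih =>
    rw [ofXPowDigits_succ _ r, ofXPowDigits_succ _ s] at h
    set Y : K[X] := X ^ Fintype.card K with hY
    set r' := ofXPowDigits (Fintype.card K) (Fin.tail r)
    set s' := ofXPowDigits (Fintype.card K) (Fin.tail s)
    obtain ⟨hr0, hs0⟩ : r 0 = 0 ∧ s 0 = 0 := by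
      refine eq_zero_of_X_pow_card_dvd_sq_mul_sub hf hf_pos hf0 (hr 0) (hs 0)
        ⟨(2 * s 0 * s' + Y * s' ^ 2) * f ^ Fintype.card K - (2 * r 0 * r' + Y * r' ^ 2) * f, ?_⟩
      rw [← hY]
      linear_combination h
    obtain ⟨hr_tail, hs_tail⟩ : Fin.tail r = 0 ∧ Fin.tail s = 0 := by
      refine ih (fun j => hr j.succ) (fun j => hs j.succ) ?_
      have hY0 : Y ^ 2 ≠ 0 := pow_ne_zero 2 (pow_ne_zero _ X_ne_zero)
      rw [hr0, hs0] at h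
      refine mul_left_cancel₀ hY0 ?_
      linear_combination h
    rw [← Fin.cons_self_tail r, ← Fin.cons_self_tail s, hr0, hs0, hr_tail, hs_tail]
    exact ⟨Matrix.cons_zero_zero, Matrix.cons_zero_zero⟩

end Nonvanishing

section Stepanov

/-- Stepanov's auxiliary polynomial `f ^ l * (r + f ^ e * s)`, where `r` and `s` are given by their
digits in base `X ^ q`. On the points where `f ^ e` takes a prescribed value it is made to vanish to
order `l` by a suitable choice of the digits. -/
noncomputable def stepanovPoly {R : Type*} [CommSemiring R] (f : R[X]) (q e l : ℕ) {J : ℕ}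
    (r s : Fin J → R[X]) : R[X] :=
  f ^ l * (ofXPowDigits q r + f ^ e * ofXPowDigits q s)

variable {J : ℕ}

theorem natDegree_stepanovPoly_le {R : Type*} [CommSemiring R] (f : R[X]) (q e l : ℕ) {A : ℕ}
    {r s : Fin J → R[X]} (hr : ∀ j, (r j).natDegree ≤ A) (hs : ∀ j, (s j).natDegree ≤ A) :
    (stepanovPoly f q e l r s).natDegree ≤ (l + e) * f.natDegree + A + q * (J - 1) := by
  have h_right : (f ^ e * ofXPowDigits q s).natDegree ≤ e * f.natDegree + (A + q * (J - 1)) :=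
    natDegree_mul_le_of_le natDegree_pow_le (natDegree_ofXPowDigits_le q hs)
  have h_sum : (ofXPowDigits q r + f ^ e * ofXPowDigits q s).natDegree ≤
      e * f.natDegree + (A + q * (J - 1)) :=
    natDegree_add_le_of_degree_le
      ((natDegree_ofXPowDigits_le q hr).trans (Nat.le_add_left ..)) h_right
  calc (stepanovPoly f q e l r s).natDegree
      ≤ l * f.natDegree + (e * f.natDegree + (A + q * (J - 1))) :=
        natDegree_mul_le_of_le natDegree_pow_le h_sum
    _ = (l + e) * f.natDegree + A + q * (J - 1) := by ring

theorem hasseDeriv_stepanovPoly {R : Type*} [CommSemiring R] {p : ℕ} [CharP R p] (hp : p.Prime)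
    {n k e l : ℕ} (hk : k < p ^ n) (hkl : k ≤ l) {f : R[X]} {r s t u : Fin J → R[X]}
    (ht : ∀ j, f ^ (l - k) * t j = hasseDeriv k (r j * f ^ l))
    (hu : ∀ j, f ^ (l + e - k) * u j = hasseDeriv k (s j * f ^ (l + e))) :
    hasseDeriv k (stepanovPoly f (p ^ n) e l r s) = stepanovPoly f (p ^ n) e (l - k) t u := by
  have h_digits (l : ℕ) (r s : Fin J → R[X]) : stepanovPoly f (p ^ n) e l r s =
      ofXPowDigits (p ^ n) (f ^ l • r) + ofXPowDigits (p ^ n) (f ^ (l + e) • s) := by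
    rw [stepanovPoly, map_smul, map_smul, smul_eq_mul, smul_eq_mul, pow_add, mul_add, mul_assoc]
  rw [h_digits, h_digits, map_add, hasseDeriv_ofXPowDigits hp hk, hasseDeriv_ofXPowDigits hp hk,
    ← Nat.sub_add_comm hkl]
  simp only [Pi.smul_apply, smul_eq_mul, mul_comm (f ^ l), mul_comm (f ^ (l + e)), ← ht, ← hu]
  rfl

variable {K : Type*} [Field K] {f : K[X]}

theorem exists_linearMap_pow_mul_eq_hasseDeriv (hf : f ≠ 0) (a k : ℕ) :
    ∃ T : K[X] →ₗ[K] K[X], ∀ h, f ^ (a - k) * T h = hasseDeriv k (h * f ^ a) :=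
  exists_linearMap_mul_eq_of_forall_dvd (pow_ne_zero _ hf)
    (hasseDeriv k ∘ₗ LinearMap.mulRight K (f ^ a)) fun h => pow_sub_dvd_hasseDeriv_mul_pow f h a k

theorem natDegree_lt_of_mem_degreeLT {A : ℕ} (hA : A ≠ 0) {h : K[X]} (hh : h ∈ degreeLT K A) :
    h.natDegree < A := by
  rcases eq_or_ne h 0 with rfl | h0
  · rwa [natDegree_zero, Nat.pos_iff_ne_zero]
  · exact (natDegree_lt_iff_degree_lt h0).2 (mem_degreeLT.1 hh)

theorem exists_digits_forall_ofXPowDigits_one_eq_zero {ι : Type*} [Fintype ι]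
    (T U : ι → K[X] →ₗ[K] K[X]) {A c : ℕ} (hT : ∀ k h, (T k h).natDegree ≤ h.natDegree + c)
    (hU : ∀ k h, (U k h).natDegree ≤ h.natDegree + c)
    (hdim : Fintype.card ι * (A + J + c) < 2 * A * J) :
    ∃ r s : Fin J → K[X], ¬(r = 0 ∧ s = 0) ∧
      (∀ j, (r j).natDegree < A) ∧ (∀ j, (s j).natDegree < A) ∧
      ∀ k, ofXPowDigits 1 (fun j => T k (r j) + U k (s j)) = 0 := by
  have hA : A ≠ 0 := by rintro rfl; simp at hdim
  have hJ : J ≠ 0 := by rintro rfl; simp at hdim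
  let V := (Fin J → degreeLT K A) × (Fin J → degreeLT K A)
  let onDigits (S : K[X] →ₗ[K] K[X]) : (Fin J → degreeLT K A) →ₗ[K] Fin J → K[X] :=
    (S ∘ₗ (degreeLT K A).subtype).compLeft (Fin J)
  let L (k : ι) : V →ₗ[K] K[X] := (ofXPowDigits 1).restrictScalars K ∘ₗ
    (onDigits (T k) ∘ₗ LinearMap.fst K _ _ + onDigits (U k) ∘ₗ LinearMap.snd K _ _)
  have hL (k : ι) (v : V) : (L k v).degree < (A + J + c : ℕ) := by
    have h_lt (h : degreeLT K A) : (h : K[X]).natDegree < A := natDegree_lt_of_mem_degreeLT hA h.2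
    have h_digit (j : Fin J) : (T k (v.1 j) + U k (v.2 j)).natDegree ≤ A - 1 + c :=
      natDegree_add_le_of_degree_le
        ((hT k _).trans (Nat.add_le_add_right (Nat.le_sub_one_of_lt (h_lt _)) c))
        ((hU k _).trans (Nat.add_le_add_right (Nat.le_sub_one_of_lt (h_lt _)) c))
    have h_le : (L k v).natDegree ≤ A - 1 + c + 1 * (J - 1) := natDegree_ofXPowDigits_le 1 h_digit
    exact degree_le_natDegree.trans_lt (by exact_mod_cast (by omega))
  have h_finrank : Module.finrank K V = 2 * A * J := by
    simp only [V, Module.finrank_prod, Module.finrank_pi_fintype, Finset.sum_const,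
      Module.finrank_eq_card_basis (degreeLT.basis K A), Fintype.card_fin, Finset.card_univ,
      smul_eq_mul]
    ring
  obtain ⟨v, hv0, hv⟩ := exists_ne_zero_forall_eq_zero_of_degree_lt L hL (h_finrank ▸ hdim)
  refine ⟨fun j => v.1 j, fun j => v.2 j, fun ⟨hr, hs⟩ => hv0 ?_,
    fun j => natDegree_lt_of_mem_degreeLT hA (v.1 j).2,
    fun j => natDegree_lt_of_mem_degreeLT hA (v.2 j).2, hv⟩
  exact Prod.ext (funext fun j => Subtype.ext (congrFun hr j))
    (funext fun j => Subtype.ext (congrFun hs j))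

theorem exists_digits_hasseDeriv_vanishing (hf : f ≠ 0) (a : K) (e : ℕ) {A l : ℕ}
    (hdim : l * (A + J + l * f.natDegree) < 2 * A * J) :
    ∃ r s : Fin J → K[X], ¬(r = 0 ∧ s = 0) ∧
      (∀ j, (r j).natDegree < A) ∧ (∀ j, (s j).natDegree < A) ∧
      ∀ k < l, ∃ t u : Fin J → K[X],
        (∀ j, f ^ (l - k) * t j = hasseDeriv k (r j * f ^ l)) ∧
        (∀ j, f ^ (l + e - k) * u j = hasseDeriv k (s j * f ^ (l + e))) ∧
        ofXPowDigits 1 (t + C a • u) = 0 := by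
  choose T hT using exists_linearMap_pow_mul_eq_hasseDeriv hf l
  choose U hU using exists_linearMap_pow_mul_eq_hasseDeriv hf (l + e)
  have h_mono (k : Fin l) (d : ℕ) : d + k * f.natDegree ≤ d + l * f.natDegree :=
    Nat.add_le_add_left (Nat.mul_le_mul_right _ k.2.le) d
  have hT_deg (k : Fin l) (h : K[X]) : (T k h).natDegree ≤ h.natDegree + l * f.natDegree :=
    (natDegree_le_of_pow_mul_eq_hasseDeriv hf k.2.le (hT k h)).trans (h_mono k _)
  have hU_deg (k : Fin l) (h : K[X]) : ((a • U k) h).natDegree ≤ h.natDegree + l * f.natDegree :=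
    (natDegree_smul_le a _).trans <|
      (natDegree_le_of_pow_mul_eq_hasseDeriv hf (by omega) (hU k h)).trans (h_mono k _)
  obtain ⟨r, s, h_ne, hr, hs, h_zero⟩ := exists_digits_forall_ofXPowDigits_one_eq_zero
    (fun k : Fin l => T k) (fun k => a • U k) hT_deg hU_deg (by rwa [Fintype.card_fin])
  refine ⟨r, s, h_ne, hr, hs, fun k hk =>
    ⟨fun j => T k (r j), fun j => U k (s j), fun j => hT k _, fun j => hU k _, ?_⟩⟩
  convert h_zero ⟨k, hk⟩ using 2
  funext j
  simp [smul_eq_C_mul]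

theorem eval_stepanovPoly_eq_zero {q e l : ℕ} {x a : K} (hl : l ≠ 0) (hx : x ^ q = x)
    (hfx : f.eval x = 0 ∨ f.eval x ^ e = a) {t u : Fin J → K[X]}
    (h : ofXPowDigits 1 (t + C a • u) = 0) : (stepanovPoly f q e l t u).eval x = 0 := by
  rw [stepanovPoly, eval_mul, eval_pow]
  rcases hfx with hfx | hfx
  · rw [hfx, zero_pow hl, zero_mul]
  · have h_eval := congrArg (eval x) h
    rw [map_add, map_smul, smul_eq_mul, eval_add, eval_mul, eval_C, eval_zero] at h_eval
    rw [eval_add, eval_mul, eval_pow, hfx, eval_ofXPowDigits_of_pow_eq_self hx,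
      eval_ofXPowDigits_of_pow_eq_self hx, h_eval, mul_zero]

variable [Fintype K]

theorem stepanovPoly_ne_zero (hf : Squarefree f) (hf_pos : 0 < f.natDegree) (hf0 : f.eval 0 ≠ 0)
    {e : ℕ} (he : Fintype.card K = 2 * e + 1) (l : ℕ) {r s : Fin J → K[X]}
    (hr : ∀ j, 2 * (r j).natDegree + f.natDegree < Fintype.card K)
    (hs : ∀ j, 2 * (s j).natDegree < Fintype.card K) (h_ne : ¬(r = 0 ∧ s = 0)) :
    stepanovPoly f (Fintype.card K) e l r s ≠ 0 := by
  refine mt (fun h => ?_) h_ne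
  have h_sum := (mul_eq_zero.1 h).resolve_left (pow_ne_zero l hf.ne_zero)
  refine digits_eq_zero_of_sq_mul_eq hf hf_pos hf0 hr hs ?_
  rw [eq_neg_of_add_eq_zero_left h_sum, he]
  ring

theorem mul_card_eval_eq_zero_or_pow_eq_le (hf : Squarefree f) (hf_pos : 0 < f.natDegree)
    (hf0 : f.eval 0 ≠ 0) {e A l : ℕ} (he : Fintype.card K = 2 * e + 1)
    (hA : 2 * A + f.natDegree ≤ Fintype.card K + 1) (hl : l ≤ Fintype.card K)
    (hdim : l * (A + J + l * f.natDegree) < 2 * A * J) (a : K) :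
    l * (Finset.univ.filter fun x : K => f.eval x = 0 ∨ f.eval x ^ e = a).card ≤
      (l + e) * f.natDegree + A + Fintype.card K * (J - 1) := by
  obtain ⟨r, s, h_ne, hr, hs, h_deriv⟩ := exists_digits_hasseDeriv_vanishing hf.ne_zero a e hdim
  have h_poly : stepanovPoly f (Fintype.card K) e l r s ≠ 0 :=
    stepanovPoly_ne_zero hf hf_pos hf0 he l (fun j => by grind) (fun j => by grind) h_ne
  refine (mul_card_le_natDegree_of_X_sub_C_pow_dvd h_poly fun x hx => ?_).trans
    (natDegree_stepanovPoly_le f _ e l (fun j => (hr j).le) (fun j => (hs j).le))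
  obtain ⟨n, hp, h_card⟩ := FiniteField.card K (ringChar K)
  refine X_sub_C_pow_dvd_iff_eval_hasseDeriv.2 fun k hk => ?_
  obtain ⟨t, u, ht, hu, h_zero⟩ := h_deriv k hk
  rw [h_card] at hl ⊢
  rw [hasseDeriv_stepanovPoly hp (hk.trans_le hl) hk.le ht hu]
  exact eval_stepanovPoly_eq_zero (Nat.sub_ne_zero_of_lt hk) (h_card ▸ FiniteField.pow_card x)
    (Finset.mem_filter.1 hx).2 h_zero

end Stepanov

section CharacterSum

theorem stepanov_dimension_lt {Q m u A : ℕ} (hm : 0 < m) (hu : 20 * m ≤ u) (huQ : u * u ≤ Q)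
    (hA : Q ≤ 4 * A) :
    2 * u * (A + (u + 16 * m) + 2 * u * m) < 2 * A * (u + 16 * m) := by
  have h_mA : m * (u * u) ≤ m * (4 * A) := Nat.mul_le_mul_left _ (huQ.trans hA)
  have h_um : u * (20 * m) ≤ u * u := Nat.mul_le_mul_left _ hu
  have h_uu : u * u ≤ m * (u * u) := Nat.le_mul_of_pos_left _ hm
  have h_pos : 0 < u * u := Nat.mul_pos (by omega) (by omega)
  nlinarith

theorem two_mul_le_of_stepanov_degree_bound {Q m u A e N : ℕ} (hm : 0 < m)
    (hQu : Q < (u + 1) * (u + 1)) (hu : 20 * m ≤ u) (hA : 2 * A ≤ Q)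
    (he : 2 * e ≤ Q)
    (hN : 2 * u * N ≤ (2 * u + e) * m + A + Q * (u + 16 * m - 1)) : 2 * N ≤ Q + 20 * m * u := by
  by_contra! h_lt
  have h_uN : u * (Q + 20 * m * u + 1) ≤ u * (2 * N) := Nat.mul_le_mul_left _ h_lt
  have h_em : 2 * e * m ≤ Q * m := Nat.mul_le_mul_right _ he
  have h_mQ : m * Q ≤ m * (u * u + 2 * u) := Nat.mul_le_mul_left _ (by linarith)
  have h_Q : Q ≤ m * Q := Nat.le_mul_of_pos_left _ hm
  have h_muu : m * u * 20 ≤ m * u * u := Nat.mul_le_mul_left _ (by omega)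
  have h_mu : 0 < m * u := Nat.mul_pos hm (by omega)
  have h_J : Q * (u + 16 * m - 1) ≤ Q * (u + 16 * m) := Nat.mul_le_mul_left _ (Nat.sub_le ..)
  nlinarith

variable {K : Type*} [Field K] [Fintype K] {f : K[X]}

theorem two_mul_card_eval_eq_zero_or_pow_eq_le (hK : ringChar K ≠ 2) (hf : Squarefree f)
    (hf_pos : 0 < f.natDegree) (hf0 : f.eval 0 ≠ 0)
    (h_large : 400 * f.natDegree ^ 2 ≤ Fintype.card K) (a : K) :
    2 * (Finset.univ.filter fun x : K =>
        f.eval x = 0 ∨ f.eval x ^ (Fintype.card K / 2) = a).card ≤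
      Fintype.card K + 20 * f.natDegree * (Fintype.card K).sqrt := by
  have h_odd : Fintype.card K % 2 = 1 := FiniteField.odd_card_of_char_ne_two hK
  have hu_sq : (Fintype.card K).sqrt * (Fintype.card K).sqrt ≤ Fintype.card K := Nat.sqrt_le _
  have hu : 20 * f.natDegree ≤ (Fintype.card K).sqrt := Nat.le_sqrt.2 (by linarith)
  have hm : f.natDegree ≤ f.natDegree ^ 2 := Nat.le_self_pow two_ne_zero _
  have hl : 2 * (Fintype.card K).sqrt ≤ Fintype.card K :=
    (Nat.mul_le_mul_right _ (by omega)).trans hu_sq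
  -- Stepanov's method with `A = (q - m) / 2`, `J = √q + 16 m` and `l = 2 √q`.
  exact two_mul_le_of_stepanov_degree_bound hf_pos (Nat.lt_succ_sqrt _) hu
    (A := (Fintype.card K - f.natDegree) / 2) (by omega) (by omega)
    (mul_card_eval_eq_zero_or_pow_eq_le hf hf_pos hf0 (by omega) (by omega) hl
      (stepanov_dimension_lt hf_pos hu hu_sq (by omega)) a)

theorem card_add_mul_sum_quadraticChar_le (hK : ringChar K ≠ 2) (g : K → K) {s : ℤ}
    (hs : s = 1 ∨ s = -1) :
    Fintype.card K + s * ∑ x, quadraticChar K (g x) ≤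
      2 * (Finset.univ.filter fun x : K => g x = 0 ∨ g x ^ (Fintype.card K / 2) = s).card := by
  have h_term (x : K) : 1 + s * quadraticChar K (g x) ≤
      2 * if g x = 0 ∨ g x ^ (Fintype.card K / 2) = s then 1 else 0 := by
    rw [← quadraticChar_eq_pow_of_char_ne_two' hK]
    by_cases hx : g x = 0
    · simp [hx]
    · rcases quadraticChar_dichotomy hx with h | h <;> rcases hs with rfl | rfl <;>
        simp [h] <;> split_ifs <;> norm_num
  calc (Fintype.card K : ℤ) + s * ∑ x, quadraticChar K (g x)
      = ∑ x, (1 + s * quadraticChar K (g x)) := by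
        simp [Finset.sum_add_distrib, Finset.mul_sum]
    _ ≤ ∑ x, 2 * if g x = 0 ∨ g x ^ (Fintype.card K / 2) = s then 1 else 0 :=
        Finset.sum_le_sum fun x _ => h_term x
    _ = _ := by rw [← Finset.mul_sum, Finset.sum_boole]

theorem abs_sum_quadraticChar_eval_le_of_eval_zero_ne_zero (hK : ringChar K ≠ 2)
    (hf : Squarefree f) (hf_pos : 0 < f.natDegree) (hf0 : f.eval 0 ≠ 0)
    (h_large : 400 * f.natDegree ^ 2 ≤ Fintype.card K) :
    |∑ x, quadraticChar K (f.eval x)| ≤ 20 * f.natDegree * (Fintype.card K).sqrt := by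
  have h_count (s : ℤ) (hs : s = 1 ∨ s = -1) :
      s * ∑ x, quadraticChar K (f.eval x) ≤ 20 * f.natDegree * (Fintype.card K).sqrt := by
    have h_upper := two_mul_card_eval_eq_zero_or_pow_eq_le hK hf hf_pos hf0 h_large (s : K)
    have h_lower := card_add_mul_sum_quadraticChar_le hK (fun x => f.eval x) hs
    zify at h_upper
    linarith
  have h_pos := h_count 1 (Or.inl rfl)
  have h_neg := h_count (-1) (Or.inr rfl)
  exact abs_le.2 ⟨by linarith, by linarith⟩

theorem abs_quadraticChar_le_one (x : K) : |quadraticChar K x| ≤ 1 := by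
  rcases quadraticChar_isQuadratic K x with h | h | h <;> simp [h]

theorem abs_sum_quadraticChar_le_card {ι : Type*} (s : Finset ι) (g : ι → K) :
    |∑ i ∈ s, quadraticChar K (g i)| ≤ s.card :=
  calc |∑ i ∈ s, quadraticChar K (g i)| ≤ ∑ i ∈ s, |quadraticChar K (g i)| :=
        Finset.abs_sum_le_sum_abs _ _
    _ ≤ s.card • 1 := Finset.sum_le_card_nsmul _ _ 1 fun i _ => abs_quadraticChar_le_one (g i)
    _ = s.card := nsmul_one _

theorem sum_quadraticChar_eval_taylor (f : K[X]) (c : K) :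
    ∑ x, quadraticChar K ((taylor c f).eval x) = ∑ x, quadraticChar K (f.eval x) := by
  simp only [taylor_eval]
  exact Equiv.sum_comp (Equiv.addRight c) fun x => quadraticChar K (f.eval x)

theorem abs_sum_quadraticChar_eval_le_of_large_card (hK : ringChar K ≠ 2) (hf : Squarefree f)
    (hf_pos : 0 < f.natDegree) (h_large : 400 * f.natDegree ^ 2 ≤ Fintype.card K) :
    |∑ x, quadraticChar K (f.eval x)| ≤ 20 * f.natDegree * (Fintype.card K).sqrt := by
  obtain ⟨c, hc⟩ : ∃ c, f.eval c ≠ 0 := by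
    by_contra! h_all
    exact hf.ne_zero <| eq_zero_of_natDegree_lt_card_of_eval_eq_zero f Function.injective_id h_all
      (by nlinarith)
  simpa only [sum_quadraticChar_eval_taylor, natDegree_taylor] using
    abs_sum_quadraticChar_eval_le_of_eval_zero_ne_zero (f := taylor c f) hK
      (squarefree_mulEquiv_apply (taylorEquiv c).toMulEquiv hf) (by rwa [natDegree_taylor])
      (by rwa [taylor_eval, zero_add]) (by rwa [natDegree_taylor])

theorem abs_sum_quadraticChar_eval_le (hK : ringChar K ≠ 2) (hf : Squarefree f)
    (hf_pos : 0 < f.natDegree) :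
    |((∑ x, quadraticChar K (f.eval x) : ℤ) : ℝ)| ≤
      20 * f.natDegree * √(Fintype.card K) := by
  rw [← Int.cast_abs]
  rcases le_or_gt (400 * f.natDegree ^ 2) (Fintype.card K) with h_large | h_small
  · calc ((|∑ x, quadraticChar K (f.eval x)| : ℤ) : ℝ)
        ≤ 20 * f.natDegree * (Fintype.card K).sqrt := by
          exact_mod_cast abs_sum_quadraticChar_eval_le_of_large_card hK hf hf_pos h_large
      _ ≤ 20 * f.natDegree * √(Fintype.card K) := by
          gcongr
          exact Real.nat_sqrt_le_real_sqrt
  · have h_sqrt : √(Fintype.card K : ℝ) ≤ 20 * f.natDegree := by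
      rw [Real.sqrt_le_left (by positivity), mul_pow]
      exact_mod_cast h_small.le
    calc ((|∑ x, quadraticChar K (f.eval x)| : ℤ) : ℝ)
        ≤ Fintype.card K := by
          exact_mod_cast abs_sum_quadraticChar_le_card Finset.univ fun x => f.eval x
      _ = √(Fintype.card K) * √(Fintype.card K) := (Real.mul_self_sqrt (by positivity)).symm
      _ ≤ 20 * f.natDegree * √(Fintype.card K) := by gcongr

end CharacterSum

section Reciprocity

theorem adjoin_eq_top_of_natDegree_minpoly_eq_finrank {F K : Type*} [Field F] [Field K]
    [Algebra F K] [FiniteDimensional F K] {x : K}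
    (hx : (minpoly F x).natDegree = Module.finrank F K) : Algebra.adjoin F {x} = ⊤ := by
  rw [← IntermediateField.adjoin_simple_toSubalgebra_of_isAlgebraic (IsAlgebraic.of_finite F x),
    (Field.primitive_element_iff_minpoly_natDegree_eq F x).2 hx, IntermediateField.top_toSubalgebra]

theorem chiP_minpoly_eq_quadraticChar_aeval {F K : Type*} [Field F] [Field K] [Fintype K]
    [Algebra F K] {x : K} (hx : Algebra.adjoin F {x} = ⊤) (G : F[X]) :
    chiP (minpoly F x) G = quadraticChar K (aeval x G) := by
  have h_surj (y : K) : ∃ H : F[X], aeval x H = y := by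
    have hy : y ∈ Algebra.adjoin F {x} := hx ▸ Algebra.mem_top
    rwa [Algebra.adjoin_singleton_eq_range_aeval] at hy
  have h_square : (∃ H, minpoly F x ∣ G - H ^ 2) ↔ IsSquare (aeval x G) := by
    simp only [minpoly.dvd_iff, map_sub, map_pow, sub_eq_zero, isSquare_iff_exists_sq]
    exact (Function.Surjective.exists (p := fun y => aeval x G = y ^ 2) h_surj).symm
  rw [chiP, minpoly.dvd_iff, quadraticChar_apply, quadraticCharFun]
  simp only [h_square]

theorem quadraticChar_eq_quadraticChar_norm {F K : Type*} [Field F] [Fintype F] [Field K]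
    [Fintype K] [Algebra F K] (hF : ringChar F ≠ 2) (y : K) :
    quadraticChar K y = quadraticChar F (Algebra.norm F y) := by
  have hK : ringChar K ≠ 2 := Algebra.ringChar_eq F K ▸ hF
  have h_dvd : Fintype.card F - 1 ∣ Fintype.card K - 1 := by
    rw [Module.card_eq_pow_finrank (K := F) (V := K)]
    simpa only [one_pow] using Nat.sub_dvd_pow_sub_pow (Fintype.card F) 1 (Module.finrank F K)
  have h_exponent : (Fintype.card K - 1) / (Fintype.card F - 1) * (Fintype.card F / 2) =
      Fintype.card K / 2 := by
    have hF_odd := FiniteField.odd_card_of_char_ne_two hF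
    have hK_odd := FiniteField.odd_card_of_char_ne_two hK
    have h_mul := Nat.div_mul_cancel h_dvd
    generalize (Fintype.card K - 1) / (Fintype.card F - 1) = t at *
    rw [show Fintype.card F - 1 = 2 * (Fintype.card F / 2) by omega, mul_left_comm] at h_mul
    omega
  refine (quadraticChar_isQuadratic K).eq_of_eq_coe (quadraticChar_isQuadratic F) hK ?_
  have h_euler := congrArg (algebraMap F K) <|
    quadraticChar_eq_pow_of_char_ne_two' hF (Algebra.norm F y)
  rw [map_intCast, map_pow, FiniteField.algebraMap_norm_eq_pow, Nat.card_eq_fintype_card,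
    Nat.card_eq_fintype_card, ← pow_mul, h_exponent] at h_euler
  rw [h_euler, quadraticChar_eq_pow_of_char_ne_two' hK]

theorem algebraMap_resultant_eq_prod_aroots {F E : Type*} [Field F] [Field E] [Algebra F E]
    {P : F[X]} (hP : P.Monic) (h_splits : (P.map (algebraMap F E)).Splits) (G : F[X]) :
    algebraMap F E (resultant P G) = ((P.aroots E).map fun y => aeval y G).prod := by
  have h_prod := resultant_eq_prod_eval (P.map (algebraMap F E)) (G.map (algebraMap F E))
    G.natDegree natDegree_map_le h_splits
  rw [natDegree_map, resultant_map_map, (hP.map _).leadingCoeff, one_pow, one_mul] at h_prod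
  simpa only [eval_map_algebraMap] using h_prod

theorem norm_aeval_eq_resultant_minpoly {F K : Type*} [Field F] [Field K] [Algebra F K]
    [FiniteDimensional F K] [Algebra.IsSeparable F K] {x : K} (hx : Algebra.adjoin F {x} = ⊤)
    (G : F[X]) : Algebra.norm F (aeval x G) = resultant (minpoly F x) G := by
  have h_int : IsIntegral F x := Algebra.IsIntegral.isIntegral x
  let E := AlgebraicClosure K
  let pb := PowerBasis.ofAdjoinEqTop h_int hx
  have h_nodup : ((minpoly F x).aroots E).Nodup :=
    nodup_roots (Separable.map (Algebra.IsSeparable.isSeparable F x))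
  apply (algebraMap F E).injective
  rw [Algebra.norm_eq_prod_embeddings F E,
    algebraMap_resultant_eq_prod_aroots (minpoly.monic h_int) (IsAlgClosed.splits _)]
  calc ∏ σ : K →ₐ[F] E, σ (aeval x G)
      = ∏ y : {y // y ∈ (minpoly F pb.gen).aroots E}, aeval (y : E) G :=
        Fintype.prod_equiv pb.liftEquiv' _ _ fun σ => by
          rw [PowerBasis.liftEquiv'_apply_coe, aeval_algHom_apply]
          rfl
    _ = ∏ y ∈ ((minpoly F x).aroots E).toFinset, aeval y G :=
        Finset.prod_mem_multiset _ _ (fun y => aeval y G) fun _ => rfl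
    _ = (((minpoly F x).aroots E).map fun y => aeval y G).prod := by
        rw [Finset.prod_eq_multiset_prod, Multiset.toFinset_val, h_nodup.dedup]

variable {F : Type*} [Field F]

theorem exists_finset_monic_irreducible_factors_of_squarefree {D : F[X]} (hD : D.Monic)
    (h_sq : Squarefree D) :
    ∃ S : Finset F[X], ↑S = {P : F[X] | P.Monic ∧ Irreducible P ∧ P ∣ D} ∧ ∏ P ∈ S, P = D := by
  refine ⟨(UniqueFactorizationMonoid.normalizedFactors D).toFinset, ?_, ?_⟩
  · ext P
    simp only [Finset.mem_coe, Multiset.mem_toFinset, Set.mem_ofPred_eq,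
      UniqueFactorizationMonoid.mem_normalizedFactors_iff' hD.ne_zero]
    exact ⟨fun ⟨h_irr, h_norm, h_dvd⟩ => ⟨h_norm ▸ monic_normalize h_irr.ne_zero, h_irr, h_dvd⟩,
      fun ⟨h_monic, h_irr, h_dvd⟩ => ⟨h_irr, h_monic.normalize_eq_self, h_dvd⟩⟩
  · have h_nodup :=
      (UniqueFactorizationMonoid.squarefree_iff_nodup_normalizedFactors hD.ne_zero).1 h_sq
    rw [Finset.prod_eq_multiset_prod, Multiset.toFinset_val, h_nodup.dedup, Multiset.map_id',
      UniqueFactorizationMonoid.prod_normalizedFactors_eq hD.ne_zero, hD.normalize_eq_self]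

variable [Fintype F]

theorem chiP_eq_quadraticChar_resultant (hF : ringChar F ≠ 2) {P : F[X]} (hP : P.Monic)
    (hP_irr : Irreducible P) (G : F[X]) : chiP P G = quadraticChar F (resultant P G) := by
  have : Fact (Irreducible P) := ⟨hP_irr⟩
  have : Module.Finite F (AdjoinRoot P) := hP.finite_adjoinRoot
  have : Finite (AdjoinRoot P) := Module.finite_of_finite F
  have := Fintype.ofFinite (AdjoinRoot P)
  have h_minpoly : minpoly F (AdjoinRoot.root P) = P := by
    rw [AdjoinRoot.minpoly_root hP_irr.ne_zero, hP.leadingCoeff, inv_one, C_1, mul_one]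
  have h_top : Algebra.adjoin F {AdjoinRoot.root P} = ⊤ := AdjoinRoot.adjoinRoot_eq_top
  have h_chiP := chiP_minpoly_eq_quadraticChar_aeval h_top G
  have h_norm := norm_aeval_eq_resultant_minpoly h_top G
  rw [h_minpoly] at h_chiP h_norm
  rw [h_chiP, quadraticChar_eq_quadraticChar_norm hF, h_norm]

theorem chiD_eq_quadraticChar_resultant (hF : ringChar F ≠ 2) {D : F[X]} (hD : D.Monic)
    (h_sq : Squarefree D) (G : F[X]) : chiD D G = quadraticChar F (resultant D G) := by
  obtain ⟨S, hS, h_prod⟩ := exists_finset_monic_irreducible_factors_of_squarefree hD h_sq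
  have h_mem {P : F[X]} (hP : P ∈ S) : P.Monic ∧ Irreducible P ∧ P ∣ D := by
    rwa [← Finset.mem_coe, hS] at hP
  have h_lead : ∏ P ∈ S, P.leadingCoeff ≠ 0 := Finset.prod_ne_zero_iff.2 fun P hP =>
    (h_mem hP).1.leadingCoeff ▸ one_ne_zero
  have h_res := resultant_prod_left S (fun P => P) G G.natDegree h_lead le_rfl
  rw [h_prod] at h_res
  rw [chiD, ← hS, finprod_mem_coe_finset, h_res, map_prod]
  exact Finset.prod_congr rfl fun P hP =>
    chiP_eq_quadraticChar_resultant hF (h_mem hP).1 (h_mem hP).2.1 G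

theorem chiD_eq_mul_chiP (hF : ringChar F ≠ 2) {D P : F[X]} (hD : D.Monic) (h_sq : Squarefree D)
    (hP : P.Monic) (hP_irr : Irreducible P) :
    chiD D P = quadraticChar F ((-1) ^ (D.natDegree * P.natDegree)) * chiP P D := by
  rw [chiD_eq_quadraticChar_resultant hF hD h_sq, chiP_eq_quadraticChar_resultant hF hP hP_irr,
    resultant_comm, map_mul]

end Reciprocity

section Minpoly

variable {F K : Type*} [Field F] [Field K] [Algebra F K]

theorem minpoly_eq_iff_aeval_eq_zero {P : F[X]} (hP : P.Monic) (hP_irr : Irreducible P) {x : K} :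
    minpoly F x = P ↔ aeval x P = 0 :=
  ⟨fun h => h ▸ minpoly.aeval F x,
    fun h => (minpoly.eq_of_irreducible_of_monic hP_irr h hP).symm⟩

theorem natDegree_minpoly_le_half_finrank [FiniteDimensional F K] {x : K}
    (hx : (minpoly F x).natDegree ≠ Module.finrank F K) :
    (minpoly F x).natDegree ≤ Module.finrank F K / 2 := by
  obtain ⟨c, hc⟩ := minpoly.degree_dvd (Algebra.IsIntegral.isIntegral (R := F) x)
  have h_pos : 0 < Module.finrank F K := Module.finrank_pos
  have hc2 : 2 ≤ c := (Nat.two_le_iff c).2 ⟨by grind, by grind⟩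
  rw [Nat.le_div_iff_mul_le two_pos, hc]
  exact Nat.mul_le_mul_left _ hc2

variable [Finite F]

theorem exists_minpoly_eq_of_natDegree_dvd_finrank [Finite K] {P : F[X]} (hP : P.Monic)
    (hP_irr : Irreducible P) (h_dvd : P.natDegree ∣ Module.finrank F K) :
    ∃ x : K, minpoly F x = P := by
  have := Fintype.ofFinite K
  have h_card : Fintype.card K = Nat.card F ^ Module.finrank F K := by
    rw [← Nat.card_eq_fintype_card, Module.natCard_eq_pow_finrank (K := F)]
  have h_split : ((X ^ Fintype.card K - X : F[X]).map (algebraMap F K)).Splits :=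
    (FiniteField.isSplittingField_sub K F).splits
  have h_ne : (X ^ Fintype.card K - X : F[X]) ≠ 0 :=
    FiniteField.X_pow_card_sub_X_ne_zero F Fintype.one_lt_card
  have hP_dvd : P ∣ X ^ Fintype.card K - X :=
    h_card ▸ hP_irr.natDegree_dvd_iff_dvd_X_pow_card_pow_sub_X.1 h_dvd
  have hP_split : (P.map (algebraMap F K)).Splits :=
    h_split.of_dvd (Polynomial.map_ne_zero h_ne) (Polynomial.map_dvd _ hP_dvd)
  obtain ⟨x, hx⟩ := hP_split.exists_eval_eq_zero (by rw [degree_map]; exact hP_irr.degree_pos.ne')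
  exact ⟨x, (minpoly_eq_iff_aeval_eq_zero hP hP_irr).2 (by rwa [eval_map_algebraMap] at hx)⟩

variable [Fintype K]

theorem card_filter_minpoly_eq_natDegree (x : K) :
    (Finset.univ.filter fun y : K => minpoly F y = minpoly F x).card =
      (minpoly F x).natDegree := by
  have h_int : IsIntegral F x := Algebra.IsIntegral.isIntegral x
  rw [← card_rootSet_eq_natDegree (K := K) (Algebra.IsSeparable.isSeparable F x)
    (Normal.splits inferInstance x), ← Set.toFinset_card]
  congr 1
  ext y
  rw [Finset.mem_filter, Set.mem_toFinset, mem_rootSet_of_ne (minpoly.ne_zero h_int),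
    minpoly_eq_iff_aeval_eq_zero (minpoly.monic h_int) (minpoly.irreducible h_int),
    and_iff_right (Finset.mem_univ y)]

theorem coe_image_minpoly_filter_natDegree_eq {d : ℕ} (hd : d ∣ Module.finrank F K) :
    ((Finset.univ.filter fun x : K => (minpoly F x).natDegree = d).image (minpoly F) : Set F[X]) =
      {P : F[X] | P.Monic ∧ Irreducible P ∧ P.natDegree = d} := by
  ext P
  simp only [Finset.coe_image, Finset.coe_filter, Finset.mem_univ, true_and, Set.mem_image,
    Set.mem_ofPred_eq]
  constructor
  · rintro ⟨x, hx, rfl⟩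
    have h_int : IsIntegral F x := Algebra.IsIntegral.isIntegral x
    exact ⟨minpoly.monic h_int, minpoly.irreducible h_int, hx⟩
  · rintro ⟨h_monic, h_irr, rfl⟩
    obtain ⟨x, hx⟩ := exists_minpoly_eq_of_natDegree_dvd_finrank h_monic h_irr hd
    exact ⟨x, by rw [hx], hx⟩

theorem sum_minpoly_eq_nsmul_finsum {M : Type*} [AddCommMonoid M] {d : ℕ}
    (hd : d ∣ Module.finrank F K) (g : F[X] → M) :
    ∑ x : K with (minpoly F x).natDegree = d, g (minpoly F x) =
      d • ∑ᶠ P ∈ {P : F[X] | P.Monic ∧ Irreducible P ∧ P.natDegree = d}, g P := by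
  rw [← coe_image_minpoly_filter_natDegree_eq hd, finsum_mem_coe_finset, Finset.smul_sum,
    Finset.sum_comp g (minpoly F)]
  refine Finset.sum_congr rfl fun P hP => ?_
  obtain ⟨x, hx, rfl⟩ := Finset.mem_image.1 hP
  have hxd : (minpoly F x).natDegree = d := (Finset.mem_filter.1 hx).2
  have h_fiber : (Finset.univ.filter fun y : K =>
      (minpoly F y).natDegree = d ∧ minpoly F y = minpoly F x) =
      Finset.univ.filter fun y : K => minpoly F y = minpoly F x :=
    Finset.filter_congr fun y _ => and_iff_right_of_imp fun h => by rw [h, hxd]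
  rw [Finset.filter_filter, h_fiber, card_filter_minpoly_eq_natDegree, hxd]

theorem card_filter_natDegree_minpoly_eq_le (d : ℕ) :
    (Finset.univ.filter fun x : K => (minpoly F x).natDegree = d).card ≤ Nat.card F ^ d := by
  rcases eq_or_ne d 0 with rfl | hd
  · simp [(minpoly.natDegree_pos (Algebra.IsIntegral.isIntegral (R := F) _)).ne']
  have h_card : 1 < Nat.card F := Finite.one_lt_card
  rw [← FiniteField.X_pow_card_pow_sub_X_natDegree_eq K hd h_card]
  refine card_le_degree_of_subset_roots fun x hx => ?_
  have hxd : (minpoly F x).natDegree = d := (Finset.mem_filter.1 hx).2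
  have h_irr : Irreducible (minpoly F x) := minpoly.irreducible (Algebra.IsIntegral.isIntegral x)
  have h_dvd := h_irr.natDegree_dvd_iff_dvd_X_pow_card_pow_sub_X.1 hxd.dvd
  rw [mem_roots (FiniteField.X_pow_card_pow_sub_X_ne_zero K hd h_card), IsRoot.def]
  simpa [minpoly.dvd_iff] using h_dvd

theorem card_filter_natDegree_minpoly_ne_finrank_le :
    (Finset.univ.filter fun x : K => (minpoly F x).natDegree ≠ Module.finrank F K).card ≤
      2 * Nat.card F ^ (Module.finrank F K / 2) := by
  set t := Module.finrank F K / 2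
  have h_subset : (Finset.univ.filter fun x : K => (minpoly F x).natDegree ≠ Module.finrank F K) ⊆
      (Finset.range (t + 1)).biUnion fun d =>
        Finset.univ.filter fun x : K => (minpoly F x).natDegree = d := fun x hx => by
    simpa [Nat.lt_succ_iff] using natDegree_minpoly_le_half_finrank (Finset.mem_filter.1 hx).2
  calc (Finset.univ.filter fun x : K => (minpoly F x).natDegree ≠ Module.finrank F K).card
      ≤ ∑ d ∈ Finset.range (t + 1), Nat.card F ^ d :=
        (Finset.card_le_card h_subset).trans <| Finset.card_biUnion_le.trans <|
          Finset.sum_le_sum fun d _ => card_filter_natDegree_minpoly_eq_le d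
    _ = ∑ d ∈ Finset.range t, Nat.card F ^ d + Nat.card F ^ t := Finset.sum_range_succ _ _
    _ ≤ Nat.card F ^ t + Nat.card F ^ t :=
        Nat.add_le_add_right (Nat.geomSum_lt Finite.one_lt_card fun _ => Finset.mem_range.1).le _
    _ = 2 * Nat.card F ^ t := (two_mul _).symm

end Minpoly

section PrimeSum

theorem natCast_pow_half_le_rpow {q : ℕ} (hq : 0 < q) (n : ℕ) :
    ((q ^ (n / 2) : ℕ) : ℝ) ≤ (q : ℝ) ^ ((n : ℝ) / 2) := by
  rw [Nat.cast_pow, ← Real.rpow_natCast]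
  exact Real.rpow_le_rpow_of_exponent_le (by exact_mod_cast hq) Nat.cast_div_le

variable {F K : Type*} [Field F] [Field K] [Fintype K] [Algebra F K]

theorem sqrt_card_eq_rpow_finrank :
    √(Fintype.card K : ℝ) = (Nat.card F : ℝ) ^ ((Module.finrank F K : ℝ) / 2) := by
  rw [← Nat.card_eq_fintype_card, Module.natCard_eq_pow_finrank (K := F), Nat.cast_pow,
    Real.sqrt_eq_rpow, ← Real.rpow_natCast, ← Real.rpow_mul (Nat.cast_nonneg _), mul_one_div]

variable [Finite F] {D : F[X]}

theorem abs_finsum_chiD_eq_abs_finsum_chiP (hF : ringChar F ≠ 2) (hD : D.Monic)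
    (h_sq : Squarefree D) (n : ℕ) :
    |∑ᶠ P ∈ {P : F[X] | P.Monic ∧ Irreducible P ∧ P.natDegree = n}, chiD D P| =
      |∑ᶠ P ∈ {P : F[X] | P.Monic ∧ Irreducible P ∧ P.natDegree = n}, chiP P D| := by
  have := Fintype.ofFinite F
  set ε := quadraticChar F ((-1) ^ (D.natDegree * n))
  have hε : |ε| = 1 := by
    rcases quadraticChar_dichotomy (F := F) (a := (-1) ^ (D.natDegree * n))
      (pow_ne_zero _ (neg_ne_zero.2 one_ne_zero)) with h | h <;> simp [ε, h]
  have h_recip : ∀ P ∈ {P : F[X] | P.Monic ∧ Irreducible P ∧ P.natDegree = n},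
      chiD D P = ε • chiP P D := by
    rintro P ⟨hP, hP_irr, rfl⟩
    exact chiD_eq_mul_chiP hF hD h_sq hP hP_irr
  rw [finsum_mem_congr rfl h_recip, ← one_mul |∑ᶠ P ∈ _, chiP P D|, ← hε, ← abs_mul, ← smul_eq_mul]
  simp only [smul_finsum]

theorem finrank_mul_finsum_chiP (D : F[X]) :
    (Module.finrank F K : ℤ) *
        ∑ᶠ P ∈ {P : F[X] | P.Monic ∧ Irreducible P ∧ P.natDegree = Module.finrank F K}, chiP P D =
      ∑ x : K with (minpoly F x).natDegree = Module.finrank F K, quadraticChar K (aeval x D) := by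
  rw [← nsmul_eq_mul, ← sum_minpoly_eq_nsmul_finsum dvd_rfl fun P => chiP P D]
  exact Finset.sum_congr rfl fun x hx => chiP_minpoly_eq_quadraticChar_aeval
    (adjoin_eq_top_of_natDegree_minpoly_eq_finrank (Finset.mem_filter.1 hx).2) D

theorem abs_sum_quadraticChar_aeval_le (hF : ringChar F ≠ 2) (h_sq : Squarefree D)
    (hD_pos : 0 < D.natDegree) :
    |((∑ x : K, quadraticChar K (aeval x D) : ℤ) : ℝ)| ≤ 20 * D.natDegree * √(Fintype.card K) := by
  have h_sq_map : Squarefree (D.map (algebraMap F K)) :=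
    (PerfectField.separable_iff_squarefree.2 h_sq).map.squarefree
  simpa only [natDegree_map, eval_map_algebraMap] using
    abs_sum_quadraticChar_eval_le (Algebra.ringChar_eq F K ▸ hF) h_sq_map (by rwa [natDegree_map])

theorem abs_sum_quadraticChar_aeval_natDegree_ne_finrank_le (D : F[X]) :
    |((∑ x : K with (minpoly F x).natDegree ≠ Module.finrank F K,
        quadraticChar K (aeval x D) : ℤ) : ℝ)| ≤ 2 * √(Fintype.card K) := by
  have h_card := (abs_sum_quadraticChar_le_card _ fun x : K => aeval x D).trans
    (Int.ofNat_le.2 (card_filter_natDegree_minpoly_ne_finrank_le (F := F)))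
  calc _ ≤ ((2 * Nat.card F ^ (Module.finrank F K / 2) : ℕ) : ℝ) := by exact_mod_cast h_card
    _ ≤ 2 * √(Fintype.card K) := by
      rw [Nat.cast_mul, Nat.cast_two, sqrt_card_eq_rpow_finrank (F := F)]
      exact mul_le_mul_of_nonneg_left (natCast_pow_half_le_rpow Nat.card_pos _) two_pos.le

theorem finrank_mul_abs_finsum_chiD_le (hF : ringChar F ≠ 2) (hD : D.Monic) (h_sq : Squarefree D)
    (hD_pos : 0 < D.natDegree) :
    Module.finrank F K * |((∑ᶠ P ∈ {P : F[X] | P.Monic ∧ Irreducible P ∧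
        P.natDegree = Module.finrank F K}, chiD D P : ℤ) : ℝ)| ≤
      22 * D.natDegree * √(Fintype.card K) := by
  set full : ℤ := ∑ x : K with (minpoly F x).natDegree = Module.finrank F K,
    quadraticChar K (aeval x D)
  set rest : ℤ := ∑ x : K with (minpoly F x).natDegree ≠ Module.finrank F K,
    quadraticChar K (aeval x D)
  have h_split : full + rest = ∑ x : K, quadraticChar K (aeval x D) :=
    Finset.sum_filter_add_sum_filter_not _ _ _
  have h_deg : (1 : ℝ) ≤ D.natDegree := by exact_mod_cast hD_pos
  calc _ = |(full : ℝ)| := by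
        rw [← Int.cast_abs, abs_finsum_chiD_eq_abs_finsum_chiP hF hD h_sq, ← Int.cast_natCast,
          ← Int.cast_mul, ← Nat.abs_cast, ← abs_mul, finrank_mul_finsum_chiP, Int.cast_abs]
    _ = |((full + rest : ℤ) : ℝ) - rest| := by rw [Int.cast_add, add_sub_cancel_right]
    _ ≤ |((full + rest : ℤ) : ℝ)| + |(rest : ℝ)| := abs_sub _ _
    _ ≤ 20 * D.natDegree * √(Fintype.card K) + 2 * √(Fintype.card K) := by
        rw [h_split]
        exact add_le_add (abs_sum_quadraticChar_aeval_le hF h_sq hD_pos)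
          (abs_sum_quadraticChar_aeval_natDegree_ne_finrank_le D)
    _ ≤ 22 * D.natDegree * √(Fintype.card K) := by nlinarith [Real.sqrt_nonneg (Fintype.card K)]

end PrimeSum

theorem stmt16_general {F : Type*} [Field F] [Fintype F] (hF : ringChar F ≠ 2) {D : F[X]}
    (hD : D.Monic) (h_sq : Squarefree D) (hD_pos : 1 ≤ D.natDegree) {n : ℕ} (hn : 1 ≤ n) :
    |((∑ᶠ P ∈ {P : F[X] | P.Monic ∧ Irreducible P ∧ P.natDegree = n}, chiD D P : ℤ) : ℝ)| ≤
      22 * D.natDegree * (Fintype.card F : ℝ) ^ ((n : ℝ) / 2) / n := by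
  have : NeZero n := ⟨by omega⟩
  have : Fact (ringChar F).Prime := ⟨CharP.char_is_prime F (ringChar F)⟩
  let K := FiniteField.Extension F (ringChar F) n
  have : Finite K := Module.finite_of_finite F
  have := Fintype.ofFinite K
  have h_finrank : Module.finrank F K = n := FiniteField.finrank_extension F (ringChar F) n
  have h_bound := finrank_mul_abs_finsum_chiD_le (K := K) hF hD h_sq hD_pos
  rw [sqrt_card_eq_rpow_finrank (F := F), h_finrank, Nat.card_eq_fintype_card] at h_bound
  rwa [le_div_iff₀' (by exact_mod_cast hn)]

/-- there is a constant `C` depending only on `q` such that for every monic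
square-free `D` with `deg D ≥ 1` and every `n ≥ 1`,
`|Σ_{P monic irreducible, deg P = n} χ_D(P)| ≤ C·deg(D)·q^{n/2}/n`. -/
theorem stmt16 (q : ℕ) (hq_odd : Odd q) (hq_pp : IsPrimePow q)
    (Fq : Type) [Field Fq] [Fintype Fq] (hFq : Fintype.card Fq = q) :
    ∃ C : ℝ, ∀ D : Fq[X], D.Monic → Squarefree D → 1 ≤ D.natDegree →
      ∀ n : ℕ, 1 ≤ n →
        |((∑ᶠ P ∈ {P : Fq[X] | P.Monic ∧ Irreducible P ∧ P.natDegree = n}, chiD D P : ℤ) : ℝ)| ≤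
          C * (D.natDegree : ℝ) * (q : ℝ) ^ ((n : ℝ) / 2) / (n : ℝ) := by
  have hF : ringChar Fq ≠ 2 := fun h =>
    Nat.not_even_iff_odd.2 hq_odd (hFq ▸ Nat.even_iff.2 (FiniteField.even_card_of_char_two h))
  exact ⟨22, fun D hD h_sq hD_pos n hn => hFq ▸ stmt16_general hF hD h_sq hD_pos hn⟩
end
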